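/- arXiv:2208.05467 — 3 statements merged into one kernel-verified Lean document; each statement's English description precedes it below -/
import Mathlib

section
/- Let m > n ≥ 3, π := π_{n,m}, and let S_m = {x ∈ ℝᵐ : x ≥ 0, Σᵢ xᵢ ≤ 1} be the standard simplex. Then P_n := π(S_m) is a full-dimensional polytope in ℝⁿ with exactly n+2 facets and exactly n+2 vertices, and for every irredundant description of P_n: C(P_n) ⊄ π(C(S_m)), and C(P_n) ∩ π(C(S_m)) equals exactly the set of edge directions of P_n. -/
open Matrix

noncomputable section

/-- The polyhedron `{x : Ax = b, Bx ≤ d}`. -/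
def polySet {p q n : Type*} [Fintype n] (A : Matrix p n ℝ) (b : p → ℝ)
    (B : Matrix q n ℝ) (d : q → ℝ) : Set (n → ℝ) :=
  {x | A.mulVec x = b ∧ B.mulVec x ≤ d}

/-- The circuits of the linear description `Ax = b, Bx ≤ d`: nonzero kernel elements `g` of `A`
whose support of `Bg` is inclusion-minimal among nonzero kernel elements. -/
def circuits {p q n : Type*} [Fintype n] (A : Matrix p n ℝ) (B : Matrix q n ℝ) :
    Set (n → ℝ) :=
  {g | A.mulVec g = 0 ∧ g ≠ 0 ∧
    ∀ y : n → ℝ, A.mulVec y = 0 → y ≠ 0 →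
      {i | B.mulVec y i ≠ 0} ⊆ {i | B.mulVec g i ≠ 0} →
      {i | B.mulVec g i ≠ 0} ⊆ {i | B.mulVec y i ≠ 0}}

/-- A face of a polyhedron `P`: either `P` itself or the set of maximizers of a linear
functional over `P` whose supremum is finite and attained. -/
def IsFace {n : Type*} [Fintype n] (P F : Set (n → ℝ)) : Prop :=
  F = P ∨ ∃ (c : n → ℝ) (s : ℝ),
    (∀ y ∈ P, c ⬝ᵥ y ≤ s) ∧ (∃ y ∈ P, c ⬝ᵥ y = s) ∧ F = {x ∈ P | c ⬝ᵥ x = s}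

/-- The dimension of the affine span of a set. -/
def spanDim {n : Type*} [Fintype n] (S : Set (n → ℝ)) : ℕ :=
  Module.finrank ℝ (affineSpan ℝ S).direction

def IsVertex {n : Type*} [Fintype n] (P : Set (n → ℝ)) (v : n → ℝ) : Prop :=
  IsFace P {v}

def IsEdge {n : Type*} [Fintype n] (P F : Set (n → ℝ)) : Prop :=
  IsFace P F ∧ spanDim F = 1

/-- A nonzero vector lying in the direction space of the affine span of some edge of `P`. -/
def IsEdgeDirection {n : Type*} [Fintype n] (P : Set (n → ℝ)) (g : n → ℝ) : Prop :=
  g ≠ 0 ∧ ∃ F, IsEdge P F ∧ g ∈ (affineSpan ℝ F).direction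

/-- A facet: a face whose affine span has dimension `dim P - 1`. -/
def IsFacet {n : Type*} [Fintype n] (P F : Set (n → ℝ)) : Prop :=
  IsFace P F ∧ spanDim F + 1 = spanDim P

/-- A pointed set: contains no affine line. -/
def PointedSet {n : Type*} [Fintype n] (P : Set (n → ℝ)) : Prop :=
  ∀ x v : n → ℝ, (∀ t : ℝ, x + t • v ∈ P) → v = 0

/-- `Ax = b, Bx ≤ d` is an irredundant description of `P`. -/
def Irredundant {p q n : Type*} [Fintype n] (A : Matrix p n ℝ) (b : p → ℝ)
    (B : Matrix q n ℝ) (d : q → ℝ) (P : Set (n → ℝ)) : Prop :=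
  P = polySet A b B d ∧
  {x | A.mulVec x = b} = (affineSpan ℝ P : Set (n → ℝ)) ∧
  ∀ i, IsFacet P {x ∈ P | B.mulVec x i = d i}

/-- A basic solution of the system `Ax = b, Bx ≤ d`: satisfies the equalities, and the rows of
`A` together with the tight rows of `B` span the whole space. -/
def IsBasicSolution {p q n : Type*} [Fintype n] (A : Matrix p n ℝ) (b : p → ℝ)
    (B : Matrix q n ℝ) (d : q → ℝ) (g : n → ℝ) : Prop :=
  A.mulVec g = b ∧
  Submodule.span ℝ (Set.range (fun i => A i) ∪
    (fun i => B i) '' {i | B.mulVec g i = d i}) = ⊤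

/-- The matrix `Π_{n,m}` (0-indexed): columns `2e₀, e₀+e₂, 2e₁, e₁+e₂, 2e₃, …, 2e_{n-1}, 0, …`. -/
def piMat (n m : ℕ) : Matrix (Fin n) (Fin m) ℝ :=
  Matrix.of fun i j =>
    if j.val = 0 then (if i.val = 0 then 2 else 0)
    else if j.val = 1 then (if i.val = 0 ∨ i.val = 2 then 1 else 0)
    else if j.val = 2 then (if i.val = 1 then 2 else 0)
    else if j.val = 3 then (if i.val = 1 ∨ i.val = 2 then 1 else 0)
    else if j.val ≤ n then (if i.val + 1 = j.val then 2 else 0)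
    else 0

/-- The inequality matrix of the description `-x ≤ 0, Σᵢ xᵢ ≤ 1` of the standard simplex. -/
def simplexB (m : ℕ) : Matrix (Fin (m+1)) (Fin m) ℝ :=
  Matrix.of fun i j =>
    if i.val < m then (if j.val = i.val then -1 else 0) else 1

def simplexd (m : ℕ) : Fin (m+1) → ℝ := fun i => if i.val < m then 0 else 1

/-- The standard simplex `S_m = {x : x ≥ 0, Σᵢ xᵢ ≤ 1}`. -/
def simplexSet (m : ℕ) : Set (Fin m → ℝ) :=
  polySet (0 : Matrix (Fin 0) (Fin m) ℝ) 0 (simplexB m) (simplexd m)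

/-- The circuits of the description `-x ≤ 0, Σᵢ xᵢ ≤ 1` of the standard simplex. -/
def simplexCircuits (m : ℕ) : Set (Fin m → ℝ) :=
  circuits (0 : Matrix (Fin 0) (Fin m) ℝ) (simplexB m)

section generic

variable {n : ℕ} {ι : Type*}

/-- The polyhedron given by a family of inequalities. -/
def ineqSet (f : ι → Fin n → ℝ) (d : ι → ℝ) : Set (Fin n → ℝ) := {x | ∀ i, f i ⬝ᵥ x ≤ d i}

/-- The hyperplane orthogonal to `c`. -/
def kerDot (c : Fin n → ℝ) : Submodule ℝ (Fin n → ℝ) := LinearMap.ker (dotProductEquiv ℝ (Fin n) c)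

lemma mem_kerDot (c g : Fin n → ℝ) : g ∈ kerDot c ↔ c ⬝ᵥ g = 0 := by
  simp [kerDot, dotProductEquiv]

lemma finrank_kerDot (c : Fin n → ℝ) (hc : c ≠ 0) : Module.finrank ℝ (kerDot c) + 1 = n := by
  have h := Module.Dual.finrank_ker_add_one_of_ne_zero (K := ℝ) (V₁ := Fin n → ℝ)
    (f := dotProductEquiv ℝ (Fin n) c) (by simpa using hc)
  rw [Module.finrank_fin_fun] at h
  exact h

/-- Moving a little in a feasible direction. -/
lemma exists_step [Finite ι] (f : ι → Fin n → ℝ) (d : ι → ℝ) (x y : Fin n → ℝ)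
    (hx : x ∈ ineqSet f d) (hy : ∀ i, f i ⬝ᵥ x = d i → f i ⬝ᵥ y ≤ 0) :
    ∃ ε : ℝ, 0 < ε ∧ x + ε • y ∈ ineqSet f d := by
  have h : ∀ᶠ ε : ℝ in nhdsWithin 0 (Set.Ioi 0), ∀ i, f i ⬝ᵥ (x + ε • y) ≤ d i := by
    rw [Filter.eventually_all]
    intro i
    by_cases hi : f i ⬝ᵥ x = d i
    · filter_upwards [self_mem_nhdsWithin] with ε hε
      have hε' : 0 < ε := hε
      rw [dotProduct_add, dotProduct_smul, hi, smul_eq_mul]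
      nlinarith [hy i hi]
    · have hlt : f i ⬝ᵥ x < d i := lt_of_le_of_ne (hx i) hi
      have hc : Continuous fun ε : ℝ => f i ⬝ᵥ x + ε * (f i ⬝ᵥ y) := by fun_prop
      have hev : ∀ᶠ ε : ℝ in nhds 0, f i ⬝ᵥ x + ε * (f i ⬝ᵥ y) < d i :=
        hc.continuousAt.eventually_lt continuousAt_const (by simpa using hlt)
      filter_upwards [nhdsWithin_le_nhds hev] with ε hε
      rw [dotProduct_add, dotProduct_smul, smul_eq_mul]
      exact hε.le
  obtain ⟨ε, h1, h2⟩ := (h.and self_mem_nhdsWithin).exists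
  exact ⟨ε, h2, h1⟩

lemma sub_mem_dir {F : Set (Fin n → ℝ)} {x y : Fin n → ℝ} (hx : x ∈ F) (hy : y ∈ F) :
    x - y ∈ (affineSpan ℝ F).direction := by
  rw [direction_affineSpan]
  exact vsub_mem_vectorSpan ℝ hx hy

lemma dir_le {F : Set (Fin n → ℝ)} {D : Submodule ℝ (Fin n → ℝ)}
    (h : ∀ x ∈ F, ∀ y ∈ F, x - y ∈ D) : (affineSpan ℝ F).direction ≤ D := by
  rw [direction_affineSpan, vectorSpan_def, Submodule.span_le]
  rintro _ ⟨x, hx, y, hy, rfl⟩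
  exact h x hx y hy

lemma dir_le_ker {P : Set (Fin n → ℝ)} (c : Fin n → ℝ) (s : ℝ) :
    (affineSpan ℝ {x ∈ P | c ⬝ᵥ x = s}).direction ≤ kerDot c := by
  apply dir_le
  rintro x ⟨_, hx⟩ y ⟨_, hy⟩
  rw [mem_kerDot, dotProduct_sub, hx, hy, sub_self]

lemma mem_dir_of_step {F : Set (Fin n → ℝ)} {x y : Fin n → ℝ} {ε : ℝ} (hε : 0 < ε)
    (hx : x ∈ F) (hy : x + ε • y ∈ F) : y ∈ (affineSpan ℝ F).direction := by
  have h := sub_mem_dir hy hx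
  rw [add_sub_cancel_left] at h
  have := Submodule.smul_mem _ ε⁻¹ h
  rwa [smul_smul, inv_mul_cancel₀ hε.ne', one_smul] at this

lemma spanDim_empty : spanDim (∅ : Set (Fin n → ℝ)) = 0 := by
  unfold spanDim
  have : (affineSpan ℝ (∅ : Set (Fin n → ℝ))).direction = ⊥ := by simp
  rw [this]; simp

/-- Facets have directions equal to the hyperplane of the normal. -/
lemma facet_dir {P : Set (Fin n → ℝ)} (hn : 2 ≤ n) (hP : spanDim P = n) (c : Fin n → ℝ) (s : ℝ)
    (hF : spanDim {x ∈ P | c ⬝ᵥ x = s} + 1 = n) :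
    (affineSpan ℝ {x ∈ P | c ⬝ᵥ x = s}).direction = kerDot c := by
  have hne : ({x ∈ P | c ⬝ᵥ x = s}).Nonempty := by
    rw [Set.nonempty_iff_ne_empty]
    intro h
    rw [h, spanDim_empty] at hF
    omega
  have hc : c ≠ 0 := by
    rintro rfl
    obtain ⟨y, hy, hys⟩ := hne
    have : {x ∈ P | (0 : Fin n → ℝ) ⬝ᵥ x = s} = P := by
      ext x
      simp only [zero_dotProduct] at hys ⊢
      simp [hys]
    rw [this] at hF
    omega
  apply Submodule.eq_of_le_of_finrank_eq (dir_le_ker c s)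
  have := finrank_kerDot c hc
  unfold spanDim at hF
  omega

lemma facet_dir_iff {P : Set (Fin n → ℝ)} (hn : 2 ≤ n) (hP : spanDim P = n) (c : Fin n → ℝ) (s : ℝ)
    (hF : IsFacet P {x ∈ P | c ⬝ᵥ x = s}) (g : Fin n → ℝ) :
    c ⬝ᵥ g = 0 ↔ g ∈ (affineSpan ℝ {x ∈ P | c ⬝ᵥ x = s}).direction := by
  rw [facet_dir hn hP c s (hF.2.trans hP), mem_kerDot]

/-- Every facet arises from one of the inequalities. -/
lemma facet_exists [Finite ι] (f : ι → Fin n → ℝ) (d : ι → ℝ)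
    (hP : spanDim (ineqSet f d) = n)
    (hi : ∀ i, IsFacet (ineqSet f d) {x ∈ ineqSet f d | f i ⬝ᵥ x = d i})
    (F : Set (Fin n → ℝ)) (hF : IsFacet (ineqSet f d) F) :
    ∃ i, F = {x ∈ ineqSet f d | f i ⬝ᵥ x = d i} := by
  obtain ⟨hface, hdim⟩ := hF
  rw [hP] at hdim
  rcases hface with rfl | ⟨c, s, hcs, ⟨y0, hy0, hy0s⟩, rfl⟩
  · omega
  have hsub : ∃ i, ∀ y ∈ {x ∈ ineqSet f d | c ⬝ᵥ x = s}, f i ⬝ᵥ y = d i := by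
    by_contra! hcon
    have hfin : ∀ T : Set ι, T.Finite → ∃ y ∈ {x ∈ ineqSet f d | c ⬝ᵥ x = s},
        ∀ i ∈ T, f i ⬝ᵥ y < d i := by
      intro T hT
      induction T, hT using Set.Finite.induction_on with
      | empty => exact ⟨y0, ⟨hy0, hy0s⟩, by simp⟩
      | @insert a T _ _ ih =>
        obtain ⟨y, ⟨hyP, hys⟩, hyT⟩ := ih
        obtain ⟨z, ⟨hzP, hzs⟩, hz⟩ := hcon a
        have hz' := lt_of_le_of_ne (hzP a) hz
        have key : ∀ w : Fin n → ℝ, w ⬝ᵥ ((1/2 : ℝ) • (y + z)) = (w ⬝ᵥ y + w ⬝ᵥ z) / 2 := by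
          intro w
          rw [dotProduct_smul, dotProduct_add, smul_eq_mul]; ring
        refine ⟨(1/2 : ℝ) • (y + z), ⟨?_, ?_⟩, ?_⟩
        · intro i
          rw [key]
          linarith [hyP i, hzP i]
        · rw [key]; linarith
        · intro i hiT
          rw [key]
          rcases hiT with rfl | hiT
          · linarith [hyP i]
          · linarith [hyT i hiT, hzP i]
    obtain ⟨y, ⟨hyP, hys⟩, hy⟩ := hfin Set.univ (Set.toFinite _)
    obtain ⟨ε, hε, hstep⟩ := exists_step f d y c hyP
      (fun i h => absurd h (hy i (Set.mem_univ i)).ne)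
    have h1 := hcs _ hstep
    rw [dotProduct_add, dotProduct_smul, hys, smul_eq_mul] at h1
    have h2 : c ⬝ᵥ c = 0 := by
      have h3 : 0 ≤ c ⬝ᵥ c := by
        simp only [dotProduct]
        exact Finset.sum_nonneg fun i _ => mul_self_nonneg _
      nlinarith
    have hc : c = 0 := dotProduct_self_eq_zero.mp h2
    have hs : s = 0 := by rw [← hys, hc, zero_dotProduct]
    have : {x ∈ ineqSet f d | c ⬝ᵥ x = s} = ineqSet f d := by
      ext x; simp [hc, hs]
    rw [this] at hdim
    omega
  obtain ⟨i, hsub⟩ := hsub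
  refine ⟨i, Set.Subset.antisymm (fun x hx => ⟨hx.1, hsub x hx⟩) ?_⟩
  have hle : (affineSpan ℝ {x ∈ ineqSet f d | c ⬝ᵥ x = s}).direction ≤
      (affineSpan ℝ {x ∈ ineqSet f d | f i ⬝ᵥ x = d i}).direction :=
    AffineSubspace.direction_le (affineSpan_mono ℝ fun x hx => ⟨hx.1, hsub x hx⟩)
  have hdi := (hi i).2
  rw [hP] at hdi
  have heq := Submodule.eq_of_le_of_finrank_eq hle (by
    unfold spanDim at hdi hdim; omega)
  intro x hx
  have hm := sub_mem_dir hx (⟨hy0, hsub y0 ⟨hy0, hy0s⟩⟩ :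
    y0 ∈ {x ∈ ineqSet f d | f i ⬝ᵥ x = d i})
  rw [← heq] at hm
  have := dir_le_ker c s hm
  rw [mem_kerDot, dotProduct_sub, hy0s] at this
  exact ⟨hx.1, by linarith⟩

/-- The zero pattern relation of an irredundant description depends only on the polyhedron. -/
lemma zero_pattern [Finite ι] {P : Set (Fin n → ℝ)} (hn : 2 ≤ n) (f : ι → Fin n → ℝ) (d : ι → ℝ)
    (hPf : P = ineqSet f d) (hP : spanDim P = n)
    (hi : ∀ i, IsFacet P {x ∈ P | f i ⬝ᵥ x = d i}) (g y : Fin n → ℝ) :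
    (∀ i, f i ⬝ᵥ g = 0 → f i ⬝ᵥ y = 0) ↔
    ∀ F, IsFacet P F → g ∈ (affineSpan ℝ F).direction → y ∈ (affineSpan ℝ F).direction := by
  subst hPf
  constructor
  · intro h F hF
    obtain ⟨i, rfl⟩ := facet_exists f d hP hi F hF
    rw [← facet_dir_iff hn hP _ _ hF, ← facet_dir_iff hn hP _ _ hF]
    exact h i
  · intro h i
    rw [facet_dir_iff hn hP _ _ (hi i), facet_dir_iff hn hP _ _ (hi i)]
    exact h _ (hi i)

/-- Set of points of a polyhedron tight for a nonempty-valued selection of inequalities. -/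
lemma isFace_tight [Fintype ι] (f : ι → Fin n → ℝ) (d : ι → ℝ) (T : Set ι) (v : Fin n → ℝ)
    (hv : v ∈ ineqSet f d) (hvT : ∀ i ∈ T, f i ⬝ᵥ v = d i) :
    IsFace (ineqSet f d) {x ∈ ineqSet f d | ∀ i ∈ T, f i ⬝ᵥ x = d i} := by
  classical
  have key : ∀ x : Fin n → ℝ, (∑ i with i ∈ T, f i) ⬝ᵥ x = ∑ i with i ∈ T, f i ⬝ᵥ x := by
    intro x
    rw [sum_dotProduct]
  refine Or.inr ⟨∑ i with i ∈ T, f i, ∑ i with i ∈ T, d i, ?_, ⟨v, hv, ?_⟩, ?_⟩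
  · intro y hy
    rw [key]
    exact Finset.sum_le_sum fun i _ => hy i
  · rw [key]
    exact Finset.sum_congr rfl fun i hi => hvT i (by simpa using hi)
  · ext x
    constructor
    · rintro ⟨hx, hT⟩
      refine ⟨hx, ?_⟩
      rw [key]
      exact Finset.sum_congr rfl fun i hi => hT i (by simpa using hi)
    · rintro ⟨hx, hT⟩
      refine ⟨hx, fun i hi => ?_⟩
      rw [key, Finset.sum_eq_sum_iff_of_le (fun i _ => hx i)] at hT
      exact hT i (by simpa using hi)

end generic

section concrete

variable {n : ℕ}

/-- The columns of the matrix, indexed by natural numbers. -/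
def colv (n : ℕ) (j : ℕ) : Fin n → ℝ := fun i =>
  if j = 0 then (if i.val = 0 then 2 else 0)
  else if j = 1 then (if i.val = 0 ∨ i.val = 2 then 1 else 0)
  else if j = 2 then (if i.val = 1 then 2 else 0)
  else if j = 3 then (if i.val = 1 ∨ i.val = 2 then 1 else 0)
  else if j ≤ n then (if i.val + 1 = j then 2 else 0)
  else 0

/-- Facet normals. -/
def fz (hn : 3 ≤ n) : Fin n ⊕ Bool → Fin n → ℝ
  | Sum.inl i => -Pi.single i 1
  | Sum.inr false => Pi.single ⟨2, by omega⟩ 1 - Pi.single ⟨0, by omega⟩ 1 -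
      Pi.single ⟨1, by omega⟩ 1
  | Sum.inr true => fun _ => 1

/-- Right hand sides. -/
def dz : Fin n ⊕ Bool → ℝ
  | Sum.inr true => 2
  | _ => 0

@[simp] lemma fz_inl (hn : 3 ≤ n) (i : Fin n) (x : Fin n → ℝ) :
    fz hn (Sum.inl i) ⬝ᵥ x = - x i := by
  simp [fz]

@[simp] lemma fz_false (hn : 3 ≤ n) (x : Fin n → ℝ) :
    fz hn (Sum.inr false) ⬝ᵥ x = x ⟨2, by omega⟩ - x ⟨0, by omega⟩ - x ⟨1, by omega⟩ := by
  simp [fz, sub_dotProduct]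

@[simp] lemma fz_true (hn : 3 ≤ n) (x : Fin n → ℝ) :
    fz hn (Sum.inr true) ⬝ᵥ x = ∑ i, x i := by
  simp [fz, dotProduct]

@[simp] lemma dz_inl (i : Fin n) : dz (Sum.inl i) = 0 := rfl
@[simp] lemma dz_false : dz (n := n) (Sum.inr false) = 0 := rfl
@[simp] lemma dz_true : dz (n := n) (Sum.inr true) = 2 := rfl

lemma forall_idx {p : Fin n ⊕ Bool → Prop} :
    (∀ i, p i) ↔ (∀ i, p (Sum.inl i)) ∧ p (Sum.inr false) ∧ p (Sum.inr true) := by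
  simp [Sum.forall, Bool.forall_bool]

/-- The polytope. -/
abbrev Pz (hn : 3 ≤ n) : Set (Fin n → ℝ) := ineqSet (fz hn) dz

lemma mem_Pz (hn : 3 ≤ n) (x : Fin n → ℝ) : x ∈ Pz hn ↔
    (∀ i, 0 ≤ x i) ∧ x ⟨2, by omega⟩ ≤ x ⟨0, by omega⟩ + x ⟨1, by omega⟩ ∧ ∑ i, x i ≤ 2 := by
  simp only [Pz, ineqSet, Set.mem_ofPred_eq, forall_idx, fz_inl, fz_false, fz_true, dz_inl, dz_false,
    dz_true]
  refine and_congr (forall_congr' fun i => by simp) (and_congr ?_ Iff.rfl)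
  rw [sub_sub, sub_nonpos]

lemma colv_0 (hn : 3 ≤ n) : colv n 0 = Pi.single ⟨0, by omega⟩ 2 := by
  ext i; simp [colv, Pi.single_apply, Fin.ext_iff]

lemma colv_1 (hn : 3 ≤ n) : colv n 1 = Pi.single ⟨0, by omega⟩ 1 + Pi.single ⟨2, by omega⟩ 1 := by
  ext i; simp only [colv, Pi.add_apply, Pi.single_apply, Fin.ext_iff]
  split_ifs <;> first | omega | simp_all

lemma colv_2 (hn : 3 ≤ n) : colv n 2 = Pi.single ⟨1, by omega⟩ 2 := by
  ext i; simp [colv, Pi.single_apply, Fin.ext_iff]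

lemma colv_3 (hn : 3 ≤ n) : colv n 3 = Pi.single ⟨1, by omega⟩ 1 + Pi.single ⟨2, by omega⟩ 1 := by
  ext i; simp only [colv, Pi.add_apply, Pi.single_apply, Fin.ext_iff]
  split_ifs <;> first | omega | simp_all

lemma colv_mid (j : ℕ) (hj : 4 ≤ j) (hjn : j ≤ n) :
    colv n j = Pi.single ⟨j - 1, by omega⟩ 2 := by
  ext i; simp only [colv, Pi.single_apply, Fin.ext_iff]
  split_ifs <;> first | omega | rfl

lemma colv_big (hn : 3 ≤ n) (j : ℕ) (hjn : n < j) : colv n j = 0 := by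
  ext i; simp only [colv, Pi.zero_apply]
  split_ifs <;> first | omega | rfl

lemma sum_colv (hn : 3 ≤ n) (j : ℕ) : ∑ i, colv n j i = if j ≤ n then 2 else 0 := by
  by_cases h : j ≤ n
  · rw [if_pos h]
    rcases (by omega : j = 0 ∨ j = 1 ∨ j = 2 ∨ j = 3 ∨ 4 ≤ j) with rfl | rfl | rfl | rfl | h4
    · simp [colv_0 hn]
    · simp [colv_1 hn, Finset.sum_add_distrib]; norm_num
    · simp [colv_2 hn]
    · simp [colv_3 hn, Finset.sum_add_distrib]; norm_num
    · simp [colv_mid j h4 h]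
  · rw [if_neg h, colv_big hn j (by omega)]; simp

lemma colv_c0 (hn : 3 ≤ n) (j : ℕ) :
    colv n j ⟨0, by omega⟩ = if j = 0 then 2 else if j = 1 then 1 else 0 := by
  simp only [colv]
  split_ifs <;> first | rfl | omega | simp_all

lemma colv_c1 (hn : 3 ≤ n) (j : ℕ) :
    colv n j ⟨1, by omega⟩ = if j = 2 then 2 else if j = 3 then 1 else 0 := by
  simp only [colv]
  split_ifs <;> first | rfl | omega | simp_all

lemma colv_c2 (hn : 3 ≤ n) (j : ℕ) :
    colv n j ⟨2, by omega⟩ = if j = 1 ∨ j = 3 then 1 else 0 := by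
  simp only [colv]
  split_ifs <;> first | rfl | omega | simp_all

lemma colv_ci (j : ℕ) (i : Fin n) (hi : 3 ≤ i.val) :
    colv n j i = if i.val + 1 = j then 2 else 0 := by
  simp only [colv]
  split_ifs <;> first | rfl | omega | simp_all

lemma forall_fin (hn : 3 ≤ n) {p : Fin n → Prop} (h0 : p ⟨0, by omega⟩) (h1 : p ⟨1, by omega⟩)
    (h2 : p ⟨2, by omega⟩) (h3 : ∀ i : Fin n, 3 ≤ i.val → p i) : ∀ i, p i := by
  rintro ⟨i, hi⟩
  rcases (by omega : i = 0 ∨ i = 1 ∨ i = 2 ∨ 3 ≤ i) with rfl | rfl | rfl | h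
  exacts [h0, h1, h2, h3 _ h]

lemma colv_mem (hn : 3 ≤ n) (j : ℕ) : colv n j ∈ Pz hn := by
  rw [mem_Pz]
  refine ⟨fun i => ?_, ?_, ?_⟩
  · unfold colv; split_ifs <;> norm_num
  · rw [colv_c0 hn, colv_c1 hn, colv_c2 hn]
    split_ifs <;> first | omega | norm_num
  · rw [sum_colv hn]; split_ifs <;> norm_num

lemma colv_inj (hn : 3 ≤ n) (j k : ℕ) (hj : j ≤ n + 1) (hk : k ≤ n + 1)
    (h : ∀ i : Fin n, i.val ≠ 2 → colv n j i = colv n k i) : j = k := by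
  have h0 := h ⟨0, by omega⟩ (by simp)
  have h1 := h ⟨1, by omega⟩ (by simp)
  rw [colv_c0 hn, colv_c0 hn] at h0
  rw [colv_c1 hn, colv_c1 hn] at h1
  have h3 : 4 ≤ j → j ≤ n → j = k := by
    intro h4 h5
    by_contra hne
    have h2 := h ⟨j - 1, by omega⟩ (by simp; omega)
    rw [colv_ci _ _ (by simp; omega), colv_ci _ _ (by simp; omega), if_pos (by simp; omega),
      if_neg (by simp; omega)] at h2
    norm_num at h2
  have h3' : 4 ≤ k → k ≤ n → j = k := by
    intro h4 h5
    by_contra hne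
    have h2 := h ⟨k - 1, by omega⟩ (by simp; omega)
    rw [colv_ci _ _ (by simp; omega), colv_ci _ _ (by simp; omega), if_neg (by simp; omega),
      if_pos (by simp; omega)] at h2
    norm_num at h2
  clear h
  split_ifs at h0 <;> first | omega | (exfalso; norm_num at h0; done) | skip
  split_ifs at h1 <;> first | omega | (exfalso; norm_num at h1; done)

/-- The pair is not one of the two diagonals of the quadrilateral. -/
def Nondiag (j k : ℕ) : Prop :=
  ¬ (j = 0 ∧ k = 3) ∧ ¬ (j = 3 ∧ k = 0) ∧ ¬ (j = 1 ∧ k = 2) ∧ ¬ (j = 2 ∧ k = 1)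

lemma Nondiag.symm {j k : ℕ} (h : Nondiag j k) : Nondiag k j := by
  unfold Nondiag at *; omega

lemma span_pair (hn : 3 ≤ n) (j k : ℕ) (hjk : Nondiag j k) (hle : j ≤ k) (x : Fin n → ℝ)
    (hX : ∀ i, colv n j i = 0 → colv n k i = 0 → x i = 0)
    (hG : fz hn (Sum.inr false) ⬝ᵥ colv n j = 0 → fz hn (Sum.inr false) ⬝ᵥ colv n k = 0 →
      fz hn (Sum.inr false) ⬝ᵥ x = 0) :
    ∃ α β : ℝ, x = α • colv n j + β • colv n k := by
  simp only [fz_false] at hG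
  set x0 := x ⟨0, by omega⟩ with hx0
  set x1 := x ⟨1, by omega⟩ with hx1
  set x2 := x ⟨2, by omega⟩ with hx2
  have hX0 := hX ⟨0, by omega⟩
  have hX1 := hX ⟨1, by omega⟩
  have hX2 := hX ⟨2, by omega⟩
  have hXi : ∀ i : Fin n, 3 ≤ i.val → i.val + 1 ≠ j → i.val + 1 ≠ k → x i = 0 := by
    intro i hi h1 h2
    apply hX i <;> rw [colv_ci _ _ hi, if_neg]
    exacts [h1, h2]
  rw [← hx0, colv_c0 hn, colv_c0 hn] at hX0
  rw [← hx1, colv_c1 hn, colv_c1 hn] at hX1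
  rw [← hx2, colv_c2 hn, colv_c2 hn] at hX2
  simp only [colv_c0 hn, colv_c1 hn, colv_c2 hn] at hG
  obtain ⟨w, hw⟩ : ∃ w : ℕ → ℝ, ∀ i : Fin n, x i = 2 * w (i.val + 1) :=
    ⟨fun l => if h : l - 1 < n then x ⟨l - 1, h⟩ / 2 else 0, fun i => by simp; ring⟩
  have main : ∀ α β : ℝ, x0 = α * (if j = 0 then 2 else if j = 1 then 1 else 0) +
        β * (if k = 0 then 2 else if k = 1 then 1 else 0) →
      x1 = α * (if j = 2 then 2 else if j = 3 then 1 else 0) +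
        β * (if k = 2 then 2 else if k = 3 then 1 else 0) →
      x2 = α * (if j = 1 ∨ j = 3 then 1 else 0) + β * (if k = 1 ∨ k = 3 then 1 else 0) →
      (4 ≤ j → j ≠ k → α = w j) → (4 ≤ k → j ≠ k → β = w k) → (4 ≤ k → j = k → α + β = w k) →
      ∃ α β : ℝ, x = α • colv n j + β • colv n k := by
    intro α β a0 a1 a2 aj ak ajk
    refine ⟨α, β, funext (forall_fin hn ?_ ?_ ?_ ?_)⟩
    · simp only [Pi.add_apply, Pi.smul_apply, smul_eq_mul, colv_c0 hn]; exact a0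
    · simp only [Pi.add_apply, Pi.smul_apply, smul_eq_mul, colv_c1 hn]; exact a1
    · simp only [Pi.add_apply, Pi.smul_apply, smul_eq_mul, colv_c2 hn]; exact a2
    · intro i hi
      simp only [Pi.add_apply, Pi.smul_apply, smul_eq_mul, colv_ci _ _ hi]
      by_cases h1 : i.val + 1 = j <;> by_cases h2 : i.val + 1 = k
      · have := ajk (by omega) (by omega)
        rw [if_pos h2, if_pos h1, hw, h2, ← this]; ring
      · rw [if_neg h2, if_pos h1, hw, h1, aj (by omega) (by omega)]; ring
      · rw [if_neg h1, if_pos h2, hw, h2, ak (by omega) (by omega)]; ring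
      · rw [hXi i hi h1 h2, if_neg h1, if_neg h2]; ring
  unfold Nondiag at hjk
  clear_value x0 x1 x2
  clear hX hXi hw hx0 hx1 hx2
  rcases (by omega : j = 0 ∨ j = 1 ∨ j = 2 ∨ j = 3 ∨ 4 ≤ j) with rfl | rfl | rfl | rfl | h4
  · rcases (by omega : k = 0 ∨ k = 1 ∨ k = 2 ∨ 4 ≤ k) with rfl | rfl | rfl | h4
    · simp at hX0 hX1 hX2 hG
      apply main (x0 / 2) 0 <;> simp [*]
    · simp at hX0 hX1 hX2 hG
      apply main ((x0 - x2) / 2) x2 <;> simp [*]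
    · simp at hX0 hX1 hX2 hG
      apply main (x0 / 2) (x1 / 2) <;> simp [*]
    · have : k ≠ 0 ∧ k ≠ 1 ∧ k ≠ 2 ∧ k ≠ 3 := by omega
      simp [this] at hX0 hX1 hX2 hG
      apply main (x0 / 2) (w k) <;> simp [*]
      omega
  · rcases (by omega : k = 1 ∨ k = 3 ∨ 4 ≤ k) with rfl | rfl | h4
    · simp at hX0 hX1 hX2 hG
      apply main x0 0 <;> simp [*]
      linarith
    · simp at hX0 hX1 hX2 hG
      apply main x0 x1 <;> simp [*]
      linarith
    · have : k ≠ 0 ∧ k ≠ 1 ∧ k ≠ 2 ∧ k ≠ 3 := by omega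
      simp [this] at hX0 hX1 hX2 hG
      apply main x0 (w k) <;> simp [*]
      · linarith
      · omega
  · rcases (by omega : k = 2 ∨ k = 3 ∨ 4 ≤ k) with rfl | rfl | h4
    · simp at hX0 hX1 hX2 hG
      apply main (x1 / 2) 0 <;> simp [*]
    · simp at hX0 hX1 hX2 hG
      apply main ((x1 - x2) / 2) x2 <;> simp [*]
    · have : k ≠ 0 ∧ k ≠ 1 ∧ k ≠ 2 ∧ k ≠ 3 := by omega
      simp [this] at hX0 hX1 hX2 hG
      apply main (x1 / 2) (w k) <;> simp [*]
      omega
  · rcases (by omega : k = 3 ∨ 4 ≤ k) with rfl | h4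
    · simp at hX0 hX1 hX2 hG
      apply main x1 0 <;> simp [*]
      linarith
    · have : k ≠ 0 ∧ k ≠ 1 ∧ k ≠ 2 ∧ k ≠ 3 := by omega
      simp [this] at hX0 hX1 hX2 hG
      apply main x1 (w k) <;> simp [*]
      · linarith
      · omega
  · have h1 : k ≠ 0 ∧ k ≠ 1 ∧ k ≠ 2 ∧ k ≠ 3 := by omega
    have h2 : j ≠ 0 ∧ j ≠ 1 ∧ j ≠ 2 ∧ j ≠ 3 := by omega
    simp [h1, h2] at hX0 hX1 hX2 hG
    by_cases hjk' : j = k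
    · subst hjk'
      apply main (w j) 0 <;> simp [*]
    · apply main (w j) (w k) <;> simp [*]

/-- Points tight wherever two non-diagonal vertices are tight lie on the line through them. -/
lemma line_pair (hn : 3 ≤ n) (j k : ℕ) (hjk : Nondiag j k) (x : Fin n → ℝ)
    (h : ∀ i, fz hn i ⬝ᵥ colv n j = dz i → fz hn i ⬝ᵥ colv n k = dz i → fz hn i ⬝ᵥ x = dz i) :
    ∃ t : ℝ, x = colv n j + t • (colv n k - colv n j) := by
  wlog hle : j ≤ k generalizing j k
  · obtain ⟨t, ht⟩ := this k j hjk.symm (fun i h1 h2 => h i h2 h1) (by omega)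
    refine ⟨1 - t, ?_⟩
    rw [ht]; module
  obtain ⟨α, β, hx⟩ := span_pair hn j k hjk hle x
    (fun i h1 h2 => by simpa [h1, h2] using h (Sum.inl i)) (h (Sum.inr false))
  by_cases hk : k ≤ n
  · have hS := h (Sum.inr true)
    simp only [fz_true, sum_colv hn, dz_true, if_pos hk, if_pos (hle.trans hk)] at hS
    have hS' := hS trivial trivial
    rw [hx] at hS'
    simp only [Pi.add_apply, Pi.smul_apply, smul_eq_mul, Finset.sum_add_distrib, ← Finset.mul_sum,
      sum_colv hn, if_pos hk, if_pos (hle.trans hk)] at hS'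
    refine ⟨β, ?_⟩
    have hα : α = 1 - β := by linarith
    rw [hx, hα]; module
  · rw [colv_big hn k (by omega)] at hx ⊢
    refine ⟨1 - α, ?_⟩
    rw [hx]; module

lemma line_pair_lin (hn : 3 ≤ n) (j k : ℕ) (hjk : Nondiag j k) (y : Fin n → ℝ)
    (h : ∀ i, fz hn i ⬝ᵥ colv n j = dz i → fz hn i ⬝ᵥ colv n k = dz i → fz hn i ⬝ᵥ y = 0) :
    ∃ t : ℝ, y = t • (colv n k - colv n j) := by
  obtain ⟨t, ht⟩ := line_pair hn j k hjk (colv n j + y) (fun i h1 h2 => by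
    rw [dotProduct_add, h1, h i h1 h2, add_zero])
  exact ⟨t, add_left_cancel ht⟩

end concrete

section concrete2

variable {n : ℕ}

lemma exists_interior (hn : 3 ≤ n) : ∃ x : Fin n → ℝ, ∀ j, fz hn j ⬝ᵥ x < dz j := by
  have hpos : (0 : ℝ) < n + 2 := by positivity
  refine ⟨(1 / ((n : ℝ) + 2)) • ((fun _ => 1) + Pi.single ⟨0, by omega⟩ 1 +
    Pi.single ⟨1, by omega⟩ 1), ?_⟩
  rw [forall_idx]
  refine ⟨fun i => ?_, ?_, ?_⟩
  · rw [dotProduct_smul, fz_inl, dz_inl, smul_eq_mul]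
    have : (0 : ℝ) < 1 / ((n : ℝ) + 2) := by positivity
    have h2 : (0 : ℝ) < ((fun _ => 1) + Pi.single ⟨0, by omega⟩ 1 +
      Pi.single ⟨1, by omega⟩ 1 : Fin n → ℝ) i := by
      simp only [Pi.add_apply, Pi.single_apply]
      split_ifs <;> norm_num
    nlinarith [mul_pos this h2]
  · rw [dotProduct_smul, fz_false, dz_false, smul_eq_mul]
    have : (0 : ℝ) < 1 / ((n : ℝ) + 2) := by positivity
    simp only [Pi.add_apply, Pi.single_apply, Fin.mk.injEq]
    norm_num
    exact hpos
  · rw [dotProduct_smul, fz_true, dz_true, smul_eq_mul]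
    simp only [Pi.add_apply, Finset.sum_add_distrib, Finset.sum_pi_single', Finset.mem_univ,
      if_true, Finset.sum_const, Finset.card_univ, Fintype.card_fin, nsmul_eq_mul, mul_one]
    rw [one_div, inv_mul_lt_iff₀ hpos]
    linarith

lemma exists_relint (hn : 3 ≤ n) (i : Fin n ⊕ Bool) :
    ∃ x : Fin n → ℝ, fz hn i ⬝ᵥ x = dz i ∧ ∀ j, j ≠ i → fz hn j ⬝ᵥ x < dz j := by
  have hpos : (0 : ℝ) < n + 2 := by positivity
  have hn' : (3 : ℝ) ≤ n := by exact_mod_cast hn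
  rcases i with i | _ | _
  · obtain ⟨δ, hδ⟩ : ∃ δ : ℝ, δ = 1 / ((n : ℝ) + 2) := ⟨_, rfl⟩
    have hδ0 : 0 < δ := by rw [hδ]; positivity
    have hδ1 : δ * (n + 2) = 1 := by rw [hδ]; field_simp
    have hz0 : 0 < n := by omega
    have hz1 : 1 < n := by omega
    have hex : ∃ u : Fin n → ℝ, u = δ • ((fun _ => 1) + Pi.single ⟨0, hz0⟩ 1 +
      Pi.single ⟨1, hz1⟩ 1) := ⟨_, rfl⟩
    obtain ⟨u, hu⟩ := hex
    have hu0 : ∀ j, δ ≤ u j := by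
      intro j
      rw [hu]
      simp only [Pi.smul_apply, smul_eq_mul, Pi.add_apply, Pi.single_apply]
      split_ifs <;> linarith
    have hus : ∑ j, u j = 1 := by
      rw [hu]
      simp only [Pi.smul_apply, smul_eq_mul, ← Finset.mul_sum, Pi.add_apply,
        Finset.sum_add_distrib, Finset.sum_pi_single', Finset.mem_univ,
        if_true, Finset.sum_const, Finset.card_univ, Fintype.card_fin, nsmul_eq_mul, mul_one]
      linarith
    have h0 : u ⟨0, by omega⟩ = 2 * δ := by
      rw [hu]; simp [Fin.ext_iff]; ring
    have h1 : u ⟨1, by omega⟩ = 2 * δ := by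
      rw [hu]; simp [Fin.ext_iff]; ring
    have h2 : u ⟨2, by omega⟩ = δ := by
      rw [hu]; simp [Fin.ext_iff]
    refine ⟨u - Pi.single i (u i), by rw [fz_inl]; simp, ?_⟩
    rw [forall_idx]
    refine ⟨fun j hj => ?_, fun _ => ?_, fun _ => ?_⟩
    · have hji : j ≠ i := fun h => hj (by rw [h])
      rw [fz_inl]
      simp [hji]
      linarith [hu0 j]
    · simp only [fz_false, Pi.sub_apply, Pi.single_apply, h0, h1, h2, Fin.ext_iff, dz_false]
      split_ifs <;> first | omega | skip
      all_goals first
        | (have e : i = ⟨2, by omega⟩ := by ext; simp_all); rw [e, h2]; linarith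
        | (have e : i = ⟨1, by omega⟩ := by ext; simp_all); rw [e, h1]; linarith
        | (have e : i = ⟨0, by omega⟩ := by ext; simp_all); rw [e, h0]; linarith
        | linarith
    · simp only [fz_true, Pi.sub_apply, Finset.sum_sub_distrib, hus, Finset.sum_pi_single',
        Finset.mem_univ, if_true, dz_true]
      linarith [hu0 i]
  · refine ⟨(1 / ((n : ℝ) + 2)) • ((fun _ => 1) + Pi.single ⟨2, by omega⟩ 1), ?_, ?_⟩
    · rw [dotProduct_smul, fz_false]
      simp [Fin.ext_iff]
    · rw [forall_idx]
      refine ⟨fun j _ => ?_, fun h => absurd rfl h, fun _ => ?_⟩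
      · rw [dotProduct_smul, fz_inl, dz_inl, smul_eq_mul]
        have : (0 : ℝ) < 1 / ((n : ℝ) + 2) := by positivity
        have h2 : (0 : ℝ) < ((fun _ => 1) + Pi.single ⟨2, by omega⟩ 1 : Fin n → ℝ) j := by
          simp only [Pi.add_apply, Pi.single_apply]
          split_ifs <;> norm_num
        nlinarith [mul_pos this h2]
      · rw [dotProduct_smul, fz_true, dz_true, smul_eq_mul]
        simp only [Pi.add_apply, Finset.sum_add_distrib, Finset.sum_pi_single', Finset.mem_univ,
          if_true, Finset.sum_const, Finset.card_univ, Fintype.card_fin, nsmul_eq_mul, mul_one]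
        rw [one_div, inv_mul_lt_iff₀ hpos]
        linarith
  · refine ⟨(2 / ((n : ℝ) + 2)) • ((fun _ => 1) + Pi.single ⟨0, by omega⟩ 1 +
      Pi.single ⟨1, by omega⟩ 1), ?_, ?_⟩
    · rw [dotProduct_smul, fz_true, dz_true, smul_eq_mul]
      simp only [Pi.add_apply, Finset.sum_add_distrib, Finset.sum_pi_single', Finset.mem_univ,
        if_true, Finset.sum_const, Finset.card_univ, Fintype.card_fin, nsmul_eq_mul, mul_one]
      field_simp
      ring
    · rw [forall_idx]
      refine ⟨fun j _ => ?_, fun _ => ?_, fun h => absurd rfl h⟩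
      · rw [dotProduct_smul, fz_inl, dz_inl, smul_eq_mul]
        have : (0 : ℝ) < 2 / ((n : ℝ) + 2) := by positivity
        have h2 : (0 : ℝ) < ((fun _ => 1) + Pi.single ⟨0, by omega⟩ 1 +
          Pi.single ⟨1, by omega⟩ 1 : Fin n → ℝ) j := by
          simp only [Pi.add_apply, Pi.single_apply]
          split_ifs <;> norm_num
        nlinarith [mul_pos this h2]
      · rw [dotProduct_smul, fz_false, dz_false, smul_eq_mul]
        have : (0 : ℝ) < 2 / ((n : ℝ) + 2) := by positivity
        simp only [Pi.add_apply, Pi.single_apply, Fin.mk.injEq]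
        norm_num
        exact hpos

lemma spanDim_Pz (hn : 3 ≤ n) : spanDim (Pz hn) = n := by
  obtain ⟨x, hx⟩ := exists_interior hn
  have htop : (affineSpan ℝ (Pz hn)).direction = ⊤ := by
    rw [eq_top_iff]
    intro y _
    obtain ⟨ε, hε, h⟩ := exists_step (fz hn) dz x y (fun i => (hx i).le)
      (fun i h => absurd h (hx i).ne)
    exact mem_dir_of_step hε (fun i => (hx i).le) h
  unfold spanDim
  rw [htop, finrank_top, Module.finrank_fin_fun]

lemma fz_ne_zero (hn : 3 ≤ n) (i : Fin n ⊕ Bool) : fz hn i ≠ 0 := by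
  intro h
  obtain ⟨x, hx⟩ := exists_interior hn
  obtain ⟨y, hy, _⟩ := exists_relint hn i
  have := hx i
  rw [← hy, h, zero_dotProduct, zero_dotProduct] at this
  exact lt_irrefl _ this

/-- The facet given by an inequality. -/
abbrev Fz (hn : 3 ≤ n) (i : Fin n ⊕ Bool) : Set (Fin n → ℝ) := {x ∈ Pz hn | fz hn i ⬝ᵥ x = dz i}

lemma isFacet_Fz (hn : 3 ≤ n) (i : Fin n ⊕ Bool) : IsFacet (Pz hn) (Fz hn i) := by
  obtain ⟨x, hx, hxj⟩ := exists_relint hn i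
  have hxP : x ∈ Pz hn := by
    intro j
    by_cases h : j = i
    · rw [h, hx]
    · exact (hxj j h).le
  refine ⟨Or.inr ⟨fz hn i, dz i, fun y hy => hy i, ⟨x, hxP, hx⟩, rfl⟩, ?_⟩
  have hdir : (affineSpan ℝ (Fz hn i)).direction = kerDot (fz hn i) := by
    apply le_antisymm (dir_le_ker _ _)
    intro y hy
    rw [mem_kerDot] at hy
    obtain ⟨ε, hε, h⟩ := exists_step (fz hn) dz x y hxP (fun j hj => by
      by_cases h : j = i
      · rw [h, hy]
      · exact absurd hj (hxj j h).ne)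
    refine mem_dir_of_step hε (F := Fz hn i) ⟨hxP, hx⟩ ⟨h, ?_⟩
    rw [dotProduct_add, dotProduct_smul, hx, hy, smul_zero, add_zero]
  rw [spanDim_Pz hn]
  unfold spanDim
  rw [hdir]
  exact finrank_kerDot _ (fz_ne_zero hn i)

lemma Fz_inj (hn : 3 ≤ n) : Function.Injective (Fz hn) := by
  intro i k h
  by_contra hne
  obtain ⟨x, hx, hxj⟩ := exists_relint hn i
  have hxP : x ∈ Pz hn := by
    intro j
    by_cases h : j = i
    · rw [h, hx]
    · exact (hxj j h).le
  have : x ∈ Fz hn k := h ▸ (⟨hxP, hx⟩ : x ∈ Fz hn i)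
  exact (hxj k (Ne.symm hne)).ne this.2

lemma facets_eq (hn : 3 ≤ n) : {F | IsFacet (Pz hn) F} = Set.range (Fz hn) := by
  ext F
  constructor
  · intro hF
    obtain ⟨i, hi⟩ := facet_exists (fz hn) dz (spanDim_Pz hn) (isFacet_Fz hn) F hF
    exact ⟨i, hi.symm⟩
  · rintro ⟨i, rfl⟩
    exact isFacet_Fz hn i

lemma facets_ncard (hn : 3 ≤ n) : {F | IsFacet (Pz hn) F}.ncard = n + 2 := by
  rw [facets_eq, Set.ncard_range_of_injective (Fz_inj hn)]
  simp

/-! ### The simplex -/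

lemma simplexB_castSucc (m : ℕ) (x : Fin m → ℝ) (i : Fin m) :
    (simplexB m).mulVec x i.castSucc = - x i := by
  simp [simplexB, mulVec, dotProduct, ← Fin.ext_iff]

lemma simplexB_last (m : ℕ) (x : Fin m → ℝ) :
    (simplexB m).mulVec x (Fin.last m) = ∑ i, x i := by
  simp [simplexB, mulVec, dotProduct]

lemma mem_simplexSet (m : ℕ) (x : Fin m → ℝ) :
    x ∈ simplexSet m ↔ (∀ i, 0 ≤ x i) ∧ ∑ i, x i ≤ 1 := by
  have : x ∈ simplexSet m ↔ ∀ i, (simplexB m).mulVec x i ≤ simplexd m i := by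
    constructor
    · rintro ⟨_, h⟩; exact h
    · intro h; exact ⟨Subsingleton.elim _ _, h⟩
  rw [this, Fin.forall_fin_succ']
  simp [simplexB_castSucc, simplexB_last, simplexd]

lemma mulVec_piMat (n m : ℕ) (x : Fin m → ℝ) :
    (piMat n m).mulVec x = ∑ j : Fin m, x j • colv n j := by
  ext i
  simp only [mulVec, dotProduct, Finset.sum_apply, Pi.smul_apply, smul_eq_mul]
  exact Finset.sum_congr rfl fun j _ => mul_comm _ _

lemma dot_sum_colv (m : ℕ) (c : Fin n → ℝ) (x : Fin m → ℝ) :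
    c ⬝ᵥ (∑ j : Fin m, x j • colv n j) = ∑ j : Fin m, x j * (c ⬝ᵥ colv n j) := by
  rw [dotProduct_sum]
  simp [dotProduct_smul]

lemma image_eq (hn : 3 ≤ n) (m : ℕ) (hm : n < m) :
    (fun x => (piMat n m).mulVec x) '' simplexSet m = Pz hn := by
  ext x
  constructor
  · rintro ⟨l, hl, rfl⟩
    rw [mem_simplexSet] at hl
    intro i
    simp only [mulVec_piMat, dot_sum_colv]
    have hd : (0 : ℝ) ≤ dz i := by
      rcases i with i | _ | _ <;> simp
    calc ∑ j : Fin m, l j * (fz hn i ⬝ᵥ colv n j) ≤ ∑ j : Fin m, l j * dz i :=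
          Finset.sum_le_sum fun j _ => mul_le_mul_of_nonneg_left (colv_mem hn j i) (hl.1 j)
      _ = (∑ j : Fin m, l j) * dz i := by rw [Finset.sum_mul]
      _ ≤ dz i := by nlinarith [hl.2]
  · intro hx
    rw [mem_Pz] at hx
    obtain ⟨hx0, hxG, hxS⟩ := hx
    obtain ⟨p, hp0, hp1, hp2, hp3⟩ : ∃ p : ℝ, 0 ≤ p ∧ p ≤ x ⟨0, by omega⟩ ∧ p ≤ x ⟨2, by omega⟩ ∧
        x ⟨2, by omega⟩ - p ≤ x ⟨1, by omega⟩ := by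
      refine ⟨min (x ⟨0, by omega⟩) (x ⟨2, by omega⟩), le_min (hx0 _) (hx0 _), min_le_left _ _,
        min_le_right _ _, ?_⟩
      rcases le_total (x ⟨0, by omega⟩) (x ⟨2, by omega⟩) with h | h
      · rw [min_eq_left h]; linarith
      · rw [min_eq_right h]; linarith [hx0 ⟨1, by omega⟩]
    obtain ⟨L, hL⟩ : ∃ L : ℕ → ℝ, L = fun j => if j = 0 then (x ⟨0, by omega⟩ - p) / 2
      else if j = 1 then p
      else if j = 2 then (x ⟨1, by omega⟩ - (x ⟨2, by omega⟩ - p)) / 2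
      else if j = 3 then x ⟨2, by omega⟩ - p
      else if h : j - 1 < n then x ⟨j - 1, h⟩ / 2 else 0 := ⟨_, rfl⟩
    have hL0 : ∀ j, 0 ≤ L j := by
      intro j
      rw [hL]
      simp only
      split_ifs
      · linarith
      · linarith
      · linarith
      · linarith
      · linarith [hx0 ⟨j - 1, by assumption⟩]
      · exact le_rfl
    have hLbig : ∀ j, n < j → L j = 0 := by
      intro j hj
      rw [hL]
      simp only
      rw [if_neg (by omega), if_neg (by omega), if_neg (by omega), if_neg (by omega),
        dif_neg (by omega)]
    have hx' : x = ∑ j : Fin m, L j • colv n j := by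
      have key : ∀ i : Fin n, (∑ j : Fin m, L j • colv n j) i = ∑ j : Fin m, L j * colv n j i := by
        intro i; simp [Finset.sum_apply]
      have two : ∀ (a b : ℕ) (ha : a < m) (hb : b < m) (_ : a ≠ b) (F : Fin m → ℝ),
          (∀ j : Fin m, j.val ≠ a → j.val ≠ b → F j = 0) →
          ∑ j, F j = F ⟨a, ha⟩ + F ⟨b, hb⟩ := by
        intro a b ha hb hab F hF
        refine Fintype.sum_eq_add _ _ (by simpa [Fin.ext_iff] using hab) ?_
        rintro j ⟨h1, h2⟩
        exact hF j (fun h => h1 (Fin.ext h)) (fun h => h2 (Fin.ext h))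
      refine funext (forall_fin hn ?_ ?_ ?_ ?_)
      · rw [key]
        simp only [colv_c0 hn]
        rw [two 0 1 (by omega) (by omega) (by omega)]
        · simp [hL]
        · intro j h1 h2; simp [h1, h2]
      · rw [key]
        simp only [colv_c1 hn]
        rw [two 2 3 (by omega) (by omega) (by omega)]
        · simp [hL]
        · intro j h1 h2; simp [h1, h2]
      · rw [key]
        simp only [colv_c2 hn]
        rw [two 1 3 (by omega) (by omega) (by omega)]
        · simp [hL]
        · intro j h1 h2; simp [h1, h2]
      · intro i hi
        rw [key]
        simp only [colv_ci _ i hi]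
        rw [Finset.sum_eq_single (⟨i.val + 1, by omega⟩ : Fin m)]
        · have h1 : i.val + 1 ≠ 1 ∧ i.val + 1 ≠ 2 ∧ i.val + 1 ≠ 3 := by omega
          simp [hL, h1]
          intro h; omega
        · intro j _ hj
          rw [if_neg (fun h => hj (Fin.ext h.symm)), mul_zero]
        · simp
    refine ⟨fun j => L j, ?_, ?_⟩
    · rw [mem_simplexSet]
      refine ⟨fun j => hL0 j, ?_⟩
      have hsum : ∑ i, x i = ∑ j : Fin m, L j * 2 := by
        have := dot_sum_colv m (fz hn (Sum.inr true)) (fun j : Fin m => L j)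
        simp only [← hx', fz_true, sum_colv hn] at this
        rw [this]
        refine Finset.sum_congr rfl fun j _ => ?_
        split_ifs with h
        · rfl
        · rw [hLbig j (by omega)]; simp
      rw [← Finset.sum_mul] at hsum
      linarith
    · show (piMat n m).mulVec _ = x
      rw [mulVec_piMat, ← hx']

/-- Points of a face with at most one vertex. -/
lemma face_vertex (hn : 3 ≤ n) (c : Fin n → ℝ) (s : ℝ) (hcs : ∀ y ∈ Pz hn, c ⬝ᵥ y ≤ s)
    (x v : Fin n → ℝ) (hx : x ∈ Pz hn) (hxs : c ⬝ᵥ x = s)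
    (hv : ∀ j, j ≤ n + 1 → c ⬝ᵥ colv n j = s → colv n j = v) : x = v := by
  rw [← image_eq hn (n + 1) (by omega)] at hx
  obtain ⟨l, hl, rfl⟩ := hx
  rw [mem_simplexSet] at hl
  simp only [mulVec_piMat, dot_sum_colv] at hxs ⊢
  have hs0 : 0 ≤ s := by
    have := hcs _ (colv_mem hn (n + 1))
    rwa [colv_big hn _ (by omega), dotProduct_zero] at this
  have h1 : ∀ j : Fin (n + 1), 0 ≤ l j * (s - c ⬝ᵥ colv n j) := fun j =>
    mul_nonneg (hl.1 j) (by linarith [hcs _ (colv_mem hn j)])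
  have h2 : 0 ≤ (1 - ∑ j, l j) * s := mul_nonneg (by linarith [hl.2]) hs0
  have h3 : ∑ j : Fin (n + 1), l j * (s - c ⬝ᵥ colv n j) + (1 - ∑ j, l j) * s = 0 := by
    simp only [mul_sub, Finset.sum_sub_distrib, hxs, ← Finset.sum_mul]; ring
  have h4 : ∑ j : Fin (n + 1), l j * (s - c ⬝ᵥ colv n j) = 0 :=
    le_antisymm (by linarith) (Finset.sum_nonneg fun j _ => h1 j)
  have h5 : (1 - ∑ j, l j) * s = 0 := by linarith
  rw [Finset.sum_eq_zero_iff_of_nonneg (fun j _ => h1 j)] at h4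
  have h6 : ∀ j : Fin (n + 1), l j • colv n j = l j • v := by
    intro j
    rcases mul_eq_zero.mp (h4 j (Finset.mem_univ j)) with h | h
    · rw [h, zero_smul, zero_smul]
    · rw [hv j (by omega) (by linarith)]
  have h7 : (1 - ∑ j, l j) • v = 0 := by
    rcases mul_eq_zero.mp h5 with h | h
    · rw [h, zero_smul]
    · have := hv (n + 1) le_rfl (by rw [colv_big hn _ (by omega), dotProduct_zero, h])
      rw [← this, colv_big hn _ (by omega), smul_zero]
  rw [Finset.sum_congr rfl fun j _ => h6 j, ← Finset.sum_smul]
  rw [sub_smul, one_smul, sub_eq_zero] at h7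
  exact h7.symm

end concrete2

section concrete3

variable {n : ℕ}

lemma mem_simplexCircuits (m : ℕ) (g : Fin m → ℝ) : g ∈ simplexCircuits m ↔
    g ≠ 0 ∧ ∀ y : Fin m → ℝ, y ≠ 0 → (∀ i, g i = 0 → y i = 0) → (∑ i, g i = 0 → ∑ i, y i = 0) →
      (∀ i, y i = 0 → g i = 0) ∧ (∑ i, y i = 0 → ∑ i, g i = 0) := by
  have key : ∀ a b : Fin m → ℝ, {i | (simplexB m).mulVec a i ≠ 0} ⊆ {i | (simplexB m).mulVec b i ≠ 0}
      ↔ (∀ i, b i = 0 → a i = 0) ∧ (∑ i, b i = 0 → ∑ i, a i = 0) := by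
    intro a b
    have : {i | (simplexB m).mulVec a i ≠ 0} ⊆ {i | (simplexB m).mulVec b i ≠ 0} ↔
        ∀ i, (simplexB m).mulVec b i = 0 → (simplexB m).mulVec a i = 0 := by
      simp only [Set.subset_def]
      exact forall_congr' fun i => not_imp_not
    rw [this, Fin.forall_fin_succ']
    simp [simplexB_castSucc, simplexB_last]
  unfold simplexCircuits circuits
  constructor
  · rintro ⟨_, h0, h⟩
    exact ⟨h0, fun y hy h1 h2 => (key _ _).mp
      (h y (Subsingleton.elim _ _) hy ((key _ _).mpr ⟨h1, h2⟩))⟩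
  · rintro ⟨h0, h⟩
    refine ⟨Subsingleton.elim _ _, h0, fun y _ hy hs => (key _ _).mpr ?_⟩
    obtain ⟨h1, h2⟩ := (key _ _).mp hs
    exact h y hy h1 h2

lemma single_circuit (m : ℕ) (i : Fin m) (t : ℝ) (ht : t ≠ 0) :
    (Pi.single i t : Fin m → ℝ) ∈ simplexCircuits m := by
  rw [mem_simplexCircuits]
  refine ⟨by simpa using ht, fun y hy h1 _ => ?_⟩
  have hy' : y = Pi.single i (y i) := by
    ext j
    by_cases hj : j = i
    · subst hj; simp
    · rw [h1 j (by simp [hj])]; simp [hj]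
  have hyi : y i ≠ 0 := by
    intro h; rw [h, Pi.single_zero] at hy'; exact hy hy'
  rw [hy']
  constructor
  · intro j hj
    by_cases h : j = i
    · subst h; simp at hj; exact absurd hj hyi
    · simp [h]
  · intro h
    simp at h
    exact absurd h hyi

lemma diff_circuit (m : ℕ) (i j : Fin m) (hij : i ≠ j) (t : ℝ) (ht : t ≠ 0) :
    (Pi.single i t - Pi.single j t : Fin m → ℝ) ∈ simplexCircuits m := by
  rw [mem_simplexCircuits]
  refine ⟨fun h => ?_, fun y hy h1 h2 => ?_⟩
  · have := congrFun h i
    simp [hij] at this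
    exact ht this
  have h2' : ∑ k, y k = 0 := h2 (by simp)
  have hsum : ∑ k, y k = y i + y j := by
    refine Fintype.sum_eq_add _ _ hij ?_
    rintro k ⟨hki, hkj⟩
    exact h1 k (by simp [hki, hkj])
  have hyj : y j = - y i := by linarith
  have hyi : y i ≠ 0 := by
    intro h
    apply hy
    ext k
    by_cases hki : k = i
    · rw [hki, h]; rfl
    · by_cases hkj : k = j
      · rw [hkj, hyj, h]; simp
      · exact h1 k (by simp [hki, hkj])
  constructor
  · intro k hk
    by_cases hki : k = i
    · rw [hki] at hk; exact absurd hk hyi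
    · by_cases hkj : k = j
      · rw [hkj, hyj, neg_eq_zero] at hk; exact absurd hk hyi
      · simp [hki, hkj]
  · intro _; simp

lemma circuit_cases (m : ℕ) (g : Fin m → ℝ) (hg : g ∈ simplexCircuits m) :
    (∃ i t, g = Pi.single i t) ∨ ∃ i j t, g = Pi.single i t - Pi.single j t := by
  rw [mem_simplexCircuits] at hg
  obtain ⟨h0, h⟩ := hg
  obtain ⟨i, hi⟩ := Function.ne_iff.mp h0
  by_cases hone : ∀ j, j ≠ i → g j = 0
  · left
    refine ⟨i, g i, ?_⟩
    ext j
    by_cases hj : j = i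
    · subst hj; simp
    · rw [hone j hj]; simp [hj]
  · right
    push Not at hone
    obtain ⟨j, hji, hj⟩ := hone
    have hi' : g i ≠ 0 := hi
    obtain ⟨h1, h2⟩ := h (Pi.single i 1 - Pi.single j 1) (by
        intro h
        have := congrFun h i
        simp [hji.symm] at this)
      (by
        intro k hk
        have hki : k ≠ i := fun e => hi' (e ▸ hk)
        have hkj : k ≠ j := fun e => hj (e ▸ hk)
        simp [hki, hkj])
      (by simp)
    have hs := h2 (by simp)
    have hsum : ∑ k, g k = g i + g j := by
      refine Fintype.sum_eq_add _ _ hji.symm ?_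
      rintro k ⟨hki, hkj⟩
      exact h1 k (by simp [hki, hkj])
    refine ⟨i, j, g i, ?_⟩
    ext k
    by_cases hki : k = i
    · rw [hki]; simp [hji.symm]
    · by_cases hkj : k = j
      · rw [hkj]; simp [hji]; linarith
      · rw [h1 k (by simp [hki, hkj])]; simp [hki, hkj]

lemma pi_single (m : ℕ) (i : Fin m) (t : ℝ) :
    (piMat n m).mulVec (Pi.single i t) = t • colv n i := by
  rw [mulVec_piMat, Finset.sum_eq_single i]
  · simp
  · intro j _ hj; simp [hj]
  · simp

lemma colv_min (hn : 3 ≤ n) (j : ℕ) : colv n j = colv n (min j (n + 1)) := by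
  by_cases h : j ≤ n + 1
  · rw [min_eq_left h]
  · rw [min_eq_right (by omega), colv_big hn j (by omega), colv_big hn _ (by omega)]

lemma circ_image (hn : 3 ≤ n) (m : ℕ) (hm : n < m) (h : Fin n → ℝ) (h0 : h ≠ 0) :
    h ∈ (fun x => (piMat n m).mulVec x) '' simplexCircuits m ↔
      ∃ j k : ℕ, j ≤ n + 1 ∧ k ≤ n + 1 ∧ ∃ t : ℝ, h = t • (colv n k - colv n j) := by
  constructor
  · rintro ⟨g, hg, rfl⟩
    rcases circuit_cases m g hg with ⟨i, t, rfl⟩ | ⟨i, j, t, rfl⟩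
    · refine ⟨n + 1, min i (n + 1), le_rfl, min_le_right _ _, t, ?_⟩
      simp only [pi_single]
      rw [← colv_min hn, colv_big hn (n + 1) (by omega), sub_zero]
    · refine ⟨min j (n + 1), min i (n + 1), min_le_right _ _, min_le_right _ _, t, ?_⟩
      simp only [mulVec_sub, pi_single]
      rw [← colv_min hn, ← colv_min hn, smul_sub]
  · rintro ⟨j, k, hj, hk, t, rfl⟩
    have ht : t ≠ 0 := by rintro rfl; simp at h0
    have hjk : j ≠ k := by rintro rfl; simp at h0
    by_cases hj' : j = n + 1
    · refine ⟨Pi.single ⟨k, by omega⟩ t, single_circuit _ _ _ ht, ?_⟩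
      simp only [pi_single]
      rw [hj', colv_big hn (n + 1) (by omega), sub_zero]
    · by_cases hk' : k = n + 1
      · refine ⟨Pi.single ⟨j, by omega⟩ (-t), single_circuit _ _ _ (neg_ne_zero.mpr ht), ?_⟩
        simp only [pi_single]
        rw [hk', colv_big hn (n + 1) (by omega), zero_sub, smul_neg, neg_smul]
      · refine ⟨Pi.single ⟨k, by omega⟩ t - Pi.single ⟨j, by omega⟩ t,
          diff_circuit _ _ _ (by simpa [Fin.ext_iff] using hjk.symm) _ ht, ?_⟩
        simp only [mulVec_sub, pi_single]
        rw [smul_sub]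

/-- The circuits of the polytope, via the standard facet normals. -/
def CZ (hn : 3 ≤ n) : Set (Fin n → ℝ) :=
  {g | g ≠ 0 ∧ ∀ y : Fin n → ℝ, y ≠ 0 → (∀ i, fz hn i ⬝ᵥ g = 0 → fz hn i ⬝ᵥ y = 0) →
    ∀ i, fz hn i ⬝ᵥ y = 0 → fz hn i ⬝ᵥ g = 0}

lemma circuits_eq (hn : 3 ≤ n) {p q : ℕ} (A : Matrix (Fin p) (Fin n) ℝ) (b : Fin p → ℝ)
    (B : Matrix (Fin q) (Fin n) ℝ) (d : Fin q → ℝ) (h : Irredundant A b B d (Pz hn)) :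
    circuits A B = CZ hn := by
  obtain ⟨hP, hA, hF⟩ := h
  have htop : (affineSpan ℝ (Pz hn)) = ⊤ := by
    have hne : (affineSpan ℝ (Pz hn) : Set (Fin n → ℝ)).Nonempty :=
      ⟨_, subset_affineSpan ℝ _ (colv_mem hn 0)⟩
    rw [← AffineSubspace.direction_eq_top_iff_of_nonempty hne]
    apply Submodule.eq_top_of_finrank_eq
    rw [Module.finrank_fin_fun]
    exact spanDim_Pz hn
  have hAx : ∀ x, A.mulVec x = b := by
    intro x
    have : x ∈ {x | A.mulVec x = b} := by
      rw [hA, htop]; trivial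
    exact this
  have hA0 : ∀ x, A.mulVec x = 0 := by
    intro x
    rw [hAx x, ← hAx 0, mulVec_zero]
  have hP' : Pz hn = ineqSet (fun i => B i) d := by
    rw [hP]
    ext x
    exact ⟨fun hx => hx.2, fun hx => ⟨hAx x, hx⟩⟩
  have hF' : ∀ i, IsFacet (Pz hn) {x ∈ Pz hn | (fun i => B i) i ⬝ᵥ x = d i} := hF
  have pat : ∀ g y : Fin n → ℝ, {i | B.mulVec y i ≠ 0} ⊆ {i | B.mulVec g i ≠ 0} ↔
      ∀ i, fz hn i ⬝ᵥ g = 0 → fz hn i ⬝ᵥ y = 0 := by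
    intro g y
    rw [zero_pattern (by omega) (fz hn) dz rfl (spanDim_Pz hn) (isFacet_Fz hn) g y,
      ← zero_pattern (by omega) (fun i => B i) d hP' (spanDim_Pz hn) hF' g y]
    simp only [Set.subset_def]
    exact forall_congr' fun i => not_imp_not
  ext g
  constructor
  · rintro ⟨_, h0, h⟩
    exact ⟨h0, fun y hy hs => (pat _ _).mp (h y (hA0 y) hy ((pat _ _).mpr hs))⟩
  · rintro ⟨h0, h⟩
    exact ⟨hA0 g, h0, fun y _ hy hs => (pat _ _).mpr (h y hy ((pat _ _).mp hs))⟩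

lemma colv_ne (hn : 3 ≤ n) {j k : ℕ} (hj : j ≤ n + 1) (hk : k ≤ n + 1) (hjk : j ≠ k) :
    colv n k - colv n j ≠ 0 := by
  intro h
  rw [sub_eq_zero] at h
  exact hjk (colv_inj hn j k hj hk fun i _ => by rw [h])

lemma circ_nondiag (hn : 3 ≤ n) (j k : ℕ) (hd : Nondiag j k) (t : ℝ)
    (h0 : t • (colv n k - colv n j) ≠ 0) : t • (colv n k - colv n j) ∈ CZ hn := by
  refine ⟨h0, fun y hy hs i hi => ?_⟩
  obtain ⟨r, rfl⟩ := line_pair_lin hn j k hd y (fun i h1 h2 => hs i (by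
    rw [dotProduct_smul, dotProduct_sub, h1, h2, sub_self, smul_zero]))
  have hr : r ≠ 0 := by rintro rfl; simp at hy
  rw [dotProduct_smul, smul_eq_mul] at hi ⊢
  rcases mul_eq_zero.mp hi with h | h
  · exact absurd h hr
  · rw [h, mul_zero]

lemma diag_not (hn : 3 ≤ n) (j k : ℕ) (hd : ¬ Nondiag j k) (t : ℝ) :
    t • (colv n k - colv n j) ∉ CZ hn := by
  have h03 : ∀ t : ℝ, t • (colv n 3 - colv n 0) ∉ CZ hn := by
    rintro t ⟨h0, h⟩
    have ht : t ≠ 0 := by rintro rfl; simp at h0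
    have := h (colv n 1 - colv n 0) (colv_ne hn (by omega) (by omega) (by omega)) (by
      rw [forall_idx]
      refine ⟨forall_fin hn ?_ ?_ ?_ ?_, ?_, ?_⟩
      · simp [dotProduct_smul, colv_c0 hn, ht]
      · simp [dotProduct_smul, colv_c1 hn, ht]
      · simp [dotProduct_smul, colv_c2 hn, ht]
      · intro i hi
        have h1 : i.val + 1 ≠ 0 ∧ i.val + 1 ≠ 1 ∧ i.val + 1 ≠ 2 ∧ i.val + 1 ≠ 3 := by omega
        simp only [fz_inl, Pi.sub_apply, colv_ci _ i hi, h1, if_false, sub_zero, neg_zero,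
          implies_true]
      · simp [dotProduct_smul, colv_c0 hn, colv_c1 hn, colv_c2 hn, ht]; try norm_num
      · simp [dotProduct_smul, dotProduct_sub, sum_colv hn]
        intro _; rw [if_pos (by omega)]; simp) (Sum.inl ⟨1, by omega⟩)
    simp [dotProduct_smul, colv_c1 hn, ht] at this
  have h12 : ∀ t : ℝ, t • (colv n 2 - colv n 1) ∉ CZ hn := by
    rintro t ⟨h0, h⟩
    have ht : t ≠ 0 := by rintro rfl; simp at h0
    have := h (colv n 3 - colv n 2) (colv_ne hn (by omega) (by omega) (by omega)) (by
      rw [forall_idx]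
      refine ⟨forall_fin hn ?_ ?_ ?_ ?_, ?_, ?_⟩
      · simp [dotProduct_smul, colv_c0 hn, ht]
      · simp [dotProduct_smul, colv_c1 hn, ht]
      · simp [dotProduct_smul, colv_c2 hn, ht]
      · intro i hi
        have h1 : i.val + 1 ≠ 0 ∧ i.val + 1 ≠ 1 ∧ i.val + 1 ≠ 2 ∧ i.val + 1 ≠ 3 := by omega
        simp only [fz_inl, Pi.sub_apply, colv_ci _ i hi, h1, if_false, sub_zero, neg_zero,
          implies_true]
      · simp [dotProduct_smul, colv_c0 hn, colv_c1 hn, colv_c2 hn, ht]; try norm_num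
      · simp [dotProduct_smul, dotProduct_sub, sum_colv hn]
        intro _; rw [if_pos (by omega), if_pos (by omega)]; simp) (Sum.inl ⟨0, by omega⟩)
    simp [dotProduct_smul, colv_c0 hn, ht] at this
  unfold Nondiag at hd
  rcases (by omega : (j = 0 ∧ k = 3) ∨ (j = 3 ∧ k = 0) ∨ (j = 1 ∧ k = 2) ∨ (j = 2 ∧ k = 1)) with
    ⟨rfl, rfl⟩ | ⟨rfl, rfl⟩ | ⟨rfl, rfl⟩ | ⟨rfl, rfl⟩
  · exact h03 t
  · have := h03 (-t)
    rwa [neg_smul, ← smul_neg, neg_sub] at this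
  · exact h12 t
  · have := h12 (-t)
    rwa [neg_smul, ← smul_neg, neg_sub] at this

/-- The smallest face containing two vertices. -/
abbrev pairFace (hn : 3 ≤ n) (j k : ℕ) : Set (Fin n → ℝ) :=
  {x ∈ Pz hn | ∀ i ∈ {i | fz hn i ⬝ᵥ colv n j = dz i ∧ fz hn i ⬝ᵥ colv n k = dz i},
    fz hn i ⬝ᵥ x = dz i}

lemma pairFace_isFace (hn : 3 ≤ n) (j k : ℕ) : IsFace (Pz hn) (pairFace hn j k) :=
  isFace_tight (fz hn) dz _ (colv n j) (colv_mem hn j) fun _ hi => hi.1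

lemma left_mem (hn : 3 ≤ n) (j k : ℕ) : colv n j ∈ pairFace hn j k :=
  ⟨colv_mem hn j, fun _ hi => hi.1⟩

lemma right_mem (hn : 3 ≤ n) (j k : ℕ) : colv n k ∈ pairFace hn j k :=
  ⟨colv_mem hn k, fun _ hi => hi.2⟩

lemma pairFace_line (hn : 3 ≤ n) (j k : ℕ) (hd : Nondiag j k) (x : Fin n → ℝ)
    (hx : x ∈ pairFace hn j k) : ∃ t : ℝ, x = colv n j + t • (colv n k - colv n j) :=
  line_pair hn j k hd x fun i h1 h2 => hx.2 i ⟨h1, h2⟩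

lemma edge_nondiag (hn : 3 ≤ n) (j k : ℕ) (hd : Nondiag j k) (t : ℝ)
    (h0 : t • (colv n k - colv n j) ≠ 0) : IsEdgeDirection (Pz hn) (t • (colv n k - colv n j)) := by
  have hne : colv n k - colv n j ≠ 0 := by intro h; simp [h] at h0
  have hdir : (affineSpan ℝ (pairFace hn j k)).direction =
      Submodule.span ℝ {colv n k - colv n j} := by
    apply le_antisymm
    · apply dir_le
      intro x hx y hy
      obtain ⟨r, rfl⟩ := pairFace_line hn j k hd x hx
      obtain ⟨r', rfl⟩ := pairFace_line hn j k hd y hy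
      rw [add_sub_add_left_eq_sub, ← sub_smul]
      exact Submodule.smul_mem _ _ (Submodule.mem_span_singleton_self _)
    · rw [Submodule.span_singleton_le_iff_mem]
      exact sub_mem_dir (right_mem hn j k) (left_mem hn j k)
  refine ⟨h0, pairFace hn j k, ⟨pairFace_isFace hn j k, ?_⟩, ?_⟩
  · unfold spanDim
    rw [hdir, finrank_span_singleton hne]
  · rw [hdir]
    exact Submodule.smul_mem _ _ (Submodule.mem_span_singleton_self _)

lemma edge_conv (hn : 3 ≤ n) (g : Fin n → ℝ) (hg : IsEdgeDirection (Pz hn) g) :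
    ∃ j k : ℕ, j ≤ n + 1 ∧ k ≤ n + 1 ∧ Nondiag j k ∧ ∃ t : ℝ, g = t • (colv n k - colv n j) := by
  obtain ⟨h0, F, ⟨hF, hdim⟩, hgF⟩ := hg
  rcases hF with rfl | ⟨c, s, hcs, ⟨y, hy, hys⟩, rfl⟩
  · rw [spanDim_Pz] at hdim; omega
  set F := {x ∈ Pz hn | c ⬝ᵥ x = s} with hFdef
  have par : ∀ j k : ℕ, j ≤ n + 1 → k ≤ n + 1 → j ≠ k → c ⬝ᵥ colv n j = s → c ⬝ᵥ colv n k = s →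
      ∀ w ∈ (affineSpan ℝ F).direction, ∃ t : ℝ, w = t • (colv n k - colv n j) := by
    intro j k hj hk hjk hjs hks w hw
    have hm : colv n k - colv n j ∈ (affineSpan ℝ F).direction :=
      sub_mem_dir (F := F) ⟨colv_mem hn k, hks⟩ ⟨colv_mem hn j, hjs⟩
    have hle : Submodule.span ℝ {colv n k - colv n j} ≤ (affineSpan ℝ F).direction := by
      rwa [Submodule.span_singleton_le_iff_mem]
    have heq := Submodule.eq_of_le_of_finrank_eq hle (by
      rw [finrank_span_singleton (colv_ne hn hj hk hjk)]; exact hdim.symm)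
    rw [← heq] at hw
    obtain ⟨t, ht⟩ := Submodule.mem_span_singleton.mp hw
    exact ⟨t, ht.symm⟩
  obtain ⟨j, hj, hjs⟩ : ∃ j, j ≤ n + 1 ∧ c ⬝ᵥ colv n j = s := by
    by_contra! hcon
    have h1 := face_vertex hn c s hcs y 0 hy hys (fun j hj h => absurd h (hcon j hj))
    have h2 := face_vertex hn c s hcs y (colv n 0) hy hys (fun j hj h => absurd h (hcon j hj))
    apply colv_ne hn (j := n + 1) (k := 0) (by omega) (by omega) (by omega)
    rw [← h2, h1, colv_big hn _ (by omega), sub_zero]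
  obtain ⟨k, hk, hks, hjk⟩ : ∃ k, k ≤ n + 1 ∧ c ⬝ᵥ colv n k = s ∧ j ≠ k := by
    by_contra! hcon
    have hall : ∀ x ∈ F, x = colv n j := by
      rintro x ⟨hx, hxs⟩
      exact face_vertex hn c s hcs x _ hx hxs (fun k hk h => by rw [hcon k hk h])
    have hbot : (affineSpan ℝ F).direction ≤ ⊥ := by
      apply dir_le
      intro x hx y hy
      rw [hall x hx, hall y hy, sub_self]
      exact Submodule.zero_mem _
    have := hbot hgF
    exact h0 (by simpa using this)
  obtain ⟨t, ht⟩ := par j k hj hk hjk hjs hks g hgF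
  refine ⟨j, k, hj, hk, ?_, t, ht⟩
  -- the diagonals intersect
  have hrel : (2 : ℝ) • colv n 1 + colv n 2 = (2 : ℝ) • colv n 3 + colv n 0 := by
    refine funext (forall_fin hn ?_ ?_ ?_ ?_)
    · simp [colv_c0 hn]
    · simp [colv_c1 hn]
    · simp [colv_c2 hn]
    · intro i hi
      have : i.val + 1 ≠ 1 ∧ i.val + 1 ≠ 2 ∧ i.val + 1 ≠ 3 := by omega
      simp only [Pi.add_apply, Pi.smul_apply, colv_ci _ i hi, this, if_false]
      simp
  have hrelc : 2 * (c ⬝ᵥ colv n 1) + c ⬝ᵥ colv n 2 = 2 * (c ⬝ᵥ colv n 3) + c ⬝ᵥ colv n 0 := by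
    have := congrArg (fun z => c ⬝ᵥ z) hrel
    simpa [dotProduct_add, dotProduct_smul] using this
  have b0 := hcs _ (colv_mem hn 0)
  have b1 := hcs _ (colv_mem hn 1)
  have b2 := hcs _ (colv_mem hn 2)
  have b3 := hcs _ (colv_mem hn 3)
  by_contra hd
  have hall : c ⬝ᵥ colv n 0 = s ∧ c ⬝ᵥ colv n 1 = s ∧ c ⬝ᵥ colv n 3 = s := by
    unfold Nondiag at hd
    rcases (by omega : (j = 0 ∧ k = 3) ∨ (j = 3 ∧ k = 0) ∨ (j = 1 ∧ k = 2) ∨ (j = 2 ∧ k = 1)) with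
      ⟨rfl, rfl⟩ | ⟨rfl, rfl⟩ | ⟨rfl, rfl⟩ | ⟨rfl, rfl⟩
    all_goals refine ⟨?_, ?_, ?_⟩ <;> linarith
  obtain ⟨r, hr⟩ := par 0 1 (by omega) (by omega) (by omega) hall.1 hall.2.1
    (colv n 3 - colv n 0)
    (sub_mem_dir (F := F) ⟨colv_mem hn 3, hall.2.2⟩ ⟨colv_mem hn 0, hall.1⟩)
  have := congrFun hr ⟨1, by omega⟩
  simp [colv_c1 hn] at this

lemma vertices_eq (hn : 3 ≤ n) :
    {v | IsVertex (Pz hn) v} = Set.range (fun j : Fin (n + 2) => colv n j) := by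
  ext v
  constructor
  · rintro (h | ⟨c, s, hcs, ⟨y, hy, hys⟩, hF⟩)
    · have h0 := colv_mem hn 0
      have h1 := colv_mem hn 1
      rw [← h] at h0 h1
      exfalso
      apply colv_ne hn (j := 0) (k := 1) (by omega) (by omega) (by omega)
      rw [Set.mem_singleton_iff.mp h0, Set.mem_singleton_iff.mp h1, sub_self]
    · obtain ⟨j, hj, hjs⟩ : ∃ j, j ≤ n + 1 ∧ c ⬝ᵥ colv n j = s := by
        by_contra! hcon
        have h1 := face_vertex hn c s hcs y 0 hy hys (fun j hj h => absurd h (hcon j hj))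
        have h2 := face_vertex hn c s hcs y (colv n 0) hy hys (fun j hj h => absurd h (hcon j hj))
        apply colv_ne hn (j := n + 1) (k := 0) (by omega) (by omega) (by omega)
        rw [← h2, h1, colv_big hn _ (by omega), sub_zero]
      have hmem : colv n j ∈ ({v} : Set (Fin n → ℝ)) := by
        rw [hF]; exact ⟨colv_mem hn j, hjs⟩
      exact ⟨⟨j, by omega⟩, hmem⟩
  · rintro ⟨j, rfl⟩
    show IsFace (Pz hn) _
    have : ({colv n j} : Set (Fin n → ℝ)) = pairFace hn j j := by
      ext x
      constructor
      · intro hx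
        rw [Set.mem_singleton_iff.mp hx]
        exact left_mem hn j j
      · intro hx
        obtain ⟨t, ht⟩ := pairFace_line hn j j (by unfold Nondiag; omega) x hx
        rw [sub_self, smul_zero, add_zero] at ht
        exact ht
    rw [this]
    exact pairFace_isFace hn j j

lemma vertices_ncard (hn : 3 ≤ n) : {v | IsVertex (Pz hn) v}.ncard = n + 2 := by
  rw [vertices_eq, Set.ncard_range_of_injective]
  · simp
  · intro j k h
    exact Fin.ext (colv_inj hn j k (by omega) (by omega) fun i _ => congrFun h i)

lemma e2_circ (hn : 3 ≤ n) : (Pi.single ⟨2, by omega⟩ 1 : Fin n → ℝ) ∈ CZ hn := by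
  refine ⟨by simp, fun y hy hs i hi => ?_⟩
  have hy' : y = (y ⟨2, by omega⟩) • (Pi.single ⟨2, by omega⟩ 1 : Fin n → ℝ) := by
    ext j
    by_cases hj : j = ⟨2, by omega⟩
    · rw [hj]; simp
    · have := hs (Sum.inl j) (by rw [fz_inl]; simp [hj])
      rw [fz_inl, neg_eq_zero] at this
      rw [this]; simp [hj]
  have hr : y ⟨2, by omega⟩ ≠ 0 := by
    intro h; rw [h, zero_smul] at hy'; exact hy hy'
  rw [hy', dotProduct_smul, smul_eq_mul] at hi
  exact (mul_eq_zero.mp hi).resolve_left hr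

lemma e2_not (hn : 3 ≤ n) (j k : ℕ) (hj : j ≤ n + 1) (hk : k ≤ n + 1) (t : ℝ) :
    (Pi.single ⟨2, by omega⟩ 1 : Fin n → ℝ) ≠ t • (colv n k - colv n j) := by
  intro h
  have ht : t ≠ 0 := by
    rintro rfl
    have := congrFun h ⟨2, by omega⟩
    simp at this
  have hjk : j = k := by
    refine colv_inj hn j k hj hk fun i hi => ?_
    have h1 := congrFun h i
    have h2 : i ≠ ⟨2, by omega⟩ := fun e => hi (by rw [e])
    rw [Pi.single_eq_of_ne h2, Pi.smul_apply, smul_eq_mul, Pi.sub_apply] at h1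
    have := (mul_eq_zero.mp h1.symm).resolve_left ht
    linarith
  have := congrFun h ⟨2, by omega⟩
  simp [hjk] at this

lemma Pz_bounded (hn : 3 ≤ n) : Bornology.IsBounded (Pz hn) := by
  refine (Metric.isBounded_Icc (0 : Fin n → ℝ) (fun _ => 2)).subset ?_
  intro x hx
  rw [mem_Pz] at hx
  refine ⟨fun i => hx.1 i, fun i => ?_⟩
  exact (Finset.single_le_sum (fun j _ => hx.1 j) (Finset.mem_univ i)).trans hx.2.2

lemma Pz_poly (hn : 3 ≤ n) : ∃ (q : ℕ) (B : Matrix (Fin q) (Fin n) ℝ) (d : Fin q → ℝ),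
    Pz hn = polySet (0 : Matrix (Fin 0) (Fin n) ℝ) 0 B d := by
  let e := Fintype.equivFin (Fin n ⊕ Bool)
  refine ⟨_, fun i => fz hn (e.symm i), fun i => dz (e.symm i), ?_⟩
  ext x
  constructor
  · intro hx
    exact ⟨Subsingleton.elim _ _, fun i => hx (e.symm i)⟩
  · rintro ⟨_, hx⟩ i
    have := hx (e i)
    simp only [mulVec, Equiv.symm_apply_apply] at this
    exact this

end concrete3

/-- `P_n := π_{n,m}(S_m)` is a full-dimensional polytope with exactly `n+2` facets
and exactly `n+2` vertices, and for every irredundant description of `P_n`: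
`C(P_n) ⊄ π(C(S_m))`, and `C(P_n) ∩ π(C(S_m))` is exactly the set of edge directions. -/
theorem stmt_7 (n m : ℕ) (hn : 3 ≤ n) (hm : n < m) :
    -- P_n is a polytope: a bounded polyhedron
    (∃ (q : ℕ) (B : Matrix (Fin q) (Fin n) ℝ) (d : Fin q → ℝ),
      (fun x => (piMat n m).mulVec x) '' simplexSet m =
        polySet (0 : Matrix (Fin 0) (Fin n) ℝ) 0 B d) ∧
    Bornology.IsBounded ((fun x => (piMat n m).mulVec x) '' simplexSet m) ∧
    -- full-dimensional
    spanDim ((fun x => (piMat n m).mulVec x) '' simplexSet m) = n ∧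
    -- exactly n+2 facets and n+2 vertices
    {F | IsFacet ((fun x => (piMat n m).mulVec x) '' simplexSet m) F}.ncard = n + 2 ∧
    {v | IsVertex ((fun x => (piMat n m).mulVec x) '' simplexSet m) v}.ncard = n + 2 ∧
    -- for every irredundant description
    (∀ (p q : ℕ) (A : Matrix (Fin p) (Fin n) ℝ) (b : Fin p → ℝ)
        (B : Matrix (Fin q) (Fin n) ℝ) (d : Fin q → ℝ),
      Irredundant A b B d ((fun x => (piMat n m).mulVec x) '' simplexSet m) →
        ¬ (circuits A B ⊆ (fun x => (piMat n m).mulVec x) '' simplexCircuits m) ∧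
        circuits A B ∩ (fun x => (piMat n m).mulVec x) '' simplexCircuits m =
          {g | IsEdgeDirection ((fun x => (piMat n m).mulVec x) '' simplexSet m) g}) := by
  rw [image_eq hn m hm]
  refine ⟨Pz_poly hn, Pz_bounded hn, spanDim_Pz hn, facets_ncard hn, vertices_ncard hn, ?_⟩
  intro p q A b B d hirr
  rw [circuits_eq hn A b B d hirr]
  constructor
  · intro hsub
    obtain ⟨j, k, hj, hk, t, h⟩ := (circ_image hn m hm _ (e2_circ hn).1).mp (hsub (e2_circ hn))
    exact e2_not hn j k hj hk t h
  · ext g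
    constructor
    · rintro ⟨hg, hgi⟩
      obtain ⟨j, k, hj, hk, t, rfl⟩ := (circ_image hn m hm _ hg.1).mp hgi
      have hd : Nondiag j k := by
        by_contra hd
        exact diag_not hn j k hd t hg
      exact edge_nondiag hn j k hd t hg.1
    · intro hg
      have h0 : g ≠ 0 := hg.1
      obtain ⟨j, k, hj, hk, hd, t, rfl⟩ := edge_conv hn g hg
      exact ⟨circ_nondiag hn j k hd t h0, (circ_image hn m hm _ h0).mpr ⟨j, k, hj, hk, t, rfl⟩⟩
end
end

section
/- For all m, n ∈ ℕ with m > n ≥ 3, there exist full-dimensional pointed polyhedra P ⊂ ℝⁿ and Q ⊂ ℝᵐ, each equipped with an irredundant description, and a linear map π : ℝᵐ → ℝⁿ with π(Q) = P such that C(P) ⊄ π(C(Q)) and C(P) ∩ π(C(Q)) equals exactly the set of edge directions of P. Moreover, this can be achieved with Q a simple polyhedron and with P a polytope having exactly n+2 facets and exactly n+2 vertices, as well as (by a second choice of P, Q, π) with Q simple and P a pointed polyhedral cone having exactly n+1 facets and exactly n+1 extreme rays (edges). -/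
open Matrix

noncomputable section

set_option linter.unusedSectionVars false

section General

variable {n ι : Type} [Fintype n] [Fintype ι] (φ : ι → ((n → ℝ) →ₗ[ℝ] ℝ)) (d : ι → ℝ)

def Pol : Set (n → ℝ) := {x | ∀ k, φ k x ≤ d k}

/-- directions annihilated by the rows tight at `x` -/
def tker (x : n → ℝ) : Submodule ℝ (n → ℝ) where
  carrier := {g | ∀ k, φ k x = d k → φ k g = 0}
  zero_mem' := by intro k _; simp
  add_mem' := by
    intro a b ha hb k hk
    simp [ha k hk, hb k hk]
  smul_mem' := by
    intro c a ha k hk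
    simp [ha k hk]

def FF (x : n → ℝ) : Set (n → ℝ) := {y | y ∈ Pol φ d ∧ ∀ k, φ k x = d k → φ k y = d k}

def circ (g : n → ℝ) : Prop :=
  g ≠ 0 ∧ ∀ y, (∀ k, φ k g = 0 → φ k y = 0) → ∃ t : ℝ, y = t • g

def edir (g : n → ℝ) : Prop :=
  g ≠ 0 ∧ ∃ x ∈ Pol φ d, g ∈ tker φ d x ∧ ∀ y ∈ tker φ d x, ∃ t : ℝ, y = t • g

variable {φ d}

lemma mem_tker {x g : n → ℝ} : g ∈ tker φ d x ↔ ∀ k, φ k x = d k → φ k g = 0 := Iff.rfl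

lemma perturb {x g : n → ℝ} (hx : x ∈ Pol φ d) (hg : g ∈ tker φ d x) :
    ∃ ε : ℝ, 0 < ε ∧ x + ε • g ∈ Pol φ d ∧ x - ε • g ∈ Pol φ d := by
  have key : ∀ᶠ t : ℝ in nhds 0, ∀ k, φ k x + t * φ k g ≤ d k ∧ φ k x - t * φ k g ≤ d k := by
    rw [Filter.eventually_all]
    intro k
    rcases eq_or_lt_of_le (hx k) with h | h
    · filter_upwards with t
      rw [hg k h]; simp [h]
    · have h1 : ContinuousAt (fun t : ℝ => φ k x + t * φ k g) 0 := by fun_prop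
      have h2 : ContinuousAt (fun t : ℝ => φ k x - t * φ k g) 0 := by fun_prop
      have e1 := h1.eventually_lt (continuousAt_const (y := d k)) (by simpa using h)
      have e2 := h2.eventually_lt (continuousAt_const (y := d k)) (by simpa using h)
      filter_upwards [e1, e2] with t a b
      exact ⟨a.le, b.le⟩
  rw [Metric.eventually_nhds_iff] at key
  obtain ⟨ε, hε, h⟩ := key
  have := h (y := ε / 2) (by rw [Real.dist_eq, sub_zero, abs_of_pos (by positivity)]; linarith)
  refine ⟨ε / 2, by positivity, fun k => ?_, fun k => ?_⟩
  · simpa using (this k).1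
  · simpa using (this k).2

lemma self_mem_FF {x : n → ℝ} (hx : x ∈ Pol φ d) : x ∈ FF φ d x := ⟨hx, fun _ h => h⟩

lemma dir_FF {x : n → ℝ} (hx : x ∈ Pol φ d) :
    (affineSpan ℝ (FF φ d x)).direction = tker φ d x := by
  apply le_antisymm
  · rw [direction_affineSpan, vectorSpan, Submodule.span_le]
    rintro _ ⟨a, ha, b, hb, rfl⟩
    intro k hk
    have h1 := ha.2 k hk
    have h2 := hb.2 k hk
    simp [h1, h2]
  · intro g hg
    obtain ⟨ε, hε, h1, h2⟩ := perturb hx hg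
    have hy : x + ε • g ∈ FF φ d x := ⟨h1, fun k hk => by simp [hg k hk, hk]⟩
    have := AffineSubspace.vsub_mem_direction (mem_affineSpan ℝ hy)
      (mem_affineSpan ℝ (self_mem_FF hx))
    have h3 := Submodule.smul_mem _ ε⁻¹ this
    simpa [hε.ne'] using h3

lemma dot_of (f : (n → ℝ) →ₗ[ℝ] ℝ) : ∃ c : n → ℝ, ∀ x, c ⬝ᵥ x = f x := by
  classical
  refine ⟨fun j => f (Pi.single j 1), fun x => ?_⟩
  rw [LinearMap.pi_apply_eq_sum_univ f x, dotProduct]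
  refine Finset.sum_congr rfl fun i _ => ?_
  rw [mul_comm, smul_eq_mul]
  congr 2
  ext j
  simp [Pi.single_apply, eq_comm]

lemma exists_min {F : Set (n → ℝ)} (hF : F.Nonempty) (hP : F ⊆ Pol φ d)
    (hmid : ∀ x ∈ F, ∀ y ∈ F, (1/2 : ℝ) • (x + y) ∈ F) :
    ∃ x ∈ F, ∀ y ∈ F, ∀ k, φ k x = d k → φ k y = d k := by
  classical
  obtain ⟨x, hx, hmin⟩ := (measure (fun x : n → ℝ =>
    (Finset.univ.filter (fun k => φ k x = d k)).card)).wf.has_min F hF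
  refine ⟨x, hx, fun y hy => ?_⟩
  have hz := hmin _ (hmid x hx y hy)
  have hmeas : ∀ a b : n → ℝ, (measure (fun x : n → ℝ =>
    (Finset.univ.filter (fun k => φ k x = d k)).card)).rel a b ↔
      (Finset.univ.filter (fun k => φ k a = d k)).card <
      (Finset.univ.filter (fun k => φ k b = d k)).card := fun a b => Iff.rfl
  have hz' := not_lt.1 (fun h => hz ((hmeas _ _).2 h))
  have hsub : ∀ k, φ k ((1/2 : ℝ) • (x + y)) = d k → φ k x = d k ∧ φ k y = d k := by
    intro k hk
    have h1 := hP hx k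
    have h2 := hP hy k
    simp at hk
    constructor <;> linarith
  have heq := Finset.eq_of_subset_of_card_le (s := Finset.univ.filter
    (fun k => φ k ((1/2 : ℝ) • (x + y)) = d k)) (t := Finset.univ.filter (fun k => φ k x = d k))
    (by
      intro k hk
      simp only [Finset.mem_filter, Finset.mem_univ, true_and] at hk ⊢
      exact (hsub k hk).1) hz'
  intro k hk
  have : k ∈ Finset.univ.filter (fun k => φ k ((1/2 : ℝ) • (x + y)) = d k) := by
    rw [heq]; simp [hk]
  simp only [Finset.mem_filter, Finset.mem_univ, true_and] at this
  exact (hsub k this).2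

lemma Pol_mid {x y : n → ℝ} (hx : x ∈ Pol φ d) (hy : y ∈ Pol φ d) :
    (1/2 : ℝ) • (x + y) ∈ Pol φ d := by
  intro k
  have h1 := hx k
  have h2 := hy k
  simp
  linarith

lemma face_iff (hne : (Pol φ d).Nonempty) (F : Set (n → ℝ)) :
    IsFace (Pol φ d) F ↔ ∃ x ∈ Pol φ d, F = FF φ d x := by
  constructor
  · rintro (rfl | ⟨c, s, hle, ⟨y0, hy0, hy0s⟩, rfl⟩)
    · obtain ⟨x, hx, h⟩ := exists_min (φ := φ) (d := d) hne le_rfl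
        (fun x hx y hy => Pol_mid hx hy)
      exact ⟨x, hx, Set.Subset.antisymm (fun y hy => ⟨hy, h y hy⟩) (fun y hy => hy.1)⟩
    · obtain ⟨x, hx, h⟩ := exists_min (φ := φ) (d := d) (F := {x ∈ Pol φ d | c ⬝ᵥ x = s})
        ⟨y0, hy0, hy0s⟩ (fun x hx => hx.1)
        (fun x hx y hy => ⟨Pol_mid hx.1 hy.1, by
          rw [dotProduct_smul, dotProduct_add, hx.2, hy.2, smul_eq_mul]; ring⟩)
      refine ⟨x, hx.1, Set.Subset.antisymm (fun y hy => ⟨hy.1, h y hy⟩) ?_⟩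
      rintro y ⟨hy, hyt⟩
      refine ⟨hy, le_antisymm (hle y hy) ?_⟩
      obtain ⟨ε, hε, h1, -⟩ := perturb (g := x - y) hx.1 (fun k hk => by
        simp [hk, hyt k hk])
      have := hle _ h1
      rw [dotProduct_add, dotProduct_smul, dotProduct_sub, hx.2, smul_eq_mul] at this
      by_contra hlt
      rw [not_le] at hlt
      have := mul_pos hε (sub_pos.2 hlt)
      linarith
  · classical
    rintro ⟨x, hx, rfl⟩
    right
    obtain ⟨c, hc⟩ := dot_of (∑ k ∈ Finset.univ.filter (fun k => φ k x = d k), φ k)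
    refine ⟨c, ∑ k ∈ Finset.univ.filter (fun k => φ k x = d k), d k, ?_, ⟨x, hx, ?_⟩, ?_⟩
    · intro y hy
      rw [hc, LinearMap.sum_apply]
      exact Finset.sum_le_sum fun k _ => hy k
    · rw [hc, LinearMap.sum_apply]
      refine Finset.sum_congr rfl fun k hk => ?_
      simpa using hk
    · ext y
      constructor
      · rintro ⟨hy, ht⟩
        refine ⟨hy, ?_⟩
        rw [hc, LinearMap.sum_apply]
        refine Finset.sum_congr rfl fun k hk => ht k ?_
        simpa using hk
      · rintro ⟨hy, ht⟩
        refine ⟨hy, fun k hk => ?_⟩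
        rw [hc, LinearMap.sum_apply, Finset.sum_eq_sum_iff_of_le (fun k _ => hy k)] at ht
        exact ht k (by simp [hk])

lemma vertex_iff (hne : (Pol φ d).Nonempty) (v : n → ℝ) :
    IsVertex (Pol φ d) v ↔ v ∈ Pol φ d ∧ ∀ y ∈ tker φ d v, y = 0 := by
  rw [IsVertex, face_iff hne]
  constructor
  · rintro ⟨x, hx, h⟩
    have hxv : x = v := by
      have := self_mem_FF hx
      rw [← h] at this
      exact this
    subst hxv
    refine ⟨hx, fun y hy => ?_⟩
    rw [← dir_FF hx, ← h, direction_affineSpan, vectorSpan_singleton] at hy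
    simpa using hy
  · rintro ⟨hv, h⟩
    refine ⟨v, hv, Set.Subset.antisymm ?_ ?_⟩
    · rintro _ rfl
      exact self_mem_FF hv
    · rintro y ⟨hy, ht⟩
      have := h (y - v) (fun k hk => by simp [hk, ht k hk])
      exact sub_eq_zero.1 this

lemma edge_iff (hne : (Pol φ d).Nonempty) (F : Set (n → ℝ)) :
    IsEdge (Pol φ d) F ↔ ∃ x ∈ Pol φ d, F = FF φ d x ∧ Module.finrank ℝ (tker φ d x) = 1 := by
  rw [IsEdge, face_iff hne]
  constructor
  · rintro ⟨⟨x, hx, rfl⟩, h⟩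
    rw [spanDim, dir_FF hx] at h
    exact ⟨x, hx, rfl, h⟩
  · rintro ⟨x, hx, rfl, h⟩
    refine ⟨⟨x, hx, rfl⟩, ?_⟩
    rwa [spanDim, dir_FF hx]

lemma finrank_one_iff {S : Submodule ℝ (n → ℝ)} {g : n → ℝ} (hg : g ≠ 0) (hS : g ∈ S) :
    Module.finrank ℝ S = 1 ↔ ∀ y ∈ S, ∃ t : ℝ, y = t • g := by
  have hv : (⟨g, hS⟩ : S) ≠ 0 := by simpa [Subtype.ext_iff] using hg
  rw [finrank_eq_one_iff_of_nonzero' _ hv]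
  constructor
  · intro h y hy
    obtain ⟨c, hc⟩ := h ⟨y, hy⟩
    exact ⟨c, by simpa [Subtype.ext_iff] using hc.symm⟩
  · rintro h ⟨y, hy⟩
    obtain ⟨c, hc⟩ := h y hy
    exact ⟨c, by simpa [Subtype.ext_iff] using hc.symm⟩

lemma edir_iff (hne : (Pol φ d).Nonempty) (g : n → ℝ) :
    IsEdgeDirection (Pol φ d) g ↔ edir φ d g := by
  constructor
  · rintro ⟨hg, F, hF, hgF⟩
    rw [edge_iff hne] at hF
    obtain ⟨x, hx, rfl, h⟩ := hF
    rw [dir_FF hx] at hgF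
    exact ⟨hg, x, hx, hgF, (finrank_one_iff hg hgF).1 h⟩
  · rintro ⟨hg, x, hx, hgF, h⟩
    refine ⟨hg, FF φ d x, (edge_iff hne _).2 ⟨x, hx, rfl, (finrank_one_iff hg hgF).2 h⟩, ?_⟩
    rwa [dir_FF hx]

lemma edir.circ {g : n → ℝ} (h : edir φ d g) : circ φ g := by
  obtain ⟨hg, x, hx, hgx, h⟩ := h
  exact ⟨hg, fun y hy => h y fun k hk => hy k (hgx k hk)⟩

variable (φ d) in
structure Good : Prop where
  int : ∃ x, ∀ k, φ k x < d k
  fac : ∀ k, ∃ x, φ k x = d k ∧ ∀ l, l ≠ k → φ l x < d l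
  inj : ∀ g, (∀ k, φ k g = 0) → g = 0

lemma Good.ne (H : Good φ d) : (Pol φ d).Nonempty := by
  obtain ⟨x, hx⟩ := H.int
  exact ⟨x, fun k => (hx k).le⟩

lemma Good.pointed (H : Good φ d) : PointedSet (Pol φ d) := by
  intro x v h
  apply H.inj
  intro k
  by_contra hk
  have := h ((d k - φ k x + 1) / φ k v) k
  simp [hk] at this
  linarith

lemma Good.dir (H : Good φ d) : (affineSpan ℝ (Pol φ d)).direction = ⊤ := by
  obtain ⟨x, hx⟩ := H.int
  have hP : Pol φ d = FF φ d x := by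
    ext y
    exact ⟨fun hy => ⟨hy, fun k hk => absurd hk (hx k).ne⟩, fun hy => hy.1⟩
  rw [hP, dir_FF (fun k => (hx k).le)]
  rw [eq_top_iff]
  intro g _ k hk
  exact absurd hk (hx k).ne

lemma Good.spanDim (H : Good φ d) : spanDim (Pol φ d) = Fintype.card n := by
  rw [_root_.spanDim, H.dir]
  simp

lemma Good.row_ne (H : Good φ d) (k : ι) : φ k ≠ 0 := by
  obtain ⟨x, hx⟩ := H.int
  obtain ⟨y, hy, -⟩ := H.fac k
  intro h
  have := hx k
  rw [← hy, h] at this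
  simp at this

lemma Good.facet_iff (H : Good φ d) (F : Set (n → ℝ)) :
    IsFacet (Pol φ d) F ↔ ∃ k, F = {x | x ∈ Pol φ d ∧ φ k x = d k} := by
  rw [IsFacet, face_iff H.ne, H.spanDim]
  have hker : ∀ k, Module.finrank ℝ (LinearMap.ker (φ k)) + 1 = Fintype.card n := by
    intro k
    have := Module.Dual.finrank_ker_add_one_of_ne_zero (H.row_ne k)
    simpa using this
  constructor
  · rintro ⟨⟨x, hx, rfl⟩, h⟩
    rw [_root_.spanDim, dir_FF hx] at h
    have hex : ∃ k, φ k x = d k := by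
      by_contra hno
      push Not at hno
      have : tker φ d x = ⊤ := by
        rw [eq_top_iff]
        intro g _ k hk
        exact absurd hk (hno k)
      rw [this] at h
      simp at h
    obtain ⟨k, hk⟩ := hex
    have hle : tker φ d x ≤ LinearMap.ker (φ k) := fun g hg => hg k hk
    have heq := Submodule.eq_of_le_of_finrank_eq hle (by have := hker k; omega)
    refine ⟨k, Set.Subset.antisymm (fun y hy => ⟨hy.1, hy.2 k hk⟩) ?_⟩
    rintro y ⟨hy, hyk⟩
    refine ⟨hy, fun l hl => ?_⟩
    have : y - x ∈ tker φ d x := by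
      rw [heq]
      simp [hyk, hk]
    have := this l hl
    rw [map_sub, sub_eq_zero] at this
    rw [this, hl]
  · rintro ⟨k, rfl⟩
    obtain ⟨x, hx, hxl⟩ := H.fac k
    have hxP : x ∈ Pol φ d := fun l => by
      by_cases h : l = k
      · rw [h, hx]
      · exact (hxl l h).le
    have ht : ∀ l, φ l x = d l ↔ l = k := fun l => by
      constructor
      · intro h
        by_contra hl
        exact (hxl l hl).ne h
      · rintro rfl
        exact hx
    have hF : {x | x ∈ Pol φ d ∧ φ k x = d k} = FF φ d x := by
      ext y
      simp [FF, ht]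
    refine ⟨⟨x, hxP, hF⟩, ?_⟩
    have : tker φ d x = LinearMap.ker (φ k) := by
      ext g
      simp [mem_tker, ht]
    rw [hF, _root_.spanDim, dir_FF hxP, ← hker k, this]

lemma Good.facet_inj (H : Good φ d) :
    Function.Injective (fun k => {x | x ∈ Pol φ d ∧ φ k x = d k}) := by
  intro k l hkl
  by_contra hne
  obtain ⟨x, hx, hxl⟩ := H.fac k
  have hxP : x ∈ Pol φ d := fun l => by
    by_cases h : l = k
    · rw [h, hx]
    · exact (hxl l h).le
  have h1 : x ∈ {x | x ∈ Pol φ d ∧ φ k x = d k} := ⟨hxP, hx⟩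
  have h2 : x ∈ {x | x ∈ Pol φ d ∧ φ l x = d l} := by
    have := hkl
    simp only at this
    rwa [← this]
  exact (hxl l (fun h => hne h.symm)).ne h2.2

lemma Good.facet_card (H : Good φ d) :
    {F | IsFacet (Pol φ d) F}.ncard = Fintype.card ι := by
  have : {F | IsFacet (Pol φ d) F} =
      Set.range (fun k => {x | x ∈ Pol φ d ∧ φ k x = d k}) := by
    ext F
    simp only [Set.mem_ofPred_eq, H.facet_iff, Set.mem_range, eq_comm]
  rw [this, ← Set.image_univ, Set.ncard_image_of_injective _ H.facet_inj, Set.ncard_univ,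
    Nat.card_eq_fintype_card]

lemma Good.facet_at (H : Good φ d) (v : n → ℝ) (hv : v ∈ Pol φ d) :
    {F | IsFacet (Pol φ d) F ∧ v ∈ F}.ncard = {k | φ k v = d k}.ncard := by
  have : {F | IsFacet (Pol φ d) F ∧ v ∈ F} =
      (fun k => {x | x ∈ Pol φ d ∧ φ k x = d k}) '' {k | φ k v = d k} := by
    ext F
    simp only [Set.mem_ofPred_eq, H.facet_iff, Set.mem_image]
    constructor
    · rintro ⟨⟨k, rfl⟩, h⟩
      exact ⟨k, h.2, rfl⟩
    · rintro ⟨k, hk, rfl⟩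
      exact ⟨⟨k, rfl⟩, hv, hk⟩
  rw [this, Set.ncard_image_of_injective _ H.facet_inj]

lemma Good.circuits_eq (H : Good φ d) {p q : ℕ} (A : Matrix (Fin p) n ℝ) [IsEmpty (Fin p)]
    (e : Fin q ≃ ι) (B : Matrix (Fin q) n ℝ) (hB : ∀ x k, B.mulVec x k = φ (e k) x) :
    circuits A B = {g | circ φ g} := by
  ext g
  simp only [circuits, Set.mem_ofPred_eq, hB, Set.ofPred_subset_ofPred]
  constructor
  · rintro ⟨-, hg, h⟩
    refine ⟨hg, fun y hy => ?_⟩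
    have hi : ∃ i, φ i g ≠ 0 := by
      by_contra hno
      push Not at hno
      exact hg (H.inj g hno)
    obtain ⟨i, hi⟩ := hi
    refine ⟨φ i y / φ i g, ?_⟩
    by_contra hne
    have := h (y - (φ i y / φ i g) • g) (Subsingleton.elim _ _) (sub_ne_zero.2 hne) (by
      intro a ha hga
      apply ha
      simp [hga, hy _ hga])
    have h2 := this (e.symm i) (by simpa using hi)
    apply h2
    simp [hi]
  · rintro ⟨hg, h⟩
    refine ⟨Subsingleton.elim _ _, hg, fun y _ hy hsub a ha hya => ?_⟩
    obtain ⟨t, rfl⟩ := h y (fun k hk => by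
      by_contra hk'
      exact hsub (e.symm k) (by simpa using hk') (by simpa using hk))
    have ht : t ≠ 0 := by
      rintro rfl
      simp at hy
    simp [ht] at hya
    exact ha hya

lemma Good.irr (H : Good φ d) {p q : ℕ} (A : Matrix (Fin p) n ℝ) [IsEmpty (Fin p)]
    (b : Fin p → ℝ)
    (e : Fin q ≃ ι) (B : Matrix (Fin q) n ℝ) (hB : ∀ x k, B.mulVec x k = φ (e k) x) :
    Irredundant A b B (d ∘ e) (Pol φ d) := by
  refine ⟨?_, ?_, ?_⟩
  · ext x
    simp only [Pol, polySet, Set.mem_ofPred_eq, Pi.le_def, hB, Function.comp]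
    constructor
    · intro h
      exact ⟨Subsingleton.elim _ _, fun k => h _⟩
    · rintro ⟨-, h⟩ k
      simpa using h (e.symm k)
  · have : affineSpan ℝ (Pol φ d) = ⊤ := by
      rw [← AffineSubspace.direction_eq_top_iff_of_nonempty]
      · exact H.dir
      · obtain ⟨x, hx⟩ := H.ne
        exact ⟨x, mem_affineSpan ℝ hx⟩
    rw [this]
    ext x
    simp only [Set.mem_ofPred_eq, AffineSubspace.top_coe, Set.mem_univ, iff_true]
    exact Subsingleton.elim _ _
  · intro i
    rw [H.facet_iff]
    exact ⟨e i, by simp [hB]⟩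

end General

theorem pack {n m : ℕ} {ι κ : Type} [Fintype ι] [Fintype κ]
    {φ : ι → ((Fin n → ℝ) →ₗ[ℝ] ℝ)} {d : ι → ℝ}
    {ψ : κ → ((Fin m → ℝ) →ₗ[ℝ] ℝ)} {e : κ → ℝ}
    (π : (Fin m → ℝ) →ₗ[ℝ] (Fin n → ℝ)) (HP : Good φ d) (HQ : Good ψ e)
    (hπ : (fun x => π x) '' Pol ψ e = Pol φ d)
    (h1 : ∃ g, circ φ g ∧ ∀ h, circ ψ h → π h ≠ g)
    (h2 : ∀ g, edir φ d g → ∃ h, circ ψ h ∧ π h = g)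
    (h3 : ∀ h, circ ψ h → circ φ (π h) → edir φ d (π h))
    (h4 : ∀ v ∈ Pol ψ e, (∀ y ∈ tker ψ e v, y = 0) → {k | ψ k v = e k}.ncard = m)
    (X : Set (Fin n → ℝ) → Prop) (hX : X (Pol φ d)) :
    ∃ (pP qP pQ qQ : ℕ)
      (AP : Matrix (Fin pP) (Fin n) ℝ) (bP : Fin pP → ℝ)
      (BP : Matrix (Fin qP) (Fin n) ℝ) (dP : Fin qP → ℝ)
      (AQ : Matrix (Fin pQ) (Fin m) ℝ) (bQ : Fin pQ → ℝ)
      (BQ : Matrix (Fin qQ) (Fin m) ℝ) (dQ : Fin qQ → ℝ)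
      (P : Set (Fin n → ℝ)) (Q : Set (Fin m → ℝ))
      (π : (Fin m → ℝ) →ₗ[ℝ] (Fin n → ℝ)),
      Irredundant AP bP BP dP P ∧ Irredundant AQ bQ BQ dQ Q ∧
      PointedSet P ∧ PointedSet Q ∧ spanDim P = n ∧ spanDim Q = m ∧
      (fun x => π x) '' Q = P ∧
      ¬ (circuits AP BP ⊆ (fun x => π x) '' circuits AQ BQ) ∧
      circuits AP BP ∩ (fun x => π x) '' circuits AQ BQ = {g | IsEdgeDirection P g} ∧
      (∀ v, IsVertex Q v → {F | IsFacet Q F ∧ v ∈ F}.ncard = m) ∧ X P := by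
  let eP := (Fintype.equivFin ι).symm
  let eQ := (Fintype.equivFin κ).symm
  let BP := LinearMap.toMatrix' (LinearMap.pi (fun k => φ (eP k)))
  let BQ := LinearMap.toMatrix' (LinearMap.pi (fun k => ψ (eQ k)))
  have hBP : ∀ x k, BP.mulVec x k = φ (eP k) x := by
    intro x k
    simp [BP, LinearMap.toMatrix'_mulVec]
  have hBQ : ∀ x k, BQ.mulVec x k = ψ (eQ k) x := by
    intro x k
    simp [BQ, LinearMap.toMatrix'_mulVec]
  refine ⟨0, _, 0, _, 0, 0, BP, d ∘ eP, 0, 0, BQ, e ∘ eQ, Pol φ d, Pol ψ e, π,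
    HP.irr _ _ eP _ hBP, HQ.irr _ _ eQ _ hBQ, HP.pointed, HQ.pointed, ?_, ?_, hπ, ?_, ?_, ?_, hX⟩
  · simpa using HP.spanDim
  · simpa using HQ.spanDim
  · rw [HP.circuits_eq _ eP _ hBP, HQ.circuits_eq _ eQ _ hBQ]
    obtain ⟨g, hg, hne⟩ := h1
    intro hsub
    obtain ⟨h, hh, rfl⟩ := hsub hg
    exact hne h hh rfl
  · rw [HP.circuits_eq _ eP _ hBP, HQ.circuits_eq _ eQ _ hBQ]
    ext g
    simp only [Set.mem_inter_iff, Set.mem_ofPred_eq, Set.mem_image, edir_iff HP.ne]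
    constructor
    · rintro ⟨hg, h, hh, rfl⟩
      exact h3 h hh hg
    · intro hg
      exact ⟨hg.circ, h2 g hg⟩
  · intro v hv
    rw [vertex_iff HQ.ne] at hv
    rw [HQ.facet_at v hv.1]
    exact h4 v hv.1 hv.2

section Conc

variable {N : Type} [Fintype N] [DecidableEq N] (i0 i1 i2 : N)

def pj (i : N) : (N → ℝ) →ₗ[ℝ] ℝ := LinearMap.proj i

@[simp] lemma pj_apply (i : N) (x : N → ℝ) : pj i x = x i := rfl

def fr : Option N → ((N → ℝ) →ₗ[ℝ] ℝ)
  | none => pj i1 + pj i2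
  | some i => if i = i2 then pj i0 + pj i2 else pj i

def ry : Option N → N → ℝ
  | none => fun j => if j = i0 then 1 else if j = i1 then 1 else if j = i2 then -1 else 0
  | some i => fun j => if j = i then 1 else 0

def el : (N → ℝ) →ₗ[ℝ] ℝ :=
  pj i0 + pj i1 + ∑ i, pj i

/-- coefficient of ray `k` for a vector in the span of rays `k` and `l` -/
def cf (k l : Option N) (y : N → ℝ) : ℝ :=
  match k, l with
  | none, some i => if i = i0 then y i1 else y i0
  | some i, none => if i = i0 then y i0 - y i1 else if i = i1 then y i1 - y i0 else y i
  | some i, some _ => y i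
  | none, none => 0

lemma fr_none (x : N → ℝ) : fr i0 i1 i2 none x = x i1 + x i2 := rfl

lemma fr_two (x : N → ℝ) : fr i0 i1 i2 (some i2) x = x i0 + x i2 := by simp [fr]

lemma fr_some {i : N} (h : i ≠ i2) (x : N → ℝ) : fr i0 i1 i2 (some i) x = x i := by simp [fr, h]

lemma el_apply (x : N → ℝ) : el i0 i1 x = x i0 + x i1 + ∑ i, x i := by
  simp [el, LinearMap.sum_apply]

variable {i0 i1 i2}

lemma opt_cases (h01 : i0 ≠ i1) (h02 : i0 ≠ i2) (h12 : i1 ≠ i2) (k : Option N) : k = none ∨ k = some i0 ∨ k = some i1 ∨ k = some i2 ∨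
    ∃ i, k = some i ∧ i ≠ i0 ∧ i ≠ i1 ∧ i ≠ i2 := by
  cases k with
  | none => simp
  | some i => simp; tauto

lemma fr_ry_nonneg (h01 : i0 ≠ i1) (h02 : i0 ≠ i2) (h12 : i1 ≠ i2) (c k : Option N) : 0 ≤ fr i0 i1 i2 c (ry i0 i1 i2 k) := by
  rcases opt_cases h01 h02 h12 c with rfl | rfl | rfl | rfl | ⟨i, rfl, a, b, e⟩ <;>
  rcases opt_cases h01 h02 h12 k with rfl | rfl | rfl | rfl | ⟨j, rfl, a', b', e'⟩ <;>
  simp [fr, ry, *, h01.symm, h02.symm, h12.symm] <;> (try split_ifs) <;> norm_num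

lemma el_ry_pos (h01 : i0 ≠ i1) (h02 : i0 ≠ i2) (h12 : i1 ≠ i2) (k : Option N) : 0 < el i0 i1 (ry i0 i1 i2 k) := by
  rw [el_apply]
  rcases k with _ | i
  · have : ∀ j, ry i0 i1 i2 none j = (if j = i0 then 1 else 0) + (if j = i1 then 1 else 0)
        - (if j = i2 then 1 else 0) := by
      intro j
      simp only [ry]
      split_ifs <;> simp_all
    simp only [this, Finset.sum_sub_distrib, Finset.sum_add_distrib]
    simp [h01, h02, h12, h01.symm]
    norm_num
  · simp [ry]
    split_ifs <;> norm_num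

lemma inj_fr (h01 : i0 ≠ i1) (h02 : i0 ≠ i2) (h12 : i1 ≠ i2) (y : N → ℝ) (h : ∀ c, fr i0 i1 i2 c y = 0) : y = 0 := by
  have e0 := h (some i0)
  have e2 := h (some i2)
  rw [fr_some _ _ _ h02] at e0
  rw [fr_two] at e2
  funext j
  by_cases hj : j = i2
  · subst hj
    simp
    linarith
  · have := h (some j)
    rwa [fr_some _ _ _ hj] at this

/-- a vector is determined by its functional values -/
lemma ext_fr (h01 : i0 ≠ i1) (h02 : i0 ≠ i2) (h12 : i1 ≠ i2) {y z : N → ℝ} (h : ∀ c, fr i0 i1 i2 c y = fr i0 i1 i2 c z) : y = z := by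
  have := inj_fr h01 h02 h12 (y - z) (fun c => by simp [h])
  exact sub_eq_zero.1 this

lemma ray_ker (h01 : i0 ≠ i1) (h02 : i0 ≠ i2) (h12 : i1 ≠ i2) (k : Option N) (y : N → ℝ)
    (h : ∀ c, fr i0 i1 i2 c (ry i0 i1 i2 k) = 0 → fr i0 i1 i2 c y = 0) :
    ∃ t : ℝ, y = t • ry i0 i1 i2 k := by
  have a0 := h none
  have a1 := h (some i0)
  have a2 := h (some i1)
  have a3 := h (some i2)
  have a4 : ∀ j, j ≠ i0 → j ≠ i1 → j ≠ i2 → ry i0 i1 i2 k j = 0 → y j = 0 := by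
    intro j _ _ hj
    have := h (some j)
    rwa [fr_some _ _ _ hj, fr_some _ _ _ hj] at this
  rw [fr_none, fr_none] at a0
  rw [fr_some _ _ _ h02, fr_some _ _ _ h02] at a1
  rw [fr_some _ _ _ h12, fr_some _ _ _ h12] at a2
  rw [fr_two, fr_two] at a3
  refine ⟨match k with | none => y i0 | some i => y i, ?_⟩
  funext j
  rcases opt_cases h01 h02 h12 k with rfl | rfl | rfl | rfl | ⟨i, rfl, a, b, e⟩ <;>
  rcases opt_cases h01 h02 h12 (some j) with hj | hj | hj | hj | ⟨j', hj, a', b', e'⟩ <;>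
  simp only [reduceCtorEq, Option.some.injEq] at hj <;> subst hj <;>
  simp [ry, h01, h02, h12, h01.symm, h02.symm, h12.symm] at a0 a1 a2 a3 a4 ⊢ <;> grind

lemma pair_ker (h01 : i0 ≠ i1) (h02 : i0 ≠ i2) (h12 : i1 ≠ i2) (k l : Option N) (hkl : k ≠ l) :
    (∀ y : N → ℝ, (∀ c, fr i0 i1 i2 c (ry i0 i1 i2 k) = 0 → fr i0 i1 i2 c (ry i0 i1 i2 l) = 0 →
      fr i0 i1 i2 c y = 0) → ∃ s t : ℝ, y = s • ry i0 i1 i2 k + t • ry i0 i1 i2 l) ∨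
    (∀ c, (c = none ∨ c = some i0 ∨ c = some i1 ∨ c = some i2) →
      (0 < fr i0 i1 i2 c (ry i0 i1 i2 k) ∧ fr i0 i1 i2 c (ry i0 i1 i2 l) = 0) ∨
      (fr i0 i1 i2 c (ry i0 i1 i2 k) = 0 ∧ 0 < fr i0 i1 i2 c (ry i0 i1 i2 l))) := by
  by_cases hd : (k = some i0 ∧ l = some i1) ∨ (k = some i1 ∧ l = some i0) ∨
    (k = some i2 ∧ l = none) ∨ (k = none ∧ l = some i2)
  · right
    intro c hc
    rcases hd with ⟨rfl, rfl⟩ | ⟨rfl, rfl⟩ | ⟨rfl, rfl⟩ | ⟨rfl, rfl⟩ <;>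
    rcases hc with rfl | rfl | rfl | rfl <;>
    simp [fr, ry, h01, h02, h12, h01.symm, h02.symm, h12.symm]
  · left
    intro y h
    have a0 := h none
    have a1 := h (some i0)
    have a2 := h (some i1)
    have a3 := h (some i2)
    have a4 : ∀ j, j ≠ i0 → j ≠ i1 → j ≠ i2 → ry i0 i1 i2 k j = 0 →
        ry i0 i1 i2 l j = 0 → y j = 0 := by
      intro j _ _ hj
      have := h (some j)
      rwa [fr_some _ _ _ hj, fr_some _ _ _ hj, fr_some _ _ _ hj] at this
    rw [fr_none, fr_none, fr_none] at a0
    rw [fr_some _ _ _ h02, fr_some _ _ _ h02, fr_some _ _ _ h02] at a1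
    rw [fr_some _ _ _ h12, fr_some _ _ _ h12, fr_some _ _ _ h12] at a2
    rw [fr_two, fr_two, fr_two] at a3
    refine ⟨cf i0 i1 k l y, cf i0 i1 l k y, ?_⟩
    clear h
    funext j
    rcases opt_cases h01 h02 h12 k with rfl | rfl | rfl | rfl | ⟨i, rfl, a, b, e⟩ <;>
    rcases opt_cases h01 h02 h12 l with rfl | rfl | rfl | rfl | ⟨i', rfl, aa, bb, ee⟩ <;>
    first
    | exact absurd rfl hkl
    | (exfalso; simp at hd; done)
    | (rcases opt_cases h01 h02 h12 (some j) with hj | hj | hj | hj | ⟨j', hj, a', b', e'⟩ <;>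
        simp only [reduceCtorEq, Option.some.injEq] at hj <;> subst hj <;>
        simp [ry, h01, h02, h12, h01.symm, h02.symm, h12.symm] at a0 a1 a2 a3 a4 hkl ⊢ <;> grind [cf])

lemma ry_sep (h01 : i0 ≠ i1) (h02 : i0 ≠ i2) (h12 : i1 ≠ i2) (k l : Option N) (hkl : k ≠ l) :
    ∃ c, fr i0 i1 i2 c (ry i0 i1 i2 k) = 0 ∧ fr i0 i1 i2 c (ry i0 i1 i2 l) ≠ 0 := by
  by_contra hno
  push Not at hno
  obtain ⟨t, ht⟩ := ray_ker h01 h02 h12 k (ry i0 i1 i2 l) hno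
  have a3 : ∀ j, ry i0 i1 i2 l j = t * ry i0 i1 i2 k j := fun j => congrFun ht j
  have a0 := a3 i0
  have a1 := a3 i1
  have a2 := a3 i2
  have a4 := a3 (l.getD i0)
  clear ht hno a3
  rcases opt_cases h01 h02 h12 k with rfl | rfl | rfl | rfl | ⟨i, rfl, a, b, e⟩ <;>
  rcases opt_cases h01 h02 h12 l with rfl | rfl | rfl | rfl | ⟨i', rfl, aa, bb, ee⟩ <;>
  (try simp only [Option.getD_some] at a4) <;> grind [ry]

lemma cone_gen (h01 : i0 ≠ i1) (h02 : i0 ≠ i2) (h12 : i1 ≠ i2) (x : N → ℝ) (hx : ∀ c, 0 ≤ fr i0 i1 i2 c x) :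
    ∃ w : Option N → ℝ, (∀ k, 0 ≤ w k) ∧ x = ∑ k, w k • ry i0 i1 i2 k := by
  have a0 := hx none
  have a1 := hx (some i0)
  have a2 := hx (some i1)
  have a3 := hx (some i2)
  rw [fr_none] at a0
  rw [fr_some _ _ _ h02] at a1
  rw [fr_some _ _ _ h12] at a2
  rw [fr_two] at a3
  refine ⟨fun k => match k with
    | none => max 0 (- x i2)
    | some i => x i - max 0 (- x i2) * ry i0 i1 i2 none i, ?_, ?_⟩
  · intro k
    rcases opt_cases h01 h02 h12 k with rfl | rfl | rfl | rfl | ⟨i, rfl, a, b, e⟩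
    · simp
    · simp [ry]
      constructor <;> linarith
    · simp [ry, h01.symm]
      constructor <;> linarith
    · simp [ry, h02.symm, h12.symm]
      have := le_max_right 0 (- x i2)
      linarith
    · simp [ry, a, b, e]
      have := hx (some i)
      rwa [fr_some _ _ _ e] at this
  · funext j
    rw [Fintype.sum_option]
    simp only [Pi.add_apply, Pi.smul_apply, Finset.sum_apply, smul_eq_mul]
    have : ∀ i, ry i0 i1 i2 (some i) j = if j = i then 1 else 0 := fun i => rfl
    simp [this]

lemma fac_fr (h01 : i0 ≠ i1) (h02 : i0 ≠ i2) (h12 : i1 ≠ i2) (c : Option N) : ∃ x : N → ℝ, fr i0 i1 i2 c x = 0 ∧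
    ∀ l, l ≠ c → 0 < fr i0 i1 i2 l x := by
  refine ⟨match c with
    | none => fun i => if i = i0 then 2 else if i = i2 then -1 else 1
    | some k => if k = i2 then fun i => if i = i1 then 2 else if i = i2 then -1 else 1
        else fun i => if i = k then 0 else 1, ?_, ?_⟩
  · rcases opt_cases h01 h02 h12 c with rfl | rfl | rfl | rfl | ⟨i, rfl, a, b, e⟩ <;>
    simp [fr, h01, h02, h12, h01.symm, h02.symm, h12.symm, *]
  · intro l hl
    rcases opt_cases h01 h02 h12 c with rfl | rfl | rfl | rfl | ⟨i, rfl, a, b, e⟩ <;>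
    rcases opt_cases h01 h02 h12 l with rfl | rfl | rfl | rfl | ⟨i', rfl, aa, bb, ee⟩ <;>
    simp [fr, h01, h02, h12, h01.symm, h02.symm, h12.symm, *] at hl ⊢ <;>
    (try simp [Ne.symm, *]) <;> (try norm_num) <;> grind

lemma int_fr (h01 : i0 ≠ i1) (h02 : i0 ≠ i2) (h12 : i1 ≠ i2) (c : Option N) : 0 < fr i0 i1 i2 c (fun _ => 1) := by
  rcases opt_cases h01 h02 h12 c with rfl | rfl | rfl | rfl | ⟨i, rfl, a, b, e⟩ <;>
  simp [fr, *]

end Conc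

section Q

variable {N M : Type} [Fintype N] [DecidableEq N] [Fintype M] [DecidableEq M]

/-- the projection sending the basis vector `σ k` to `u k` and all others to zero -/
def pr (u : Option N → N → ℝ) (σ : Option N ↪ M) : (M → ℝ) →ₗ[ℝ] (N → ℝ) :=
  ∑ k, (pj (σ k)).smulRight (u k)

lemma pr_apply (u : Option N → N → ℝ) (σ : Option N ↪ M) (y : M → ℝ) :
    pr u σ y = ∑ k, y (σ k) • u k := by
  simp [pr, LinearMap.sum_apply]

lemma pr_single (u : Option N → N → ℝ) (σ : Option N ↪ M) (k : Option N) :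
    pr u σ (Pi.single (σ k) 1) = u k := by
  rw [pr_apply, Finset.sum_eq_single k]
  · simp
  · intro l _ hl
    simp [hl]
  · simp

lemma pr_single' (u : Option N → N → ℝ) (σ : Option N ↪ M) (i : M) (hi : ∀ k, σ k ≠ i) :
    pr u σ (Pi.single i 1) = 0 := by
  rw [pr_apply, Finset.sum_eq_zero]
  intro k _
  simp [hi k]

def lift (σ : Option N ↪ M) (w : Option N → ℝ) : M → ℝ :=
  fun i => ∑ k, if σ k = i then w k else 0

lemma lift_apply (σ : Option N ↪ M) (w : Option N → ℝ) (k : Option N) :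
    lift σ w (σ k) = w k := by
  simp [lift]

lemma lift_sum (σ : Option N ↪ M) (w : Option N → ℝ) : ∑ i, lift σ w i = ∑ k, w k := by
  simp only [lift]
  rw [Finset.sum_comm]
  simp

lemma lift_nonneg (σ : Option N ↪ M) (w : Option N → ℝ) (hw : ∀ k, 0 ≤ w k) (i : M) :
    0 ≤ lift σ w i := by
  apply Finset.sum_nonneg
  intro k _
  split_ifs
  · exact hw k
  · exact le_rfl

def ox (i : M) : (M → ℝ) →ₗ[ℝ] ℝ := - pj i

@[simp] lemma ox_apply (i : M) (x : M → ℝ) : ox i x = - x i := rfl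

lemma ox_good : Good (ox (M := M)) (fun _ => 0) where
  int := ⟨fun _ => 1, by simp⟩
  fac := fun k => ⟨fun i => if i = k then 0 else 1, by simp, by intro l hl; simp [hl]⟩
  inj := by
    intro g h
    funext i
    simpa using h i

lemma ox_circ {g : M → ℝ} (h : circ ox g) : ∃ i, ∃ t : ℝ, t ≠ 0 ∧ g = t • Pi.single i 1 := by
  obtain ⟨hg, h⟩ := h
  obtain ⟨i, hi⟩ := Function.ne_iff.1 hg
  obtain ⟨t, ht⟩ := h (Pi.single i 1) (by
    intro k hk
    have : k ≠ i := by
      rintro rfl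
      apply hi
      simpa using hk
    simp [this])
  have ht0 : t ≠ 0 := by
    rintro rfl
    simp at ht
  exact ⟨i, t⁻¹, inv_ne_zero ht0, by rw [ht, smul_smul, inv_mul_cancel₀ ht0, one_smul]⟩

lemma circ_ox (i : M) {t : ℝ} (ht : t ≠ 0) : circ ox (t • (Pi.single i 1 : M → ℝ)) := by
  refine ⟨by simp [ht], fun y hy => ⟨y i / t, ?_⟩⟩
  funext j
  by_cases hj : j = i
  · subst hj
    simp [ht]
  · have := hy j (by simp [hj])
    simpa [hj] using this

lemma ox_simple (v : M → ℝ)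
    (hv : ∀ y ∈ tker ox (fun _ => 0) v, y = 0) :
    {k : M | ox k v = (fun _ => (0 : ℝ)) k}.ncard = Fintype.card M := by
  have : {k : M | ox k v = (fun _ => (0 : ℝ)) k} = Set.univ := by
    ext i
    simp only [Set.mem_ofPred_eq, Set.mem_univ, iff_true]
    by_contra hi
    have := hv (Pi.single i 1) (by
      intro k hk
      have : k ≠ i := by
        rintro rfl
        exact hi hk
      simp [this])
    simp at this
  rw [this, Set.ncard_univ, Nat.card_eq_fintype_card]

def sx : Option M → ((M → ℝ) →ₗ[ℝ] ℝ)
  | none => ∑ i, pj i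
  | some i => - pj i

def sd {T : Type} : Option T → ℝ
  | none => 1
  | some _ => 0

def W : Option M → M → ℝ
  | none => 0
  | some i => Pi.single i 1

lemma sx_none (x : M → ℝ) : sx none x = ∑ i, x i := by simp [sx, LinearMap.sum_apply]
lemma sx_some (i : M) (x : M → ℝ) : sx (some i) x = - x i := rfl

lemma sx_W (k i : Option M) : sx k (W i) = sd k - (if k = i then 1 else 0) := by
  rcases k with _ | k <;> rcases i with _ | i <;>
    simp [sx_none, sx_some, W, sd, Pi.single_apply]

lemma sx_sum (x : M → ℝ) : ∑ k, sx k x = 0 := by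
  rw [Fintype.sum_option, sx_none]
  simp [sx_some]

lemma sx_inj (g : M → ℝ) (h : ∀ k, sx k g = 0) : g = 0 := by
  funext i
  have := h (some i)
  rw [sx_some] at this
  simpa using this

lemma W_ne {i j : Option M} (h : i ≠ j) : W i - W j ≠ 0 := by
  intro he
  have := congrArg (sx i) he
  rw [map_sub, sx_W, sx_W, map_zero] at this
  simp [h] at this

lemma sx_good [Nonempty M] : Good (sx (M := M)) sd where
  int := by
    refine ⟨fun _ => 1 / (Fintype.card M + 1), ?_⟩
    rintro (_ | k)
    · rw [sx_none]
      simp [sd]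
      rw [← div_eq_mul_inv, div_lt_one (by positivity)]
      linarith
    · rw [sx_some]
      simp only [sd]
      have : (0 : ℝ) < 1 / (Fintype.card M + 1) := by positivity
      linarith
  fac := by
    rintro (_ | k)
    · refine ⟨fun _ => 1 / (Fintype.card M), ?_, ?_⟩
      · rw [sx_none]
        simp [sd]
      · rintro (_ | k) hk
        · simp at hk
        · rw [sx_some]
          simp only [sd]
          have : (0 : ℝ) < 1 / (Fintype.card M) := by
            have : 0 < Fintype.card M := Fintype.card_pos
            positivity
          linarith
    · refine ⟨fun i => if i = k then 0 else 1 / (Fintype.card M + 1), ?_, ?_⟩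
      · rw [sx_some]
        simp [sd]
      · have hpos : (0 : ℝ) < 1 / (Fintype.card M + 1) := by positivity
        rintro (_ | l) hl
        · rw [sx_none]
          have : ∑ i : M, (if i = k then (0 : ℝ) else 1 / (Fintype.card M + 1)) ≤
              ∑ i : M, (1 / (Fintype.card M + 1) : ℝ) := by
            apply Finset.sum_le_sum
            intro i _
            split_ifs
            · exact hpos.le
            · exact le_rfl
          refine lt_of_le_of_lt this ?_
          simp [sd]
          rw [← div_eq_mul_inv, div_lt_one (by positivity)]
          linarith
        · have : l ≠ k := fun h => hl (by rw [h])
          rw [sx_some]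
          simp only [sd, this, if_false]
          linarith
  inj := sx_inj

lemma sx_circ {g : M → ℝ} (h : circ sx g) :
    ∃ i j, ∃ t : ℝ, t ≠ 0 ∧ i ≠ j ∧ g = t • (W i - W j) := by
  obtain ⟨hg, h⟩ := h
  have hi : ∃ i, sx i g ≠ 0 := by
    by_contra hno
    push Not at hno
    exact hg (sx_inj g hno)
  obtain ⟨i, hi⟩ := hi
  have hj : ∃ j, j ≠ i ∧ sx j g ≠ 0 := by
    by_contra hno
    push Not at hno
    have := sx_sum g
    rw [Finset.sum_eq_single i (fun j _ hj => hno j hj) (by simp)] at this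
    exact hi this
  obtain ⟨j, hji, hj⟩ := hj
  obtain ⟨t, ht⟩ := h (W i - W j) (by
    intro k hk
    have h1 : k ≠ i := by
      rintro rfl
      exact hi hk
    have h2 : k ≠ j := by
      rintro rfl
      exact hj hk
    rw [map_sub, sx_W, sx_W]
    simp [h1, h2])
  have ht0 : t ≠ 0 := by
    rintro rfl
    rw [zero_smul] at ht
    exact W_ne hji.symm ht
  exact ⟨i, j, t⁻¹, inv_ne_zero ht0, hji.symm,
    by rw [ht, smul_smul, inv_mul_cancel₀ ht0, one_smul]⟩

lemma circ_sx {i j : Option M} (hij : i ≠ j) {t : ℝ} (ht : t ≠ 0) :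
    circ sx (t • (W i - W j)) := by
  refine ⟨smul_ne_zero ht (W_ne hij), fun y hy => ⟨-(sx i y) / t, ?_⟩⟩
  have hy' : ∀ k, k ≠ i ∧ k ≠ j → sx k y = 0 := by
    intro k hk
    apply hy
    rw [map_smul, map_sub, sx_W, sx_W]
    simp [hk.1, hk.2]
  have hs := sx_sum y
  rw [Fintype.sum_eq_add i j hij hy'] at hs
  rw [smul_smul, div_mul_cancel₀ _ ht, ← sub_eq_zero]
  apply sx_inj
  intro k
  rw [map_sub, map_smul, map_sub, sx_W, sx_W, smul_eq_mul]
  by_cases h1 : k = i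
  · subst h1
    simp [hij]
  · by_cases h2 : k = j
    · subst h2
      simp [h1]
      linarith
    · simp [h1, h2, hy' k ⟨h1, h2⟩]

lemma sx_simple (v : M → ℝ)
    (hv : ∀ y ∈ tker sx sd v, y = 0) :
    {k : Option M | sx k v = sd k}.ncard = Fintype.card M := by
  have hi : ∃ i, sx i v ≠ sd i := by
    by_contra hno
    push Not at hno
    have := sx_sum v
    rw [Finset.sum_congr rfl (fun k _ => hno k), Fintype.sum_option] at this
    simp [sd] at this
  obtain ⟨i, hi⟩ := hi
  have : {k : Option M | sx k v = sd k} = {i}ᶜ := by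
    ext j
    simp only [Set.mem_ofPred_eq, Set.mem_compl_iff, Set.mem_singleton_iff]
    constructor
    · rintro h rfl
      exact hi h
    · intro hj
      by_contra hne
      refine W_ne hj (hv _ ?_)
      intro k hk
      have h1 : k ≠ i := by
        rintro rfl
        exact hi hk
      have h2 : k ≠ j := by
        rintro rfl
        exact hne hk
      rw [map_sub, sx_W, sx_W]
      simp [h1, h2]
  rw [this]
  have := Set.ncard_add_ncard_compl ({i} : Set (Option M))
  simp at this
  omega

end Q

section Cone

variable {N M : Type} [Fintype N] [DecidableEq N] [Fintype M] [DecidableEq M]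

/-- rows of the cone description -/
def cx (i0 i1 i2 : N) (c : Option N) : (N → ℝ) →ₗ[ℝ] ℝ := - fr i0 i1 i2 c

lemma cx_apply (i0 i1 i2 : N) (c : Option N) (x : N → ℝ) :
    cx i0 i1 i2 c x = - fr i0 i1 i2 c x := rfl

/-- the circuit that is not hit -/
def g0 (i0 i2 : N) : N → ℝ := Pi.single i0 1 - Pi.single i2 1

variable {i0 i1 i2 : N}

lemma ry_ne (h01 : i0 ≠ i1) (h02 : i0 ≠ i2) (h12 : i1 ≠ i2) (k : Option N) : ry i0 i1 i2 k ≠ 0 := by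
  intro h
  have := el_ry_pos h01 h02 h12 k
  rw [h, map_zero] at this
  exact lt_irrefl _ this

lemma cx_good (h01 : i0 ≠ i1) (h02 : i0 ≠ i2) (h12 : i1 ≠ i2) : Good (cx i0 i1 i2) (fun _ => 0) where
  int := ⟨fun _ => 1, fun k => by
    have := int_fr h01 h02 h12 k
    rw [cx_apply]
    linarith⟩
  fac := fun k => by
    obtain ⟨x, hx, hx'⟩ := fac_fr h01 h02 h12 k
    refine ⟨x, by rw [cx_apply, hx, neg_zero], fun l hl => ?_⟩
    have := hx' l hl
    rw [cx_apply]
    linarith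
  inj := fun g h => inj_fr h01 h02 h12 g fun c => by
    have := h c
    rw [cx_apply] at this
    linarith

lemma mem_cone (h01 : i0 ≠ i1) (h02 : i0 ≠ i2) (h12 : i1 ≠ i2) {x : N → ℝ} : x ∈ Pol (cx i0 i1 i2) (fun _ => 0) ↔ ∀ c, 0 ≤ fr i0 i1 i2 c x := by
  constructor
  · intro h c
    have := h c
    rw [cx_apply] at this
    linarith
  · intro h c
    have := h c
    rw [cx_apply]
    linarith

lemma mem_tc (h01 : i0 ≠ i1) (h02 : i0 ≠ i2) (h12 : i1 ≠ i2) {x y : N → ℝ} : y ∈ tker (cx i0 i1 i2) (fun _ => 0) x ↔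
    ∀ c, fr i0 i1 i2 c x = 0 → fr i0 i1 i2 c y = 0 := by
  simp only [mem_tker, cx_apply, neg_eq_zero]

lemma ry_mem (h01 : i0 ≠ i1) (h02 : i0 ≠ i2) (h12 : i1 ≠ i2) (k : Option N) : ry i0 i1 i2 k ∈ Pol (cx i0 i1 i2) (fun _ => 0) :=
  (mem_cone h01 h02 h12).2 fun c => fr_ry_nonneg h01 h02 h12 c k

lemma cone_image (h01 : i0 ≠ i1) (h02 : i0 ≠ i2) (h12 : i1 ≠ i2) (σ : Option N ↪ M) :
    (fun x => pr (ry i0 i1 i2) σ x) '' Pol (ox (M := M)) (fun _ => 0) =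
      Pol (cx i0 i1 i2) (fun _ => 0) := by
  ext x
  rw [mem_cone h01 h02 h12]
  constructor
  · rintro ⟨y, hy, rfl⟩ c
    simp only [pr_apply, map_sum, map_smul, smul_eq_mul]
    apply Finset.sum_nonneg
    intro k _
    have := hy (σ k)
    rw [ox_apply] at this
    exact mul_nonneg (by linarith) (fr_ry_nonneg h01 h02 h12 c k)
  · intro hx
    obtain ⟨w, hw, rfl⟩ := cone_gen h01 h02 h12 x hx
    refine ⟨lift σ w, fun i => ?_, ?_⟩
    · have := lift_nonneg σ w hw i
      rw [ox_apply]
      linarith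
    · simp only [pr_apply, lift_apply]

lemma cone_dich (h01 : i0 ≠ i1) (h02 : i0 ≠ i2) (h12 : i1 ≠ i2) {x : N → ℝ} (hx : x ∈ Pol (cx i0 i1 i2) (fun _ => 0)) :
    x = 0 ∨ ∃ k, ry i0 i1 i2 k ∈ tker (cx i0 i1 i2) (fun _ => 0) x := by
  rw [mem_cone h01 h02 h12] at hx
  obtain ⟨w, hw, rfl⟩ := cone_gen h01 h02 h12 x hx
  by_cases h : ∃ k, w k ≠ 0
  · obtain ⟨k, hk⟩ := h
    right
    refine ⟨k, (mem_tc h01 h02 h12).2 fun c hc => ?_⟩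
    simp only [map_sum, map_smul, smul_eq_mul] at hc
    rw [Finset.sum_eq_zero_iff_of_nonneg
      (fun l _ => mul_nonneg (hw l) (fr_ry_nonneg h01 h02 h12 c l))] at hc
    exact (mul_eq_zero.1 (hc k (Finset.mem_univ k))).resolve_left hk
  · push Not at h
    left
    simp [h]

lemma tker_ry (h01 : i0 ≠ i1) (h02 : i0 ≠ i2) (h12 : i1 ≠ i2) {k : Option N} {y : N → ℝ}
    (hy : y ∈ tker (cx i0 i1 i2) (fun _ => 0) (ry i0 i1 i2 k)) :
    ∃ t : ℝ, y = t • ry i0 i1 i2 k :=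
  ray_ker h01 h02 h12 k y ((mem_tc h01 h02 h12).1 hy)

lemma tker_czero (h01 : i0 ≠ i1) (h02 : i0 ≠ i2) (h12 : i1 ≠ i2) {y : N → ℝ} (hy : y ∈ tker (cx i0 i1 i2) (fun _ => 0) 0) : y = 0 :=
  inj_fr h01 h02 h12 y fun c => (mem_tc h01 h02 h12).1 hy c (map_zero _)

lemma edir_ry (h01 : i0 ≠ i1) (h02 : i0 ≠ i2) (h12 : i1 ≠ i2) (k : Option N) {t : ℝ} (ht : t ≠ 0) :
    edir (cx i0 i1 i2) (fun _ => 0) (t • ry i0 i1 i2 k) := by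
  refine ⟨smul_ne_zero ht (ry_ne h01 h02 h12 k), ry i0 i1 i2 k, ry_mem h01 h02 h12 k, ?_, ?_⟩
  · rw [mem_tc h01 h02 h12]
    intro c hc
    rw [map_smul, hc, smul_zero]
  · intro y hy
    obtain ⟨s, rfl⟩ := tker_ry h01 h02 h12 hy
    exact ⟨s / t, by rw [smul_smul, div_mul_cancel₀ _ ht]⟩

lemma edir_cone (h01 : i0 ≠ i1) (h02 : i0 ≠ i2) (h12 : i1 ≠ i2) {g : N → ℝ} (h : edir (cx i0 i1 i2) (fun _ => 0) g) :
    ∃ k, ∃ t : ℝ, t ≠ 0 ∧ g = t • ry i0 i1 i2 k := by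
  obtain ⟨hg, x, hx, hgx, h⟩ := h
  rcases cone_dich h01 h02 h12 hx with rfl | ⟨k, hk⟩
  · exact absurd (tker_czero h01 h02 h12 hgx) hg
  · obtain ⟨t, ht⟩ := h _ hk
    have ht0 : t ≠ 0 := by
      rintro rfl
      rw [zero_smul] at ht
      exact ry_ne h01 h02 h12 k ht
    exact ⟨k, t⁻¹, inv_ne_zero ht0, by rw [ht, smul_smul, inv_mul_cancel₀ ht0, one_smul]⟩

lemma g0_ker (h01 : i0 ≠ i1) (h02 : i0 ≠ i2) (h12 : i1 ≠ i2) {y : N → ℝ} (hy : ∀ c, fr i0 i1 i2 c (g0 i0 i2) = 0 → fr i0 i1 i2 c y = 0) :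
    ∃ t : ℝ, y = t • g0 i0 i2 := by
  refine ⟨y i0, ?_⟩
  funext j
  by_cases j0 : j = i0
  · subst j0
    simp [g0, h02]
  by_cases j2 : j = i2
  · subst j2
    have := hy (some j) (by rw [fr_two]; simp [g0, h02, h02.symm])
    rw [fr_two] at this
    simp [g0, h02.symm]
    linarith
  · have := hy (some j) (by rw [fr_some _ _ _ j2]; simp [g0, j0, j2])
    rw [fr_some _ _ _ j2] at this
    simp [g0, j0, j2, this]

lemma g0_ne (h01 : i0 ≠ i1) (h02 : i0 ≠ i2) (h12 : i1 ≠ i2) : g0 i0 i2 ≠ 0 := by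
  intro h
  have := congrFun h i0
  simp [g0, h02] at this

lemma g0_not_ry (h01 : i0 ≠ i1) (h02 : i0 ≠ i2) (h12 : i1 ≠ i2) (k : Option N) (t : ℝ) : t • ry i0 i1 i2 k ≠ g0 i0 i2 := by
  intro h
  have e1 := congrArg (fr i0 i1 i2 (some i0)) h
  have e2 := congrArg (fr i0 i1 i2 none) h
  have p1 := fr_ry_nonneg h01 h02 h12 (some i0) k
  have p2 := fr_ry_nonneg h01 h02 h12 none k
  have v1 : fr i0 i1 i2 (some i0) (g0 i0 i2) = 1 := by
    rw [fr_some _ _ _ h02]; simp [g0, h02]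
  have v2 : fr i0 i1 i2 none (g0 i0 i2) = -1 := by
    rw [fr_none]; simp [g0, h12, h01.symm, h02.symm]
  rw [map_smul, smul_eq_mul, v1] at e1
  rw [map_smul, smul_eq_mul, v2] at e2
  rcases le_total 0 t with ht | ht
  · have := mul_nonneg ht p2
    linarith
  · have := mul_nonneg (neg_nonneg.2 ht) p1
    linarith

lemma cone_h1 (h01 : i0 ≠ i1) (h02 : i0 ≠ i2) (h12 : i1 ≠ i2) (σ : Option N ↪ M) :
    ∃ g, circ (cx i0 i1 i2) g ∧ ∀ h, circ (ox (M := M)) h → pr (ry i0 i1 i2) σ h ≠ g := by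
  refine ⟨g0 i0 i2, ⟨g0_ne h01 h02 h12, fun y hy => g0_ker h01 h02 h12 ?_⟩, ?_⟩
  · intro c hc
    have := hy c (by rw [cx_apply, hc, neg_zero])
    rw [cx_apply] at this
    linarith
  · intro h hh
    obtain ⟨i, t, ht, rfl⟩ := ox_circ hh
    rw [map_smul]
    by_cases hi : ∃ k, σ k = i
    · obtain ⟨k, rfl⟩ := hi
      rw [pr_single]
      exact g0_not_ry h01 h02 h12 k t
    · push Not at hi
      rw [pr_single' _ _ _ hi, smul_zero]
      exact (g0_ne h01 h02 h12).symm

lemma cone_h2 (h01 : i0 ≠ i1) (h02 : i0 ≠ i2) (h12 : i1 ≠ i2) (σ : Option N ↪ M) (g : N → ℝ) (h : edir (cx i0 i1 i2) (fun _ => 0) g) :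
    ∃ h, circ (ox (M := M)) h ∧ pr (ry i0 i1 i2) σ h = g := by
  obtain ⟨k, t, ht, rfl⟩ := edir_cone h01 h02 h12 h
  exact ⟨t • Pi.single (σ k) 1, circ_ox _ ht, by rw [map_smul, pr_single]⟩

lemma cone_h3 (h01 : i0 ≠ i1) (h02 : i0 ≠ i2) (h12 : i1 ≠ i2) (σ : Option N ↪ M) (h : M → ℝ) (hh : circ (ox (M := M)) h)
    (hc : circ (cx i0 i1 i2) (pr (ry i0 i1 i2) σ h)) :
    edir (cx i0 i1 i2) (fun _ => 0) (pr (ry i0 i1 i2) σ h) := by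
  obtain ⟨i, t, ht, rfl⟩ := ox_circ hh
  rw [map_smul] at hc ⊢
  by_cases hi : ∃ k, σ k = i
  · obtain ⟨k, rfl⟩ := hi
    rw [pr_single]
    exact edir_ry h01 h02 h12 k ht
  · push Not at hi
    rw [pr_single' _ _ _ hi, smul_zero] at hc
    exact absurd rfl hc.1

lemma cone_edges (h01 : i0 ≠ i1) (h02 : i0 ≠ i2) (h12 : i1 ≠ i2) :
    {F | IsEdge (Pol (cx i0 i1 i2) (fun _ => 0)) F}.ncard = Fintype.card (Option N) := by
  have hne := (cx_good h01 h02 h12).ne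
  have : {F | IsEdge (Pol (cx i0 i1 i2) (fun _ => 0)) F} =
      Set.range (fun k => FF (cx i0 i1 i2) (fun _ => 0) (ry i0 i1 i2 k)) := by
    ext F
    simp only [Set.mem_ofPred_eq, Set.mem_range]
    rw [edge_iff hne]
    constructor
    · rintro ⟨x, hx, rfl, hr⟩
      rcases cone_dich h01 h02 h12 hx with rfl | ⟨k, hk⟩
      · exfalso
        have : tker (cx i0 i1 i2) (fun _ => 0) 0 = ⊥ := by
          rw [Submodule.eq_bot_iff]
          exact fun y hy => tker_czero h01 h02 h12 hy
        rw [this] at hr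
        simp at hr
      · have hx' : x ∈ tker (cx i0 i1 i2) (fun _ => 0) x := fun k hk => hk
        rw [finrank_one_iff (ry_ne h01 h02 h12 k) hk] at hr
        obtain ⟨t, rfl⟩ := hr _ hx'
        have ht0 : t ≠ 0 := by
          rintro rfl
          rw [zero_smul] at hk
          exact ry_ne h01 h02 h12 k (tker_czero h01 h02 h12 hk)
        refine ⟨k, ?_⟩
        ext y
        simp [FF, ht0]
    · rintro ⟨k, rfl⟩
      refine ⟨_, ry_mem h01 h02 h12 k, rfl, ?_⟩
      rw [finrank_one_iff (ry_ne h01 h02 h12 k) (fun k hk => hk)]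
      exact fun y hy => tker_ry h01 h02 h12 hy
  rw [this, ← Set.image_univ, Set.ncard_image_of_injective, Set.ncard_univ,
    Nat.card_eq_fintype_card]
  intro k l hkl
  by_contra hne'
  obtain ⟨c, hc1, hc2⟩ := ry_sep h01 h02 h12 k l hne'
  have hm : ry i0 i1 i2 l ∈ FF (cx i0 i1 i2) (fun _ => 0) (ry i0 i1 i2 k) := by
    have := self_mem_FF (ry_mem h01 h02 h12 l)
    simp only at hkl
    rwa [hkl]
  have := hm.2 c (by rw [cx_apply, hc1, neg_zero])
  rw [cx_apply] at this
  exact hc2 (by linarith)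

lemma cone_scale (h01 : i0 ≠ i1) (h02 : i0 ≠ i2) (h12 : i1 ≠ i2) : ∀ x ∈ Pol (cx i0 i1 i2) (fun _ => 0), ∀ t : ℝ, 0 ≤ t →
    t • x ∈ Pol (cx i0 i1 i2) (fun _ => 0) := by
  intro x hx t ht
  rw [mem_cone h01 h02 h12] at hx ⊢
  intro c
  rw [map_smul, smul_eq_mul]
  exact mul_nonneg ht (hx c)

end Cone

section Polytope

variable {N M : Type} [Fintype N] [DecidableEq N] [Fintype M] [DecidableEq M]

/-- rows of the polytope description -/
def px (i0 i1 i2 : N) : Option (Option N) → ((N → ℝ) →ₗ[ℝ] ℝ)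
  | none => el i0 i1
  | some c => - fr i0 i1 i2 c

/-- vertices of the polytope -/
def V (i0 i1 i2 : N) : Option (Option N) → N → ℝ
  | none => 0
  | some k => (el i0 i1 (ry i0 i1 i2 k))⁻¹ • ry i0 i1 i2 k

lemma px_none (i0 i1 i2 : N) (x : N → ℝ) : px i0 i1 i2 none x = el i0 i1 x := rfl

lemma px_some (i0 i1 i2 : N) (c : Option N) (x : N → ℝ) :
    px i0 i1 i2 (some c) x = - fr i0 i1 i2 c x := rfl

lemma V_none (i0 i1 i2 : N) : V i0 i1 i2 none = 0 := rfl

lemma V_some (i0 i1 i2 : N) (k : Option N) :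
    V i0 i1 i2 (some k) = (el i0 i1 (ry i0 i1 i2 k))⁻¹ • ry i0 i1 i2 k := rfl

/-- the common tight rows of two vertices determine the direction between them -/
def Adj (i0 i1 i2 : N) (k l : Option (Option N)) : Prop :=
  ∀ y, (∀ r, px i0 i1 i2 r (V i0 i1 i2 k) = sd r → px i0 i1 i2 r (V i0 i1 i2 l) = sd r →
    px i0 i1 i2 r y = 0) → ∃ t : ℝ, y = t • (V i0 i1 i2 k - V i0 i1 i2 l)

lemma Adj.symm {i0 i1 i2 : N} {k l : Option (Option N)} (h : Adj i0 i1 i2 k l) :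
    Adj i0 i1 i2 l k := by
  intro y hy
  obtain ⟨t, rfl⟩ := h y fun r h1 h2 => hy r h2 h1
  exact ⟨-t, by module⟩

variable {i0 i1 i2 : N}

lemma mem_poly (h01 : i0 ≠ i1) (h02 : i0 ≠ i2) (h12 : i1 ≠ i2) {x : N → ℝ} : x ∈ Pol (px i0 i1 i2) sd ↔
    el i0 i1 x ≤ 1 ∧ ∀ c, 0 ≤ fr i0 i1 i2 c x := by
  constructor
  · intro h
    refine ⟨h none, fun c => ?_⟩
    have := h (some c)
    rw [px_some] at this
    simp only [sd] at this
    linarith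
  · rintro ⟨h1, h2⟩ (_ | c)
    · exact h1
    · have := h2 c
      rw [px_some]
      simp only [sd]
      linarith

lemma el_V (h01 : i0 ≠ i1) (h02 : i0 ≠ i2) (h12 : i1 ≠ i2) (k : Option N) : el i0 i1 (V i0 i1 i2 (some k)) = 1 := by
  rw [V_some, map_smul, smul_eq_mul, inv_mul_cancel₀ (el_ry_pos h01 h02 h12 k).ne']

lemma fr_V_nonneg (h01 : i0 ≠ i1) (h02 : i0 ≠ i2) (h12 : i1 ≠ i2) (c k : Option N) : 0 ≤ fr i0 i1 i2 c (V i0 i1 i2 (some k)) := by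
  rw [V_some, map_smul, smul_eq_mul]
  exact mul_nonneg (inv_nonneg.2 (el_ry_pos h01 h02 h12 k).le) (fr_ry_nonneg h01 h02 h12 c k)

lemma fr_V_zero (h01 : i0 ≠ i1) (h02 : i0 ≠ i2) (h12 : i1 ≠ i2) (c k : Option N) : fr i0 i1 i2 c (V i0 i1 i2 (some k)) = 0 ↔
    fr i0 i1 i2 c (ry i0 i1 i2 k) = 0 := by
  rw [V_some, map_smul, smul_eq_mul, mul_eq_zero]
  simp [(el_ry_pos h01 h02 h12 k).ne']

lemma V_mem (h01 : i0 ≠ i1) (h02 : i0 ≠ i2) (h12 : i1 ≠ i2) (k : Option (Option N)) : V i0 i1 i2 k ∈ Pol (px i0 i1 i2) sd := by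
  rw [mem_poly h01 h02 h12]
  rcases k with _ | k
  · simp [V_none]
  · exact ⟨(el_V h01 h02 h12 k).le, fun c => fr_V_nonneg h01 h02 h12 c k⟩

lemma px_tight_some (h01 : i0 ≠ i1) (h02 : i0 ≠ i2) (h12 : i1 ≠ i2) {c k : Option N} (h : fr i0 i1 i2 c (ry i0 i1 i2 k) = 0) :
    px i0 i1 i2 (some c) (V i0 i1 i2 (some k)) = sd (some c) := by
  rw [px_some, (fr_V_zero h01 h02 h12 c k).2 h]
  simp [sd]

lemma V_inj (h01 : i0 ≠ i1) (h02 : i0 ≠ i2) (h12 : i1 ≠ i2) : Function.Injective (V i0 i1 i2) := by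
  rintro (_ | k) (_ | l) h
  · rfl
  · have := el_V h01 h02 h12 l
    rw [← h, V_none, map_zero] at this
    norm_num at this
  · have := el_V h01 h02 h12 k
    rw [h, V_none, map_zero] at this
    norm_num at this
  · by_contra hne
    obtain ⟨c, h1, h2⟩ := ry_sep h01 h02 h12 k l (fun e => hne (by rw [e]))
    rw [← fr_V_zero h01 h02 h12, h, fr_V_zero h01 h02 h12] at h1
    exact h2 h1

lemma V_sub_ne (h01 : i0 ≠ i1) (h02 : i0 ≠ i2) (h12 : i1 ≠ i2) {k l : Option (Option N)} (h : k ≠ l) : V i0 i1 i2 k - V i0 i1 i2 l ≠ 0 :=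
  fun e => h (V_inj h01 h02 h12 (sub_eq_zero.1 e))

lemma el_one (h01 : i0 ≠ i1) (h02 : i0 ≠ i2) (h12 : i1 ≠ i2) : 0 < el i0 i1 (fun _ : N => (1 : ℝ)) := by
  rw [el_apply]
  simp
  positivity

lemma px_good (h01 : i0 ≠ i1) (h02 : i0 ≠ i2) (h12 : i1 ≠ i2) : Good (px i0 i1 i2) sd where
  int := by
    have hp := el_one h01 h02 h12
    refine ⟨(2 * el i0 i1 (fun _ : N => (1 : ℝ)))⁻¹ • fun _ => 1, ?_⟩
    rintro (_ | c)
    · rw [px_none, map_smul, smul_eq_mul, mul_inv, mul_assoc, inv_mul_cancel₀ hp.ne']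
      simp only [sd]
      norm_num
    · rw [px_some, map_smul, smul_eq_mul]
      have := mul_pos (inv_pos.2 (mul_pos two_pos hp)) (int_fr h01 h02 h12 c)
      simp only [sd]
      linarith
  fac := by
    rintro (_ | c)
    · have hp := el_one h01 h02 h12
      refine ⟨(el i0 i1 (fun _ : N => (1 : ℝ)))⁻¹ • fun _ => 1, ?_, ?_⟩
      · rw [px_none, map_smul, smul_eq_mul, inv_mul_cancel₀ hp.ne']
        rfl
      · rintro (_ | c) hc
        · exact absurd rfl hc
        · rw [px_some, map_smul, smul_eq_mul]
          have := mul_pos (inv_pos.2 hp) (int_fr h01 h02 h12 c)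
          simp only [sd]
          linarith
    · obtain ⟨x, hx, hx'⟩ := fac_fr h01 h02 h12 c
      have hp : 0 < |el i0 i1 x| + 1 := by positivity
      refine ⟨(|el i0 i1 x| + 1)⁻¹ • x, ?_, ?_⟩
      · rw [px_some, map_smul, hx]
        simp [sd]
      · rintro (_ | l) hl
        · rw [px_none, map_smul, smul_eq_mul, inv_mul_lt_iff₀ hp]
          simp only [sd]
          have := le_abs_self (el i0 i1 x)
          linarith
        · rw [px_some, map_smul, smul_eq_mul]
          have := mul_pos (inv_pos.2 hp) (hx' l (fun e => hl (by rw [e])))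
          simp only [sd]
          linarith
  inj := fun g h => inj_fr h01 h02 h12 g fun c => by
    have := h (some c)
    rw [px_some] at this
    linarith

lemma poly_gen (h01 : i0 ≠ i1) (h02 : i0 ≠ i2) (h12 : i1 ≠ i2) {x : N → ℝ} (hx : x ∈ Pol (px i0 i1 i2) sd) :
    ∃ w : Option N → ℝ, (∀ k, 0 ≤ w k) ∧ ∑ k, w k ≤ 1 ∧
      x = ∑ k, w k • V i0 i1 i2 (some k) := by
  rw [mem_poly h01 h02 h12] at hx
  obtain ⟨w, hw, rfl⟩ := cone_gen h01 h02 h12 x hx.2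
  refine ⟨fun k => w k * el i0 i1 (ry i0 i1 i2 k),
    fun k => mul_nonneg (hw k) (el_ry_pos h01 h02 h12 k).le, ?_, ?_⟩
  · have := hx.1
    simpa only [map_sum, map_smul, smul_eq_mul] using this
  · apply Finset.sum_congr rfl
    intro k _
    rw [V_some, smul_smul, mul_assoc, mul_inv_cancel₀ (el_ry_pos h01 h02 h12 k).ne', mul_one]

lemma poly_image (h01 : i0 ≠ i1) (h02 : i0 ≠ i2) (h12 : i1 ≠ i2) (σ : Option N ↪ M) :
    (fun x => pr (fun k => V i0 i1 i2 (some k)) σ x) '' Pol (sx (M := M)) sd =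
      Pol (px i0 i1 i2) sd := by
  ext x
  constructor
  · rintro ⟨y, hy, rfl⟩
    have hy0 : ∀ i, 0 ≤ y i := by
      intro i
      have := hy (some i)
      rw [sx_some] at this
      simp only [sd] at this
      linarith
    have hy1 : ∑ i, y i ≤ 1 := by
      have := hy none
      rwa [sx_none] at this
    rw [mem_poly h01 h02 h12]
    constructor
    · simp only [pr_apply, map_sum, map_smul, smul_eq_mul, el_V h01 h02 h12, mul_one]
      refine le_trans ?_ hy1
      rw [← Finset.sum_map Finset.univ σ y]
      exact Finset.sum_le_univ_sum_of_nonneg hy0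
    · intro c
      simp only [pr_apply, map_sum, map_smul, smul_eq_mul]
      exact Finset.sum_nonneg fun k _ => mul_nonneg (hy0 _) (fr_V_nonneg h01 h02 h12 c k)
  · intro hx
    obtain ⟨w, hw, hw1, rfl⟩ := poly_gen h01 h02 h12 hx
    refine ⟨lift σ w, ?_, ?_⟩
    · rintro (_ | i)
      · rw [sx_none, lift_sum]
        exact hw1
      · have := lift_nonneg σ w hw i
        rw [sx_some]
        simp only [sd]
        linarith
    · simp only [pr_apply, lift_apply]

lemma poly_dich (h01 : i0 ≠ i1) (h02 : i0 ≠ i2) (h12 : i1 ≠ i2) {x : N → ℝ} (hx : x ∈ Pol (px i0 i1 i2) sd) :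
    (∃ k, x = V i0 i1 i2 k) ∨
      ∃ k l, k ≠ l ∧ V i0 i1 i2 k - V i0 i1 i2 l ∈ tker (px i0 i1 i2) sd x := by
  have : ∃ w : Option (Option N) → ℝ, (∀ k, 0 ≤ w k) ∧ ∑ k, w k = 1 ∧
      x = ∑ k, w k • V i0 i1 i2 k := by
    obtain ⟨w, hw, hw1, rfl⟩ := poly_gen h01 h02 h12 hx
    refine ⟨fun o => o.elim (1 - ∑ k, w k) w, ?_, ?_, ?_⟩
    · rintro (_ | k)
      · simp only [Option.elim]
        linarith
      · exact hw k
    · rw [Fintype.sum_option]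
      simp only [Option.elim]
      ring
    · rw [Fintype.sum_option (f := fun o : Option (Option N) => _ • V i0 i1 i2 o)]
      simp [V_none]
  obtain ⟨w, hw, hw1, hxw⟩ := this
  have tight : ∀ k, w k ≠ 0 → ∀ r, px i0 i1 i2 r x = sd r →
      px i0 i1 i2 r (V i0 i1 i2 k) = sd r := by
    intro k hk r hr
    have hs : ∑ l, w l * (sd r - px i0 i1 i2 r (V i0 i1 i2 l)) = 0 := by
      simp only [mul_sub, Finset.sum_sub_distrib, ← Finset.sum_mul, hw1]
      rw [hxw] at hr
      simp only [map_sum, map_smul, smul_eq_mul] at hr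
      rw [hr]
      ring
    rw [Finset.sum_eq_zero_iff_of_nonneg
      (fun l _ => mul_nonneg (hw l) (sub_nonneg.2 (V_mem h01 h02 h12 l r)))] at hs
    have := (mul_eq_zero.1 (hs k (Finset.mem_univ k))).resolve_left hk
    linarith
  have hk : ∃ k, w k ≠ 0 := by
    by_contra hno
    push Not at hno
    simp [hno] at hw1
  obtain ⟨k, hk⟩ := hk
  by_cases hl : ∃ l, l ≠ k ∧ w l ≠ 0
  · obtain ⟨l, hlk, hl⟩ := hl
    refine Or.inr ⟨k, l, hlk.symm, fun r hr => ?_⟩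
    rw [map_sub, tight k hk r hr, tight l hl r hr, sub_self]
  · push Not at hl
    left
    refine ⟨k, ?_⟩
    rw [Finset.sum_eq_single k (fun l _ h => hl l h) (by simp)] at hw1
    rw [Finset.sum_eq_single k (fun l _ h => by rw [hl l h, zero_smul]) (by simp), hw1,
      one_smul] at hxw
    exact hxw

lemma tker_V (h01 : i0 ≠ i1) (h02 : i0 ≠ i2) (h12 : i1 ≠ i2) (k : Option (Option N)) {y : N → ℝ}
    (hy : y ∈ tker (px i0 i1 i2) sd (V i0 i1 i2 k)) : y = 0 := by
  rcases k with _ | k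
  · apply inj_fr h01 h02 h12
    intro c
    have := hy (some c) (by rw [V_none, map_zero]; rfl)
    rw [px_some] at this
    linarith
  · obtain ⟨t, rfl⟩ := ray_ker h01 h02 h12 k y (fun c hc => by
      have := hy (some c) (px_tight_some h01 h02 h12 hc)
      rw [px_some] at this
      linarith)
    have := hy none (el_V h01 h02 h12 k)
    rw [px_none, map_smul, smul_eq_mul] at this
    rw [(mul_eq_zero.1 this).resolve_right (el_ry_pos h01 h02 h12 k).ne', zero_smul]

lemma poly_vertices (h01 : i0 ≠ i1) (h02 : i0 ≠ i2) (h12 : i1 ≠ i2) :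
    {v | IsVertex (Pol (px i0 i1 i2) sd) v}.ncard = Fintype.card (Option (Option N)) := by
  have : {v | IsVertex (Pol (px i0 i1 i2) sd) v} = Set.range (V i0 i1 i2) := by
    ext v
    simp only [Set.mem_ofPred_eq, Set.mem_range]
    rw [vertex_iff (px_good h01 h02 h12).ne]
    constructor
    · rintro ⟨hv, h⟩
      rcases poly_dich h01 h02 h12 hv with ⟨k, rfl⟩ | ⟨k, l, hkl, hm⟩
      · exact ⟨k, rfl⟩
      · exact absurd (h _ hm) (V_sub_ne h01 h02 h12 hkl)
    · rintro ⟨k, rfl⟩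
      exact ⟨V_mem h01 h02 h12 k, fun y hy => tker_V h01 h02 h12 k hy⟩
  rw [this, ← Set.image_univ, Set.ncard_image_of_injective _ (V_inj h01 h02 h12),
    Set.ncard_univ, Nat.card_eq_fintype_card]

lemma edir_poly (h01 : i0 ≠ i1) (h02 : i0 ≠ i2) (h12 : i1 ≠ i2) {g : N → ℝ} (h : edir (px i0 i1 i2) sd g) :
    ∃ k l, ∃ t : ℝ, t ≠ 0 ∧ k ≠ l ∧ g = t • (V i0 i1 i2 k - V i0 i1 i2 l) := by
  obtain ⟨hg, x, hx, hgx, h⟩ := h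
  rcases poly_dich h01 h02 h12 hx with ⟨k, rfl⟩ | ⟨k, l, hkl, hm⟩
  · exact absurd (tker_V h01 h02 h12 k hgx) hg
  · obtain ⟨t, ht⟩ := h _ hm
    have ht0 : t ≠ 0 := by
      rintro rfl
      rw [zero_smul] at ht
      exact V_sub_ne h01 h02 h12 hkl ht
    exact ⟨k, l, t⁻¹, inv_ne_zero ht0, hkl,
      by rw [ht, smul_smul, inv_mul_cancel₀ ht0, one_smul]⟩

lemma Adj.edir (h01 : i0 ≠ i1) (h02 : i0 ≠ i2) (h12 : i1 ≠ i2) {k l : Option (Option N)} (h : Adj i0 i1 i2 k l) (hkl : k ≠ l) {s : ℝ}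
    (hs : s ≠ 0) : edir (px i0 i1 i2) sd (s • (V i0 i1 i2 k - V i0 i1 i2 l)) := by
  have hk := V_mem h01 h02 h12 k
  have hl := V_mem h01 h02 h12 l
  refine ⟨smul_ne_zero hs (V_sub_ne h01 h02 h12 hkl),
    (1/2 : ℝ) • (V i0 i1 i2 k + V i0 i1 i2 l), Pol_mid hk hl, ?_, ?_⟩
  · intro r hr
    have a := hk r
    have b := hl r
    rw [map_smul, map_add, smul_eq_mul] at hr
    have : px i0 i1 i2 r (V i0 i1 i2 k) = px i0 i1 i2 r (V i0 i1 i2 l) := by linarith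
    rw [map_smul, map_sub, this, sub_self, smul_zero]
  · intro y hy
    obtain ⟨t, rfl⟩ := h y (fun r h1 h2 => hy r (by
      rw [map_smul, map_add, h1, h2, smul_eq_mul]
      ring))
    exact ⟨t / s, by rw [smul_smul, div_mul_cancel₀ _ hs]⟩

lemma adj_none (h01 : i0 ≠ i1) (h02 : i0 ≠ i2) (h12 : i1 ≠ i2) (k : Option N) : Adj i0 i1 i2 (some k) none := by
  intro y hy
  obtain ⟨t, rfl⟩ := ray_ker h01 h02 h12 k y (fun c hc => by
    have := hy (some c) (px_tight_some h01 h02 h12 hc) (by rw [V_none, map_zero]; rfl)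
    rw [px_some] at this
    linarith)
  refine ⟨t * el i0 i1 (ry i0 i1 i2 k), ?_⟩
  rw [V_none, sub_zero, V_some, smul_smul, mul_assoc,
    mul_inv_cancel₀ (el_ry_pos h01 h02 h12 k).ne', mul_one]

lemma adj_some (h01 : i0 ≠ i1) (h02 : i0 ≠ i2) (h12 : i1 ≠ i2) {k l : Option N} (hkl : k ≠ l) {s : ℝ}
    (hc : circ (px i0 i1 i2) (s • (V i0 i1 i2 (some k) - V i0 i1 i2 (some l)))) :
    Adj i0 i1 i2 (some k) (some l) := by
  have pk := el_ry_pos h01 h02 h12 k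
  have pl := el_ry_pos h01 h02 h12 l
  rcases pair_ker h01 h02 h12 k l hkl with hp | hd
  · intro y hy
    obtain ⟨a, b, rfl⟩ := hp y (fun c h1 h2 => by
      have := hy (some c) (px_tight_some h01 h02 h12 h1) (px_tight_some h01 h02 h12 h2)
      rw [px_some] at this
      linarith)
    have he := hy none (el_V h01 h02 h12 k) (el_V h01 h02 h12 l)
    rw [px_none, map_add, map_smul, map_smul, smul_eq_mul, smul_eq_mul] at he
    refine ⟨a * el i0 i1 (ry i0 i1 i2 k), ?_⟩
    have e1 : a * el i0 i1 (ry i0 i1 i2 k) * (el i0 i1 (ry i0 i1 i2 k))⁻¹ = a := by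
      field_simp
    have e2 : a * el i0 i1 (ry i0 i1 i2 k) * (el i0 i1 (ry i0 i1 i2 l))⁻¹ = - b := by
      rw [mul_inv_eq_iff_eq_mul₀ pl.ne']
      linarith
    rw [V_some, V_some, smul_sub, smul_smul, smul_smul, e1, e2]
    module
  · exfalso
    obtain ⟨hne, hc⟩ := hc
    have hs : s ≠ 0 := by
      rintro rfl
      simp at hne
    have hnz : ∀ c, (c = none ∨ c = some i0 ∨ c = some i1 ∨ c = some i2) →
        fr i0 i1 i2 c (s • (V i0 i1 i2 (some k) - V i0 i1 i2 (some l))) ≠ 0 := by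
      intro c hcs
      rw [map_smul, map_sub, smul_eq_mul]
      apply mul_ne_zero hs
      rcases hd c hcs with ⟨h1, h2⟩ | ⟨h1, h2⟩
      · rw [(fr_V_zero h01 h02 h12 c l).2 h2, sub_zero, Ne, fr_V_zero h01 h02 h12]
        exact h1.ne'
      · rw [(fr_V_zero h01 h02 h12 c k).2 h1, zero_sub, neg_ne_zero, Ne, fr_V_zero h01 h02 h12]
        exact h2.ne'
    obtain ⟨t, ht⟩ := hc (Pi.single i1 1 - (2 : ℝ) • Pi.single i2 1) (by
      rintro (_ | c) hr
      · rw [px_none, el_apply]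
        simp [h01, h02, h12, Finset.sum_sub_distrib, ← Finset.mul_sum]
        norm_num
      · rw [px_some, neg_eq_zero] at hr ⊢
        rcases opt_cases h01 h02 h12 c with h | h | h | h | ⟨i, rfl, a0, a1, a2⟩
        · exact absurd hr (hnz c (by tauto))
        · exact absurd hr (hnz c (by tauto))
        · exact absurd hr (hnz c (by tauto))
        · exact absurd hr (hnz c (by tauto))
        · rw [fr_some _ _ _ a2]
          simp [a1, a2])
    have e0 := congrArg (fr i0 i1 i2 (some i0)) ht
    rw [map_smul, smul_eq_mul, fr_some _ _ _ h02] at e0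
    simp only [Pi.sub_apply, Pi.smul_apply, Pi.single_apply, h01, h02, if_false] at e0
    have ht0 : t = 0 := by
      have := hnz (some i0) (by tauto)
      rcases mul_eq_zero.1 (by rw [← e0]; simp : t * _ = 0) with h | h
      · exact h
      · exact absurd h this
    rw [ht0, zero_smul] at ht
    have := congrFun ht i1
    simp [h12] at this

lemma pr_W (h01 : i0 ≠ i1) (h02 : i0 ≠ i2) (h12 : i1 ≠ i2) (σ : Option N ↪ M) (i : Option M) :
    ∃ k, pr (fun k => V i0 i1 i2 (some k)) σ (W i) = V i0 i1 i2 k := by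
  rcases i with _ | i
  · exact ⟨none, by rw [V_none]; simp [W]⟩
  · by_cases hi : ∃ k, σ k = i
    · obtain ⟨k, rfl⟩ := hi
      exact ⟨some k, by simp only [W]; rw [pr_single]⟩
    · push Not at hi
      exact ⟨none, by simp only [W]; rw [pr_single' _ _ _ hi, V_none]⟩

lemma pr_W' (h01 : i0 ≠ i1) (h02 : i0 ≠ i2) (h12 : i1 ≠ i2) (σ : Option N ↪ M) (k : Option (Option N)) :
    pr (fun k => V i0 i1 i2 (some k)) σ (W (k.map σ)) = V i0 i1 i2 k := by
  rcases k with _ | k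
  · rw [V_none]; simp [W]
  · simp only [W, Option.map]; rw [pr_single]

lemma g0_not_V (h01 : i0 ≠ i1) (h02 : i0 ≠ i2) (h12 : i1 ≠ i2) (k l : Option (Option N)) (t : ℝ) :
    t • (V i0 i1 i2 k - V i0 i1 i2 l) ≠ g0 i0 i2 := by
  intro h
  have e := congrArg (el i0 i1) h
  have v : el i0 i1 (g0 i0 i2) = 1 := by
    rw [el_apply]
    simp [g0, h01, h02, h12, h01.symm, Finset.sum_sub_distrib]
  rw [v, map_smul, map_sub, smul_eq_mul] at e
  rcases k with _ | k <;> rcases l with _ | l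
  · simp [V_none] at e
  · rw [V_none, zero_sub, smul_neg, ← neg_smul, V_some, smul_smul] at h
    exact g0_not_ry h01 h02 h12 _ _ h
  · rw [V_none, sub_zero, V_some, smul_smul] at h
    exact g0_not_ry h01 h02 h12 _ _ h
  · rw [el_V h01 h02 h12, el_V h01 h02 h12] at e
    simp at e

lemma poly_h1 (h01 : i0 ≠ i1) (h02 : i0 ≠ i2) (h12 : i1 ≠ i2) (σ : Option N ↪ M) :
    ∃ g, circ (px i0 i1 i2) g ∧
      ∀ h, circ (sx (M := M)) h → pr (fun k => V i0 i1 i2 (some k)) σ h ≠ g := by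
  refine ⟨g0 i0 i2, ⟨g0_ne h01 h02 h12, fun y hy => g0_ker h01 h02 h12 ?_⟩, ?_⟩
  · intro c hc
    have := hy (some c) (by rw [px_some, hc, neg_zero])
    rw [px_some] at this
    linarith
  · intro h hh
    obtain ⟨i, j, t, ht, hij, rfl⟩ := sx_circ hh
    obtain ⟨k, hk⟩ := pr_W h01 h02 h12 σ i
    obtain ⟨l, hl⟩ := pr_W h01 h02 h12 σ j
    rw [map_smul, map_sub, hk, hl]
    exact g0_not_V h01 h02 h12 k l t

lemma poly_h2 (h01 : i0 ≠ i1) (h02 : i0 ≠ i2) (h12 : i1 ≠ i2) (σ : Option N ↪ M) (g : N → ℝ) (h : edir (px i0 i1 i2) sd g) :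
    ∃ h, circ (sx (M := M)) h ∧ pr (fun k => V i0 i1 i2 (some k)) σ h = g := by
  obtain ⟨k, l, t, ht, hkl, rfl⟩ := edir_poly h01 h02 h12 h
  refine ⟨t • (W (k.map σ) - W (l.map σ)), circ_sx ?_ ht, ?_⟩
  · exact fun e => hkl (Option.map_injective σ.injective e)
  · rw [map_smul, map_sub, pr_W' h01 h02 h12, pr_W' h01 h02 h12]

lemma poly_h3 (h01 : i0 ≠ i1) (h02 : i0 ≠ i2) (h12 : i1 ≠ i2) (σ : Option N ↪ M) (h : M → ℝ) (hh : circ (sx (M := M)) h)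
    (hc : circ (px i0 i1 i2) (pr (fun k => V i0 i1 i2 (some k)) σ h)) :
    edir (px i0 i1 i2) sd (pr (fun k => V i0 i1 i2 (some k)) σ h) := by
  obtain ⟨i, j, t, ht, hij, rfl⟩ := sx_circ hh
  obtain ⟨k, hk⟩ := pr_W h01 h02 h12 σ i
  obtain ⟨l, hl⟩ := pr_W h01 h02 h12 σ j
  rw [map_smul, map_sub, hk, hl] at hc ⊢
  have hkl : k ≠ l := by
    rintro rfl
    apply hc.1
    simp
  refine Adj.edir h01 h02 h12 ?_ hkl ht
  rcases k with _ | k <;> rcases l with _ | l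
  · exact absurd rfl hkl
  · exact (adj_none h01 h02 h12 l).symm
  · exact adj_none h01 h02 h12 k
  · exact adj_some h01 h02 h12 (fun e => hkl (by rw [e])) hc

lemma poly_bdd (h01 : i0 ≠ i1) (h02 : i0 ≠ i2) (h12 : i1 ≠ i2) (σ : Option N ↪ M) : Bornology.IsBounded (Pol (px i0 i1 i2) sd) := by
  rw [← poly_image h01 h02 h12 σ]
  have hb : Bornology.IsBounded (Pol (sx (M := M)) sd) := by
    refine (Metric.isBounded_Icc (0 : M → ℝ) 1).subset ?_
    intro y hy
    have hy0 : ∀ i, 0 ≤ y i := by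
      intro i
      have := hy (some i)
      rw [sx_some] at this
      simp only [sd] at this
      linarith
    have hy1 : ∑ i, y i ≤ 1 := by
      have := hy none
      rwa [sx_none] at this
    exact ⟨hy0, fun i =>
      (Finset.single_le_sum (fun j _ => hy0 j) (Finset.mem_univ i)).trans hy1⟩
  exact (LinearMap.toContinuousLinearMap
    (pr (fun k => V i0 i1 i2 (some k)) σ)).lipschitz.isBounded_image hb

end Polytope
/-- For all `m > n ≥ 3` there exist full-dimensional pointed polyhedra
`P ⊂ ℝⁿ`, `Q ⊂ ℝᵐ` (with irredundant descriptions) and a linear `π` with `π(Q) = P` such that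
`C(P) ⊄ π(C(Q))` and `C(P) ∩ π(C(Q))` is exactly the set of edge directions of `P`; this is
achieved once with `Q` simple and `P` a polytope with exactly `n+2` facets and `n+2` vertices,
and once with `Q` simple and `P` a pointed cone with exactly `n+1` facets and `n+1` edges. -/
theorem stmt_8 (n m : ℕ) (hn : 3 ≤ n) (hm : n < m) :
    (∃ (pP qP pQ qQ : ℕ)
      (AP : Matrix (Fin pP) (Fin n) ℝ) (bP : Fin pP → ℝ)
      (BP : Matrix (Fin qP) (Fin n) ℝ) (dP : Fin qP → ℝ)
      (AQ : Matrix (Fin pQ) (Fin m) ℝ) (bQ : Fin pQ → ℝ)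
      (BQ : Matrix (Fin qQ) (Fin m) ℝ) (dQ : Fin qQ → ℝ)
      (P : Set (Fin n → ℝ)) (Q : Set (Fin m → ℝ))
      (π : (Fin m → ℝ) →ₗ[ℝ] (Fin n → ℝ)),
      Irredundant AP bP BP dP P ∧ Irredundant AQ bQ BQ dQ Q ∧
      PointedSet P ∧ PointedSet Q ∧ spanDim P = n ∧ spanDim Q = m ∧
      (fun x => π x) '' Q = P ∧
      ¬ (circuits AP BP ⊆ (fun x => π x) '' circuits AQ BQ) ∧
      circuits AP BP ∩ (fun x => π x) '' circuits AQ BQ = {g | IsEdgeDirection P g} ∧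
      -- Q is simple: every vertex of Q lies in exactly m facets
      (∀ v, IsVertex Q v → {F | IsFacet Q F ∧ v ∈ F}.ncard = m) ∧
      -- P is a polytope with exactly n+2 facets and exactly n+2 vertices
      Bornology.IsBounded P ∧
      {F | IsFacet P F}.ncard = n + 2 ∧
      {v | IsVertex P v}.ncard = n + 2) ∧
    (∃ (pP qP pQ qQ : ℕ)
      (AP : Matrix (Fin pP) (Fin n) ℝ) (bP : Fin pP → ℝ)
      (BP : Matrix (Fin qP) (Fin n) ℝ) (dP : Fin qP → ℝ)
      (AQ : Matrix (Fin pQ) (Fin m) ℝ) (bQ : Fin pQ → ℝ)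
      (BQ : Matrix (Fin qQ) (Fin m) ℝ) (dQ : Fin qQ → ℝ)
      (P : Set (Fin n → ℝ)) (Q : Set (Fin m → ℝ))
      (π : (Fin m → ℝ) →ₗ[ℝ] (Fin n → ℝ)),
      Irredundant AP bP BP dP P ∧ Irredundant AQ bQ BQ dQ Q ∧
      PointedSet P ∧ PointedSet Q ∧ spanDim P = n ∧ spanDim Q = m ∧
      (fun x => π x) '' Q = P ∧
      ¬ (circuits AP BP ⊆ (fun x => π x) '' circuits AQ BQ) ∧
      circuits AP BP ∩ (fun x => π x) '' circuits AQ BQ = {g | IsEdgeDirection P g} ∧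
      (∀ v, IsVertex Q v → {F | IsFacet Q F ∧ v ∈ F}.ncard = m) ∧
      -- P is a pointed polyhedral cone with exactly n+1 facets and n+1 edges
      (∀ x ∈ P, ∀ t : ℝ, 0 ≤ t → t • x ∈ P) ∧
      {F | IsFacet P F}.ncard = n + 1 ∧
      {F | IsEdge P F}.ncard = n + 1) := by
  have h01 : (⟨0, by omega⟩ : Fin n) ≠ ⟨1, by omega⟩ := by simp
  have h02 : (⟨0, by omega⟩ : Fin n) ≠ ⟨2, by omega⟩ := by simp
  have h12 : (⟨1, by omega⟩ : Fin n) ≠ ⟨2, by omega⟩ := by simp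
  obtain ⟨σ⟩ : Nonempty (Option (Fin n) ↪ Fin m) :=
    Function.Embedding.nonempty_of_card_le (by simp; omega)
  have : Nonempty (Fin m) := ⟨⟨0, by omega⟩⟩
  refine ⟨?_, ?_⟩
  · refine pack _ (px_good h01 h02 h12) sx_good (poly_image h01 h02 h12 σ)
      (poly_h1 h01 h02 h12 σ) (poly_h2 h01 h02 h12 σ) (poly_h3 h01 h02 h12 σ)
      (fun v _ hv => by simpa using sx_simple v hv)
      (fun P => Bornology.IsBounded P ∧ {F | IsFacet P F}.ncard = n + 2 ∧
        {v | IsVertex P v}.ncard = n + 2) ⟨poly_bdd h01 h02 h12 σ, ?_, ?_⟩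
    · rw [(px_good h01 h02 h12).facet_card]
      simp
    · rw [poly_vertices h01 h02 h12]
      simp
  · refine pack _ (cx_good h01 h02 h12) ox_good (cone_image h01 h02 h12 σ)
      (cone_h1 h01 h02 h12 σ) (cone_h2 h01 h02 h12 σ) (cone_h3 h01 h02 h12 σ)
      (fun v _ hv => by simpa using ox_simple v hv)
      (fun P => (∀ x ∈ P, ∀ t : ℝ, 0 ≤ t → t • x ∈ P) ∧ {F | IsFacet P F}.ncard = n + 1 ∧
        {F | IsEdge P F}.ncard = n + 1) ⟨cone_scale h01 h02 h12, ?_, ?_⟩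
    · rw [(cx_good h01 h02 h12).facet_card]
      simp
    · rw [cone_edges h01 h02 h12]
      simp
end
end

section
/- For every n ≥ 5 there exist k ∈ ℕ, κ = (κ₁,…,κ_k) ∈ ℕᵏ with κ₁ + … + κ_k = n, and points x⁽¹⁾,…,x⁽ⁿ⁾ ∈ ℝ^{n−2} such that, for some irredundant description of the fixed-shape partition polytope P(X,k,κ), one has C(P(X,k,κ)) ⊄ π_X(C(T(n,k,κ))), where C(T(n,k,κ)) denotes the circuits of the transportation description of T(n,k,κ). -/
open Matrix

noncomputable section

/-- Equality matrix of the transportation description of `T(n,k,κ)`: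
row `i : Fin k` encodes `Σⱼ y i j = κ i`, row `j : Fin n` encodes `Σᵢ y i j = 1`. -/
def transA (n k : ℕ) : Matrix (Fin k ⊕ Fin n) (Fin k × Fin n) ℝ :=
  Matrix.of (Sum.elim
    (fun i yc => if yc.1 = i then 1 else 0)
    (fun j yc => if yc.2 = j then 1 else 0))

/-- Right-hand side of the equality part of the transportation description. -/
def transb (n k : ℕ) (κ : Fin k → ℕ) : (Fin k ⊕ Fin n) → ℝ :=
  Sum.elim (fun i => (κ i : ℝ)) (fun _ => 1)

/-- The transportation polytope `T(n,k,κ)`, with inequality part `-y ≤ 0`. -/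
def transportationPolytope (n k : ℕ) (κ : Fin k → ℕ) : Set (Fin k × Fin n → ℝ) :=
  polySet (transA n k) (transb n k κ) (-1 : Matrix (Fin k × Fin n) (Fin k × Fin n) ℝ) 0

/-- The circuits of the transportation description of `T(n,k,κ)`. -/
def transportationCircuits (n k : ℕ) : Set (Fin k × Fin n → ℝ) :=
  circuits (transA n k) (-1 : Matrix (Fin k × Fin n) (Fin k × Fin n) ℝ)

/-- The projection `π_X : ℝ^{k×n} → (ℝ^d)^k`, `y ↦ (c⁽¹⁾,…,c⁽ᵏ⁾)` with
`c⁽ⁱ⁾ = Σⱼ y i j • x⁽ʲ⁾`, written as a matrix. -/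
def projXMat {n d : ℕ} (k : ℕ) (X : Fin n → Fin d → ℝ) :
    Matrix (Fin k × Fin d) (Fin k × Fin n) ℝ :=
  Matrix.of fun c yc => if yc.1 = c.1 then X yc.2 c.2 else 0

/-- The fixed-shape partition polytope `P(X,k,κ) = π_X(T(n,k,κ))`. -/
def partitionPolytope {n d : ℕ} (k : ℕ) (κ : Fin k → ℕ) (X : Fin n → Fin d → ℝ) :
    Set (Fin k × Fin d → ℝ) :=
  (fun y => (projXMat k X).mulVec y) '' transportationPolytope n k κ

def eV (m : ℕ) (w : Fin 3 → ℝ) (l : Fin (m + 3)) : ℝ :=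
  if (l : ℕ) = 0 then w 0 else if (l : ℕ) = 1 then w 1 else if (l : ℕ) = 2 then w 2 else 0

def XV (m : ℕ) (j : Fin (m + 5)) : Fin (m + 3) → ℝ :=
  if (j : ℕ) = 0 then eV m ![3, 0, 0] else if (j : ℕ) = 1 then eV m ![2, 2, 0]
  else if (j : ℕ) = 2 then eV m ![0, 3, 0] else if (j : ℕ) = 3 then eV m ![0, 0, 1] else 0

def LV (m : ℕ) : (Fin 3 → ℝ) →ₗ[ℝ] (Fin 2 × Fin (m + 3) → ℝ) where
  toFun w c := if c.1 = 0 then eV m w c.2 else - eV m w c.2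
  map_add' u v := by
    funext c; simp only [eV, Pi.add_apply]; split_ifs <;> ring
  map_smul' u v := by
    funext c; simp only [eV, Pi.smul_apply, smul_eq_mul, RingHom.id_apply]; split_ifs <;> ring

def sV (m : ℕ) : Fin 2 × Fin (m + 3) → ℝ := fun c => if c.1 = 0 then 0 else eV m ![5, 5, 1] c.2

def phiV (m : ℕ) : (Fin 3 → ℝ) →ᵃ[ℝ] (Fin 2 × Fin (m + 3) → ℝ) :=
  (LV m).toAffineMap + AffineMap.const ℝ _ (sV m)

def NV : Matrix (Fin 5) (Fin 3) ℝ :=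
  !![-1, 0, 0; 0, -1, 0; 0, 0, -1; 2, 1, 6; 1, 2, 6]

def DV : Fin 5 → ℝ := ![0, 0, 0, 6, 6]

def QV : Set (Fin 3 → ℝ) := {w | NV.mulVec w ≤ DV}

def AV (m : ℕ) : Matrix (Fin ((m + 3) + (m + 3))) (Fin 2 × Fin (m + 3)) ℝ :=
  fun r c => Fin.addCases (fun l => if c.2 = l then 1 else 0)
    (fun l => if 3 ≤ (l : ℕ) ∧ c = (0, l) then 1 else 0) r

def bV (m : ℕ) : Fin ((m + 3) + (m + 3)) → ℝ :=
  Fin.addCases (eV m ![5, 5, 1]) (fun _ => 0)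

def BV (m : ℕ) : Matrix (Fin 5) (Fin 2 × Fin (m + 3)) ℝ :=
  fun i c => if c.1 = 0 then eV m (NV i) c.2 else 0

def KV (m : ℕ) : Fin 2 → ℕ := ![1, m + 4]

lemma phiV_apply (m : ℕ) (w : Fin 3 → ℝ) : phiV m w = LV m w + sV m := rfl

lemma sum3 (m : ℕ) (f : Fin (m + 3) → ℝ) :
    ∑ l, f l = f 0 + f 1 + f 2 + ∑ i : Fin m, f i.succ.succ.succ := by
  rw [Fin.sum_univ_succ, Fin.sum_univ_succ, Fin.sum_univ_succ, ← add_assoc, ← add_assoc]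
  rfl

lemma sum5 (m : ℕ) (f : Fin (m + 5) → ℝ) :
    ∑ l, f l = f 0 + f 1 + f 2 + f 3 + f 4 + ∑ i : Fin m, f i.succ.succ.succ.succ.succ := by
  rw [Fin.sum_univ_succ, Fin.sum_univ_succ, Fin.sum_univ_succ, Fin.sum_univ_succ,
    Fin.sum_univ_succ, ← add_assoc, ← add_assoc, ← add_assoc, ← add_assoc]
  rfl

lemma v2 (m : ℕ) : 2 % (m + 3) = 2 := Nat.mod_eq_of_lt (by omega)
lemma w2 (m : ℕ) : 2 % (m + 5) = 2 := Nat.mod_eq_of_lt (by omega)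
lemma w3 (m : ℕ) : 3 % (m + 5) = 3 := Nat.mod_eq_of_lt (by omega)
lemma w4 (m : ℕ) : 4 % (m + 5) = 4 := Nat.mod_eq_of_lt (by omega)

lemma eV_sum (m : ℕ) (u : Fin 3 → ℝ) (z : Fin (m + 3) → ℝ) :
    ∑ l, eV m u l * z l = u 0 * z 0 + u 1 * z 1 + u 2 * z 2 := by
  rw [sum3]
  simp [eV, v2]

lemma LV_mem {m : ℕ} {c : Fin 2 × Fin (m + 3) → ℝ} (h0 : ∀ l, c (0, l) + c (1, l) = 0)
    (h1 : ∀ l : Fin (m + 3), 3 ≤ (l : ℕ) → c (0, l) = 0) :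
    c = LV m ![c (0, 0), c (0, 1), c (0, 2)] := by
  have key : ∀ l, c (0, l) = eV m ![c (0, 0), c (0, 1), c (0, 2)] l := by
    intro l
    simp only [eV]
    split_ifs with a b d
    · have : l = 0 := Fin.ext (by simpa using a)
      simp [this]
    · have : l = 1 := Fin.ext (by simpa using b)
      simp [this]
    · have : l = 2 := Fin.ext (by rw [d]; rfl)
      simp [this]
    · exact h1 l (by omega)
  funext ⟨a, l⟩
  fin_cases a
  · simpa [LV] using key l
  · have := h0 l
    have := key l
    simp [LV]
    linarith

lemma AV_zero (m : ℕ) (c : Fin 2 × Fin (m + 3) → ℝ) (l : Fin (m + 3)) :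
    (AV m).mulVec c (Fin.castAdd _ l) = c (0, l) + c (1, l) := by
  simp [AV, Matrix.mulVec, dotProduct, Fintype.sum_prod_type, Fin.sum_univ_two]

lemma AV_one (m : ℕ) (c : Fin 2 × Fin (m + 3) → ℝ) (l : Fin (m + 3)) :
    (AV m).mulVec c (Fin.natAdd _ l) = if 3 ≤ (l : ℕ) then c (0, l) else 0 := by
  by_cases h : 3 ≤ (l : ℕ) <;>
  simp [AV, Matrix.mulVec, dotProduct, h, -Fin.natAdd_eq_addNat]

lemma AV_iff (m : ℕ) (c : Fin 2 × Fin (m + 3) → ℝ) :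
    (AV m).mulVec c = 0 ↔ ∃ w, c = LV m w := by
  constructor
  · intro h
    refine ⟨_, LV_mem (fun l => ?_) (fun l hl => ?_)⟩
    · rw [← AV_zero, h]; rfl
    · have := AV_one m c l
      rw [h, if_pos hl] at this
      exact this.symm
  · rintro ⟨w, rfl⟩
    funext r
    refine Fin.addCases (fun l => ?_) (fun l => ?_) r
    · rw [AV_zero]; simp [LV]
    · rw [AV_one]; split_ifs with h
      · change (if (0 : Fin 2) = 0 then eV m w l else - eV m w l) = 0
        rw [if_pos rfl]
        have a0 : (l : ℕ) ≠ 0 := by omega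
        have a1 : (l : ℕ) ≠ 1 := by omega
        have a2 : (l : ℕ) ≠ 2 := by omega
        simp only [eV, a0, a1, a2, if_false]
      · rfl

lemma AV_s (m : ℕ) : (AV m).mulVec (sV m) = bV m := by
  funext r
  refine Fin.addCases (fun l => ?_) (fun l => ?_) r
  · rw [AV_zero]; simp [sV, bV]
  · rw [AV_one]; simp [sV, bV, -Fin.natAdd_eq_addNat]

lemma AV_iff' (m : ℕ) (c : Fin 2 × Fin (m + 3) → ℝ) :
    (AV m).mulVec c = bV m ↔ ∃ w, c = phiV m w := by
  rw [← AV_s, ← sub_eq_zero, ← Matrix.mulVec_sub, AV_iff]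
  simp only [phiV_apply, sub_eq_iff_eq_add]

lemma BV_eq (m : ℕ) (c : Fin 2 × Fin (m + 3) → ℝ) (i : Fin 5) :
    (BV m).mulVec c i = NV i 0 * c (0, 0) + NV i 1 * c (0, 1) + NV i 2 * c (0, 2) := by
  rw [← eV_sum m (NV i) (fun l => c (0, l))]
  simp [BV, Matrix.mulVec, dotProduct, Fintype.sum_prod_type, Fin.sum_univ_two]

lemma LV_0 (m : ℕ) (w : Fin 3 → ℝ) : LV m w (0, 0) = w 0 := by simp [LV, eV]
lemma LV_1 (m : ℕ) (w : Fin 3 → ℝ) : LV m w (0, 1) = w 1 := by simp [LV, eV]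
lemma LV_2 (m : ℕ) (w : Fin 3 → ℝ) : LV m w (0, 2) = w 2 := by
  simp [LV, eV, v2, -Fin.val_eq_zero_iff]

lemma BV_L (m : ℕ) (w : Fin 3 → ℝ) : (BV m).mulVec (LV m w) = NV.mulVec w := by
  funext i
  rw [BV_eq, LV_0, LV_1, LV_2]
  simp [Matrix.mulVec, dotProduct, Fin.sum_univ_three]

lemma BV_phi (m : ℕ) (w : Fin 3 → ℝ) : (BV m).mulVec (phiV m w) = NV.mulVec w := by
  rw [phiV_apply, Matrix.mulVec_add, BV_L]
  have : (BV m).mulVec (sV m) = 0 := by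
    funext i; rw [BV_eq]; simp [sV]
  simp [this]

lemma LV_inj (m : ℕ) : Function.Injective (LV m) := by
  intro u v h
  funext i
  fin_cases i
  · simpa [LV_0] using congrFun h (0, 0)
  · simpa [LV_1] using congrFun h (0, 1)
  · simpa [LV_2] using congrFun h (0, 2)

lemma poly_eq (m : ℕ) : polySet (AV m) (bV m) (BV m) DV = phiV m '' QV := by
  ext c
  simp only [polySet, Set.mem_ofPred_eq, AV_iff', Set.mem_image, QV]
  constructor
  · rintro ⟨⟨w, rfl⟩, h⟩
    exact ⟨w, by rwa [BV_phi] at h, rfl⟩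
  · rintro ⟨w, h, rfl⟩
    exact ⟨⟨w, rfl⟩, by rwa [BV_phi]⟩

lemma mem_Q (w : Fin 3 → ℝ) : w ∈ QV ↔ 0 ≤ w 0 ∧ 0 ≤ w 1 ∧ 0 ≤ w 2 ∧
    2 * w 0 + w 1 + 6 * w 2 ≤ 6 ∧ w 0 + 2 * w 1 + 6 * w 2 ≤ 6 := by
  simp [QV, Pi.le_def, Fin.forall_fin_succ, NV, DV, Matrix.mulVec, dotProduct, Fin.sum_univ_three]

lemma spanDim_image (m : ℕ) (S : Set (Fin 3 → ℝ)) : spanDim (phiV m '' S) = spanDim S := by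
  unfold spanDim
  rw [← AffineSubspace.map_span, AffineSubspace.map_direction]
  have : (phiV m).linear = LV m := by simp [phiV]
  rw [this]
  exact (Submodule.equivMapOfInjective (LV m) (LV_inj m) _).finrank_eq.symm

lemma spanDim_two (S : Set (Fin 3 → ℝ)) (f : Fin 3 → ℝ) (s : ℝ) (hf : f ≠ 0)
    (hS : ∀ w ∈ S, f ⬝ᵥ w = s) (p u v : Fin 3 → ℝ) (hp : p ∈ S) (hu : u ∈ S) (hv : v ∈ S)
    (hl : LinearIndependent ℝ ![u - p, v - p]) : spanDim S = 2 := by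
  unfold spanDim
  rw [direction_affineSpan]
  apply le_antisymm
  · have h1 : vectorSpan ℝ S ≤ (dotProductBilin ℝ ℝ f).ker := by
      rw [vectorSpan_def, Submodule.span_le]
      rintro _ ⟨a, ha, b, hb, rfl⟩
      simp [hS a ha, hS b hb, dotProduct_sub]
    refine (Submodule.finrank_mono h1).trans ?_
    have h2 : (dotProductBilin ℝ ℝ f).ker ≠ ⊤ := by
      intro h
      apply hf
      have : f ∈ (dotProductBilin ℝ ℝ f).ker := by rw [h]; trivial
      simpa using this
    have := Submodule.finrank_lt h2
    simp at this
    omega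
  · have h1 : Submodule.span ℝ (Set.range ![u - p, v - p]) ≤ vectorSpan ℝ S := by
      rw [Submodule.span_le]
      rintro _ ⟨i, rfl⟩
      fin_cases i
      · exact vsub_mem_vectorSpan ℝ hu hp
      · exact vsub_mem_vectorSpan ℝ hv hp
    have := Submodule.finrank_mono h1
    rw [finrank_span_eq_card hl] at this
    simpa using this

lemma span_Q : affineSpan ℝ QV = ⊤ := by
  have h0 : (0 : Fin 3 → ℝ) ∈ QV := by simp [mem_Q]
  rw [← AffineSubspace.direction_eq_top_iff_of_nonempty ⟨0, mem_affineSpan ℝ h0⟩,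
    direction_affineSpan, eq_top_iff]
  intro w _
  have h : ∀ v ∈ QV, v ∈ vectorSpan ℝ QV := by
    intro v hv
    simpa using vsub_mem_vectorSpan ℝ hv h0
  have e : w = w 0 • ![1, 0, 0] + w 1 • ![0, 1, 0] + w 2 • ![0, 0, 1] := by
    funext i; fin_cases i <;> simp
  rw [e]
  refine Submodule.add_mem _ (Submodule.add_mem _ ?_ ?_) ?_ <;>
  · apply Submodule.smul_mem
    apply h
    rw [mem_Q]
    simp
    try norm_num

lemma spanDim_Q : spanDim QV = 3 := by
  unfold spanDim
  rw [span_Q, AffineSubspace.direction_top, finrank_top, Module.finrank_fin_fun]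

lemma facetAux (i : Fin 5) (p u v : Fin 3 → ℝ) (hp : p ∈ QV) (hu : u ∈ QV) (hv : v ∈ QV)
    (hp' : NV.mulVec p i = DV i) (hu' : NV.mulVec u i = DV i) (hv' : NV.mulVec v i = DV i)
    (hf : NV i ≠ 0) (hl : ∀ s t : ℝ, s • (u - p) + t • (v - p) = 0 → s = 0 ∧ t = 0) :
    spanDim {w ∈ QV | NV.mulVec w i = DV i} = 2 ∧ ∃ w ∈ QV, NV.mulVec w i = DV i :=
  ⟨spanDim_two _ (NV i) (DV i) hf (fun w hw => hw.2) p u v ⟨hp, hp'⟩ ⟨hu, hu'⟩ ⟨hv, hv'⟩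
    (LinearIndependent.pair_iff.2 hl), p, hp, hp'⟩

lemma facetQ (i : Fin 5) : spanDim {w ∈ QV | NV.mulVec w i = DV i} = 2 ∧
    ∃ w ∈ QV, NV.mulVec w i = DV i := by
  have hl : ∀ s t : ℝ, ∀ x : Fin 3 → ℝ, x = 0 → x 0 = 0 ∧ x 1 = 0 ∧ x 2 = 0 := by
    rintro s t x rfl; simp
  have nz : NV i ≠ 0 := by
    intro h
    have h0 := congrFun h 0
    have h1 := congrFun h 1
    have h2 := congrFun h 2
    fin_cases i <;> simp [NV] at h0 h1 h2
  fin_cases i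
  · refine facetAux _ ![0, 0, 0] ![0, 1, 0] ![0, 0, 1] ?_ ?_ ?_ ?_ ?_ ?_ nz ?_
    pick_goal 7
    · intro s t h; have := hl s t _ h; simp at this; constructor <;> linarith
    all_goals simp [mem_Q, NV, DV, Matrix.mulVec, dotProduct, Fin.sum_univ_three]; try norm_num
  · refine facetAux _ ![0, 0, 0] ![1, 0, 0] ![0, 0, 1] ?_ ?_ ?_ ?_ ?_ ?_ nz ?_
    pick_goal 7
    · intro s t h; have := hl s t _ h; simp at this; constructor <;> linarith
    all_goals simp [mem_Q, NV, DV, Matrix.mulVec, dotProduct, Fin.sum_univ_three]; try norm_num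
  · refine facetAux _ ![0, 0, 0] ![1, 0, 0] ![0, 1, 0] ?_ ?_ ?_ ?_ ?_ ?_ nz ?_
    pick_goal 7
    · intro s t h; have := hl s t _ h; simp at this; constructor <;> linarith
    all_goals simp [mem_Q, NV, DV, Matrix.mulVec, dotProduct, Fin.sum_univ_three]; try norm_num
  · refine facetAux _ ![0, 0, 1] ![3, 0, 0] ![2, 2, 0] ?_ ?_ ?_ ?_ ?_ ?_ nz ?_
    pick_goal 7
    · intro s t h; have := hl s t _ h; simp at this; constructor <;> linarith
    all_goals simp [mem_Q, NV, DV, Matrix.mulVec, dotProduct, Fin.sum_univ_three]; try norm_num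
  · refine facetAux _ ![0, 0, 1] ![0, 3, 0] ![2, 2, 0] ?_ ?_ ?_ ?_ ?_ ?_ nz ?_
    pick_goal 7
    · intro s t h; have := hl s t _ h; simp at this; constructor <;> linarith
    all_goals simp [mem_Q, NV, DV, Matrix.mulVec, dotProduct, Fin.sum_univ_three]; try norm_num

lemma irr (m : ℕ) : Irredundant (AV m) (bV m) (BV m) DV (phiV m '' QV) := by
  refine ⟨(poly_eq m).symm, ?_, fun i => ?_⟩
  · rw [← AffineSubspace.map_span, span_Q]
    ext c
    simp only [Set.mem_ofPred_eq, AV_iff']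
    simp [eq_comm]
  · have e : {x ∈ phiV m '' QV | (BV m).mulVec x i = DV i} =
        phiV m '' {w ∈ QV | NV.mulVec w i = DV i} := by
      ext c
      constructor
      · rintro ⟨⟨w, hw, rfl⟩, h⟩
        rw [BV_phi] at h
        exact ⟨w, ⟨hw, h⟩, rfl⟩
      · rintro ⟨w, ⟨hw, h⟩, rfl⟩
        refine ⟨⟨w, hw, rfl⟩, ?_⟩
        rwa [BV_phi]
    obtain ⟨h1, w, hw, hw'⟩ := facetQ i
    refine ⟨Or.inr ⟨BV m i, DV i, ?_, ⟨phiV m w, ⟨w, hw, rfl⟩, ?_⟩, rfl⟩, ?_⟩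
    · rintro _ ⟨v, hv, rfl⟩
      change (BV m).mulVec _ i ≤ _
      rw [BV_phi]
      exact hv i
    · change (BV m).mulVec _ i = _
      rw [BV_phi]
      exact hw'
    · rw [e, spanDim_image, spanDim_image, h1, spanDim_Q]

lemma tA_inl (n k : ℕ) (y : Fin k × Fin n → ℝ) (i : Fin k) :
    (transA n k).mulVec y (Sum.inl i) = ∑ j, y (i, j) := by
  simp [transA, Matrix.mulVec, dotProduct, Fintype.sum_prod_type]
  rw [Finset.sum_comm]
  simp

lemma tA_inr (n k : ℕ) (y : Fin k × Fin n → ℝ) (j : Fin n) :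
    (transA n k).mulVec y (Sum.inr j) = ∑ i, y (i, j) := by
  simp [transA, Matrix.mulVec, dotProduct, Fintype.sum_prod_type]

lemma proj_apply (m : ℕ) (y : Fin 2 × Fin (m + 5) → ℝ) (a : Fin 2) (l : Fin (m + 3)) :
    (projXMat 2 (XV m)).mulVec y (a, l) =
      eV m ![3 * y (a, 0) + 2 * y (a, 1), 2 * y (a, 1) + 3 * y (a, 2), y (a, 3)] l := by
  have : (projXMat 2 (XV m)).mulVec y (a, l) = ∑ j, XV m j l * y (a, j) := by
    simp [projXMat, Matrix.mulVec, dotProduct, Fintype.sum_prod_type]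
  rw [this]
  rw [sum5]
  simp [XV, w2, w3, w4]
  simp only [eV]
  split_ifs <;> simp <;> ring

lemma proj_phi (m : ℕ) (y : Fin 2 × Fin (m + 5) → ℝ) (h : ∀ j, y (0, j) + y (1, j) = 1) :
    (projXMat 2 (XV m)).mulVec y =
      phiV m ![3 * y (0, 0) + 2 * y (0, 1), 2 * y (0, 1) + 3 * y (0, 2), y (0, 3)] := by
  funext ⟨a, l⟩
  rw [proj_apply, phiV_apply]
  have h0 := h 0
  have h1 := h 1
  have h2 := h 2
  have h3 := h 3
  fin_cases a
  · simp [LV, sV]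
  · simp only [Pi.add_apply, LV, sV, eV]
    simp
    split_ifs <;> linarith

lemma decomp (w : Fin 3 → ℝ) (hw : w ∈ QV) : ∃ a b c d e : ℝ, 0 ≤ a ∧ 0 ≤ b ∧ 0 ≤ c ∧ 0 ≤ d ∧
    0 ≤ e ∧ a + b + c + d + e = 1 ∧ w = ![3 * a + 2 * b, 2 * b + 3 * c, d] := by
  obtain ⟨h0, h1, h2, h3, h4⟩ := (mem_Q w).1 hw
  rcases le_total (w 1) (w 0) with h | h
  · refine ⟨(w 0 - w 1) / 3, w 1 / 2, 0, w 2, 1 - (w 0 - w 1) / 3 - w 1 / 2 - w 2,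
      by linarith, by linarith, le_rfl, h2, by linarith, by ring, ?_⟩
    funext i
    fin_cases i <;> simp <;> ring
  · refine ⟨0, w 0 / 2, (w 1 - w 0) / 3, w 2, 1 - (w 1 - w 0) / 3 - w 0 / 2 - w 2,
      le_rfl, by linarith, by linarith, h2, by linarith, by ring, ?_⟩
    funext i
    fin_cases i <;> simp <;> ring

lemma mem_T (m : ℕ) (y : Fin 2 × Fin (m + 5) → ℝ) :
    y ∈ transportationPolytope (m + 5) 2 (KV m) ↔
      (∑ j, y (0, j) = 1 ∧ ∑ j, y (1, j) = m + 4) ∧ (∀ j, y (0, j) + y (1, j) = 1) ∧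
      ∀ c, 0 ≤ y c := by
  have : ∀ c, (-1 : Matrix (Fin 2 × Fin (m + 5)) (Fin 2 × Fin (m + 5)) ℝ).mulVec y c = - y c := by
    intro c; simp [Matrix.neg_mulVec]
  simp only [transportationPolytope, polySet, Set.mem_ofPred_eq, funext_iff, Pi.le_def, this,
    Sum.forall, tA_inl, tA_inr, Fin.forall_fin_two, Fin.sum_univ_two]
  simp [transb, KV, and_assoc]

lemma part_eq (m : ℕ) : partitionPolytope 2 (KV m) (XV m) = phiV m '' QV := by
  ext c
  constructor
  · rintro ⟨y, hy, rfl⟩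
    obtain ⟨⟨hs, -⟩, h1, hp⟩ := (mem_T m y).1 hy
    refine ⟨_, ?_, (proj_phi m y h1).symm⟩
    rw [sum5] at hs
    have hr : 0 ≤ ∑ i : Fin m, y (0, i.succ.succ.succ.succ.succ) :=
      Finset.sum_nonneg fun i _ => hp _
    have p0 := hp (0, 0)
    have p1 := hp (0, 1)
    have p2 := hp (0, 2)
    have p3 := hp (0, 3)
    have p4 := hp (0, 4)
    rw [mem_Q]
    simp
    refine ⟨?_, ?_, ?_, ?_, ?_⟩ <;> linarith
  · rintro ⟨w, hw, rfl⟩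
    obtain ⟨a, b, c, d, e, ha, hb, hc, hd, he, hs, rfl⟩ := decomp w hw
    let z : Fin (m + 5) → ℝ := fun j => if (j : ℕ) = 0 then a else if (j : ℕ) = 1 then b else
      if (j : ℕ) = 2 then c else if (j : ℕ) = 3 then d else if (j : ℕ) = 4 then e else 0
    let y : Fin 2 × Fin (m + 5) → ℝ := fun q => if q.1 = 0 then z q.2 else 1 - z q.2
    have y0 : ∀ j, y (0, j) = z j := fun j => by simp [y]
    have y1 : ∀ j, y (1, j) = 1 - z j := fun j => by simp [y]
    have hz : ∑ j, z j = 1 := by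
      rw [sum5]
      simp [z, w2, w3, w4]
      exact hs
    have h1 : ∀ j, y (0, j) + y (1, j) = 1 := fun j => by rw [y0, y1]; ring
    refine ⟨y, (mem_T m y).2 ⟨⟨?_, ?_⟩, h1, ?_⟩, ?_⟩
    · simp only [y0, hz]
    · simp only [y1, Finset.sum_sub_distrib, hz]
      simp
      ring
    · rintro ⟨i, j⟩
      fin_cases i
      · change 0 ≤ y (0, j)
        rw [y0]
        simp only [z]
        split_ifs <;> linarith
      · change 0 ≤ y (1, j)
        rw [y1]
        simp only [z]
        split_ifs <;> linarith
    · change (projXMat 2 (XV m)).mulVec y = _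
      rw [proj_phi m y h1]
      simp only [y0]
      simp [z, w2, w3, -Fin.val_eq_zero_iff]

lemma circ_two (m : ℕ) (y : Fin 2 × Fin (m + 5) → ℝ)
    (hy : y ∈ transportationCircuits (m + 5) 2) (i j : Fin (m + 5)) (hij : i ≠ j)
    (hi : y (0, i) ≠ 0) (hj : y (0, j) ≠ 0) (l : Fin (m + 5)) (hli : l ≠ i) (hlj : l ≠ j) :
    y (0, l) = 0 := by
  obtain ⟨hA, -, hm⟩ := hy
  have hcol : ∀ j, y (0, j) + y (1, j) = 0 := by
    intro j
    have := congrFun hA (Sum.inr j)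
    rwa [tA_inr, Fin.sum_univ_two] at this
  let z : Fin (m + 5) → ℝ := fun l => (if l = i then 1 else 0) - (if l = j then 1 else 0)
  let t : Fin 2 × Fin (m + 5) → ℝ := fun q => if q.1 = 0 then z q.2 else - z q.2
  have t0 : ∀ l, t (0, l) = z l := fun l => by simp [t]
  have t1 : ∀ l, t (1, l) = - z l := fun l => by simp [t]
  have hz : ∑ l, z l = 0 := by simp [z]
  have h1 : (transA (m + 5) 2).mulVec t = 0 := by
    funext r
    rcases r with r | r
    · rw [tA_inl]
      fin_cases r
      · change ∑ l, t (0, l) = 0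
        simp only [t0, hz]
      · change ∑ l, t (1, l) = 0
        simp only [t1, Finset.sum_neg_distrib, hz, neg_zero]
    · rw [tA_inr, Fin.sum_univ_two, t0, t1]
      simp
  have h2 : t ≠ 0 := by
    intro h
    have := congrFun h (0, i)
    rw [t0] at this
    simp [z, hij] at this
  have hneg : ∀ (x : Fin 2 × Fin (m + 5) → ℝ) c,
      (-1 : Matrix (Fin 2 × Fin (m + 5)) (Fin 2 × Fin (m + 5)) ℝ).mulVec x c = - x c := by
    intro x c; simp [Matrix.neg_mulVec]
  have h3 := hm t h1 h2
  simp only [hneg, neg_ne_zero] at h3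
  have hzy : ∀ l, z l ≠ 0 → y (0, l) ≠ 0 := by
    intro l hl
    by_cases a : l = i
    · rwa [a]
    · by_cases b : l = j
      · rwa [b]
      · simp [z, a, b] at hl
  have h4 := h3 (by
    rintro ⟨a, l⟩ h
    fin_cases a
    · change y (0, l) ≠ 0
      apply hzy
      rw [← t0]
      exact h
    · change y (1, l) ≠ 0
      have h5 : z l ≠ 0 := by
        intro h6
        apply h
        change t (1, l) = 0
        rw [t1, h6, neg_zero]
      have h7 := hzy l h5
      intro h8
      apply h7
      have := hcol l
      linarith)
  by_contra hl
  have h9 := @h4 (0, l) hl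
  apply h9
  rw [t0]
  simp [z, hli, hlj]

lemma proj_not (m : ℕ) (y : Fin 2 × Fin (m + 5) → ℝ) (hy : y ∈ transportationCircuits (m + 5) 2)
    (h : (projXMat 2 (XV m)).mulVec y = LV m ![0, 6, -1]) : False := by
  have e0 := congrFun h (0, 0)
  have e1 := congrFun h (0, 1)
  have e2 := congrFun h (0, 2)
  rw [proj_apply, LV_0] at e0
  rw [proj_apply, LV_1] at e1
  rw [proj_apply, LV_2] at e2
  simp [eV, v2] at e0 e1 e2
  have hs : ∑ j, y (0, j) = 0 := by
    have := congrFun hy.1 (Sum.inl 0)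
    rwa [tA_inl] at this
  have n01 : (0 : Fin (m + 5)) ≠ 1 := by simp [Fin.ext_iff]
  have n30 : (3 : Fin (m + 5)) ≠ 0 := by simp [Fin.ext_iff, w3]
  have n31 : (3 : Fin (m + 5)) ≠ 1 := by simp [Fin.ext_iff, w3]
  have n23 : (2 : Fin (m + 5)) ≠ 3 := by simp [Fin.ext_iff, w2, w3]
  have y3 : y (0, 3) ≠ 0 := by rw [e2]; norm_num
  by_cases h1 : y (0, 1) = 0
  · have y2 : y (0, 2) = 2 := by linarith
    have key := circ_two m y hy 2 3 n23 (by rw [y2]; norm_num) y3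
    have hrest : ∑ j, y (0, j) = y (0, 2) + y (0, 3) :=
      Fintype.sum_eq_add 2 3 n23 (fun x hx => key x hx.1 hx.2)
    rw [hs, y2, e2] at hrest
    norm_num at hrest
  · have y0 : y (0, 0) ≠ 0 := by
      intro h0
      apply h1
      linarith
    exact y3 (circ_two m y hy 0 1 n01 y0 h1 3 n30 n31)

lemma circ_s13 (m : ℕ) : LV m ![0, 6, -1] ∈ circuits (AV m) (BV m) := by
  refine ⟨(AV_iff m _).2 ⟨_, rfl⟩, ?_, ?_⟩
  · intro h
    have := congrFun h (0, 1)
    rw [LV_1] at this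
    simp at this
  · intro y hy hy0 hs
    obtain ⟨w, rfl⟩ := (AV_iff m _).1 hy
    rw [BV_L, BV_L] at hs
    rw [BV_L, BV_L]
    have h0 := @hs 0
    have h3 := @hs 3
    simp [NV, Matrix.mulVec, dotProduct, Fin.sum_univ_three] at h0 h3
    have hw : w 2 ≠ 0 := by
      intro h2
      apply hy0
      have : w = 0 := by
        funext i
        fin_cases i
        · simpa using h0
        · simp; rw [h0, h2] at h3; linarith
        · simpa using h2
      rw [this, map_zero]
    have h1 : w 1 = -6 * w 2 := by linarith
    intro i
    fin_cases i <;> simp [NV, Matrix.mulVec, dotProduct, Fin.sum_univ_three, h0, h1, hw]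
    intro _ h
    apply hw
    linarith

/-- For every `n ≥ 5` there are `k`, cluster sizes `κ` summing to `n`, and points
`X ⊂ ℝ^{n-2}` such that for some irredundant description of the fixed-shape partition polytope
`P(X,k,κ) = π_X(T(n,k,κ))`, `C(P(X,k,κ)) ⊄ π_X(C(T(n,k,κ)))`. -/
theorem stmt_13 (n : ℕ) (hn : 5 ≤ n) :
    ∃ (k : ℕ) (κ : Fin k → ℕ), (∑ i, κ i) = n ∧
      ∃ (X : Fin n → Fin (n - 2) → ℝ) (p q : ℕ)
        (AP : Matrix (Fin p) (Fin k × Fin (n - 2)) ℝ) (bP : Fin p → ℝ)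
        (BP : Matrix (Fin q) (Fin k × Fin (n - 2)) ℝ) (dP : Fin q → ℝ),
        Irredundant AP bP BP dP (partitionPolytope k κ X) ∧
        ¬ (circuits AP BP ⊆
            (fun y => (projXMat k X).mulVec y) '' transportationCircuits n k) := by
  obtain ⟨m, rfl⟩ : ∃ m, n = m + 5 := ⟨n - 5, by omega⟩
  refine ⟨2, KV m, ?_, XV m, _, 5, AV m, bV m, BV m, DV, ?_, fun h => ?_⟩
  · simp [KV, Fin.sum_univ_two]; omega
  · rw [part_eq]; exact irr m
  · obtain ⟨y, hy, h⟩ := h (circ_s13 m)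
    exact proj_not m y hy h
end
end
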